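/- arXiv:1604.00941 — 4 statements merged into one kernel-verified Lean document; each statement's English description precedes it below -/
import Mathlib

section
/- Define V₂₁(τ) := i·e^{−πiτ/16}·μ(τ/4, τ/2; τ) and E₂(z) := η(16z)⁹/(η(8z)³·η(32z)³). Then for every τ ∈ ℍ: V₂₁(τ) − ζ₈^{−1}·(τ+1)^{−1/2}·V₂₁(τ/(τ+1)) = −(i/8)·∫_{1}^{i∞} E₂(u/32)/√(−i(u+τ)) du, where ζ₈ := e^{2πi/8} and the integral is taken along the vertical path u = 1 + it, t ∈ (0, ∞), i.e., it equals −(i/8)·i·∫₀^∞ E₂((1+it)/32)/√(−i(1+it+τ)) dt. (This is the transformation of Theorem 1.2(ii) for (m,n) = (2,1) on ℍ, where c₂ = 8 and E₂(2u/c₂²) = E₂(u/32).) -/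
open Complex

/-- The Dedekind eta function `η(τ) = e^{πiτ/12} ∏_{n≥1} (1 - e^{2πinτ})`. -/
noncomputable def dedekindEta (τ : ℂ) : ℂ :=
  Complex.exp ((Real.pi : ℂ) * I * τ / 12) *
    ∏' n : ℕ, (1 - Complex.exp (2 * (Real.pi : ℂ) * I * ((n : ℂ) + 1) * τ))

/-- Zwegers' Jacobi theta function. -/
noncomputable def jacobiThetaZw (v τ : ℂ) : ℂ :=
  ∑' n : ℤ, Complex.exp (2 * (Real.pi : ℂ) * I * ((n : ℂ) + 1/2) * (v + 1/2)) *
    Complex.exp ((Real.pi : ℂ) * I * τ * ((n : ℂ) + 1/2) ^ 2)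

/-- Zwegers' μ-function. -/
noncomputable def muZw (u v τ : ℂ) : ℂ :=
  Complex.exp ((Real.pi : ℂ) * I * u) / jacobiThetaZw v τ *
    ∑' n : ℤ, (-1 : ℂ) ^ n * Complex.exp (2 * (Real.pi : ℂ) * I * (n : ℂ) * v) *
      Complex.exp ((Real.pi : ℂ) * I * τ * (n : ℂ) * ((n : ℂ) + 1)) /
      (1 - Complex.exp (2 * (Real.pi : ℂ) * I * u) * Complex.exp (2 * (Real.pi : ℂ) * I * (n : ℂ) * τ))

/-- `V₂₁(τ) = i e^{−πiτ/16} μ(τ/4, τ/2; τ)`. -/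
noncomputable def V21 (τ : ℂ) : ℂ :=
  I * Complex.exp (-(Real.pi : ℂ) * I * τ / 16) * muZw (τ/4) (τ/2) τ

/-- `E₂(z) = η(16z)⁹/(η(8z)³η(32z)³)`. -/
noncomputable def E2fun (z : ℂ) : ℂ :=
  dedekindEta (16 * z) ^ 9 / (dedekindEta (8 * z) ^ 3 * dedekindEta (32 * z) ^ 3)

section
open Complex

noncomputable def qp (q : ℂ) (n : ℕ) : ℂ := ∏ k ∈ Finset.range n, (1 - q ^ (k + 1))
noncomputable def qr (q : ℂ) (n : ℤ) : ℂ := if n < 0 then 0 else (qp q n.toNat)⁻¹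
noncomputable def cc (s : ℂ) (N : ℕ) (l : ℤ) : ℂ :=
  (-1) ^ l * s ^ (l * (l - 1)) * qp (s ^ 2) (2 * N) * qr (s ^ 2) (N + l) * qr (s ^ 2) (N - l)

lemma one_sub_pow_ne {q : ℂ} (hq : ‖q‖ < 1) (k : ℕ) : 1 - q ^ (k + 1) ≠ 0 := by
  intro h
  have h1 : q ^ (k + 1) = 1 := (sub_eq_zero.mp h).symm
  have h2 : ‖q‖ ^ (k + 1) = 1 := by rw [← norm_pow, h1, norm_one]
  have h3 : ‖q‖ ^ (k + 1) < 1 := pow_lt_one₀ (norm_nonneg _) hq (by simp)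
  linarith

lemma qp_ne {q : ℂ} (hq : ‖q‖ < 1) (n : ℕ) : qp q n ≠ 0 :=
  Finset.prod_ne_zero_iff.mpr fun k _ => one_sub_pow_ne hq k

lemma qp_succ (q : ℂ) (n : ℕ) : qp q (n + 1) = qp q n * (1 - q ^ (n + 1)) :=
  Finset.prod_range_succ _ _

lemma qr_rec {q : ℂ} (hq : ‖q‖ < 1) (n : ℤ) : qr q (n - 1) = (1 - q ^ n) * qr q n := by
  rcases lt_trichotomy n 0 with h | h | h
  · simp [qr, h, show n - 1 < 0 by omega]
  · subst h; simp [qr]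
  · obtain ⟨m, rfl⟩ : ∃ m : ℕ, n = m + 1 := ⟨(n - 1).toNat, by omega⟩
    have h1 : ¬ ((m : ℤ) + 1 - 1 < 0) := by omega
    have h2 : ¬ ((m : ℤ) + 1 < 0) := by omega
    have e1 : ((m : ℤ) + 1 - 1).toNat = m := by omega
    have e2 : ((m : ℤ) + 1).toNat = m + 1 := by omega
    simp only [qr, h1, h2, if_false, e1, e2, qp_succ]
    have := qp_ne hq m
    have h3 := one_sub_pow_ne hq m
    have e3 : q ^ ((m : ℤ) + 1) = q ^ (m + 1) := by exact_mod_cast zpow_natCast q (m + 1)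
    rw [e3]
    field_simp

lemma cc_rec {s : ℂ} (hs0 : s ≠ 0) (hs : ‖s‖ < 1) (N : ℕ) (l : ℤ) :
    cc s (N + 1) l = cc s N l * (1 + (s ^ 2) ^ (2 * N + 1)) - (s ^ 2) ^ N * cc s N (l - 1)
      - (s ^ 2) ^ (N + 1) * cc s N (l + 1) := by
  have hq : ‖s ^ 2‖ < 1 := by rw [norm_pow]; exact pow_lt_one₀ (norm_nonneg _) hs (by simp)
  set q := s ^ 2 with hqd
  have hq0 : q ≠ 0 := pow_ne_zero _ hs0
  have a1 := qr_rec hq (N + 1 + l)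
  have a2 := qr_rec hq (N + l)
  have b1 := qr_rec hq (N + 1 - l)
  have b2 := qr_rec hq (N - l)
  rw [show (N : ℤ) + 1 + l - 1 = N + l by ring] at a1
  rw [show (N : ℤ) + 1 - l - 1 = N - l by ring] at b1
  have e1 : s ^ ((l - 1) * (l - 1 - 1)) = s ^ (l * (l - 1)) * q * (q ^ l)⁻¹ := by
    rw [hqd, ← zpow_natCast, ← zpow_mul, ← zpow_neg, ← zpow_add₀ hs0, ← zpow_add₀ hs0]
    congr 1; push_cast; ring
  have e2 : s ^ ((l + 1) * (l + 1 - 1)) = s ^ (l * (l - 1)) * q ^ l := by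
    rw [hqd, ← zpow_natCast, ← zpow_mul, ← zpow_add₀ hs0]
    congr 1; push_cast; ring
  have s1 : (-1 : ℂ) ^ (l - 1) = - (-1) ^ l := by
    rw [zpow_sub₀ (by norm_num)]; simp [div_neg]
  have s2 : (-1 : ℂ) ^ (l + 1) = - (-1) ^ l := by
    rw [zpow_add₀ (by norm_num)]; simp
  have p : qp q (2 * (N + 1)) = qp q (2 * N) * (1 - q ^ (2 * N + 1)) * (1 - q ^ (2 * N + 2)) := by
    rw [show 2 * (N + 1) = 2 * N + 1 + 1 by ring, qp_succ, qp_succ]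
  simp only [cc, ← hqd, e1, e2, s1, s2, p]
  rw [show ((N + 1 : ℕ) : ℤ) + l = N + 1 + l by push_cast; ring,
    show ((N + 1 : ℕ) : ℤ) - l = N + 1 - l by push_cast; ring,
    show (N : ℤ) + (l - 1) = N + l - 1 by ring, show (N : ℤ) - (l - 1) = N + 1 - l by ring,
    show (N : ℤ) + (l + 1) = N + 1 + l by ring, show (N : ℤ) - (l + 1) = N - l - 1 by ring,
    a2, b2, a1, b1]
  have hl : q ^ l ≠ 0 := zpow_ne_zero _ hq0
  rw [show (N : ℤ) + 1 + l = (N + 1 : ℕ) + l by push_cast; ring,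
    show (N : ℤ) + 1 - l = (N + 1 : ℕ) - l by push_cast; ring]
  rw [zpow_add₀ hq0, zpow_add₀ hq0, zpow_sub₀ hq0, zpow_sub₀ hq0]
  simp only [zpow_natCast]
  generalize q ^ l = x at *
  rw [pow_succ q (2 * N + 1), pow_succ q (2 * N), mul_comm 2 N, pow_mul, pow_succ q N]
  generalize q ^ N = A
  field_simp
  ring

lemma cc_zero {s : ℂ} (l : ℤ) : cc s 0 l = if l = 0 then 1 else 0 := by
  split_ifs with h
  · subst h; simp [cc, qr, qp]
  · rcases lt_or_gt_of_ne h with h' | h'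
    · simp [cc, qr, h']
    · simp [cc, qr, h']

lemma hasSum_shift {f : ℤ → ℂ} {a : ℂ} (h : HasSum f a) (k : ℤ) : HasSum (fun l => f (l + k)) a :=
  (Equiv.addRight k).hasSum_iff.mpr h

lemma hasSum_of_eq {ι : Type*} {f g : ι → ℂ} {a b : ℂ} (h : HasSum f a) (e : ∀ l, g l = f l)
    (e2 : b = a) : HasSum g b := by
  rw [e2, show g = f from funext e]; exact h

/-- finite triple product -/
lemma cc_hasSum {s : ℂ} (hs0 : s ≠ 0) (hs : ‖s‖ < 1) {z : ℂ} (hz : z ≠ 0) (N : ℕ) :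
    HasSum (fun l : ℤ => cc s N l * z ^ l)
      (∏ k ∈ Finset.range N, ((1 - z * (s ^ 2) ^ k) * (1 - (s ^ 2) ^ (k + 1) / z))) := by
  induction N with
  | zero =>
    have := hasSum_ite_eq (0 : ℤ) (1 : ℂ)
    simp only [Finset.range_zero, Finset.prod_empty]
    convert this using 2 with l
    rw [cc_zero]; split_ifs with h <;> simp [h]
  | succ N ih =>
    have h1 := hasSum_shift ih (-1)
    have h2 := hasSum_shift ih 1
    have := ((ih.mul_left (1 + (s ^ 2) ^ (2 * N + 1))).sub (h1.mul_left ((s ^ 2) ^ N * z))).sub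
      (h2.mul_left ((s ^ 2) ^ (N + 1) / z))
    rw [Finset.prod_range_succ]
    refine hasSum_of_eq this (fun l => ?_) ?_
    · skip
      rw [cc_rec hs0 hs, zpow_add₀ hz, zpow_add₀ hz, ← sub_eq_add_neg]
      field_simp
    · field_simp
      ring

lemma cc_hasSum' {s : ℂ} (hs0 : s ≠ 0) (hs : ‖s‖ < 1) (N : ℕ) :
    HasSum (fun l : ℤ => cc s (N + 1) l * l) (- (qp (s ^ 2) N * qp (s ^ 2) (N + 1))) := by
  have key : ∀ N : ℕ, ∀ D P : ℂ, HasSum (fun l : ℤ => cc s N l * l) D →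
      HasSum (fun l : ℤ => cc s N l) P →
      HasSum (fun l : ℤ => cc s (N + 1) l * l) ((1 - (s ^ 2) ^ N) * (1 - (s ^ 2) ^ (N + 1)) * D
        - (s ^ 2) ^ N * P + (s ^ 2) ^ (N + 1) * P) := by
    intro N D P hD hP
    have h1 := hasSum_shift hD (-1)
    have h2 := hasSum_shift hD 1
    have h3 := hasSum_shift hP (-1)
    have h4 := hasSum_shift hP 1
    have := ((hD.mul_left (1 + (s ^ 2) ^ (2 * N + 1))).sub ((h1.add h3).mul_left ((s ^ 2) ^ N))).sub
      ((h2.sub h4).mul_left ((s ^ 2) ^ (N + 1)))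
    refine hasSum_of_eq this (fun l => ?_) ?_
    · skip
      rw [cc_rec hs0 hs, ← sub_eq_add_neg]
      push_cast
      ring
    · ring
  have hP : ∀ N : ℕ, HasSum (fun l : ℤ => cc s (N + 1) l) 0 := by
    intro N
    have := cc_hasSum hs0 hs one_ne_zero (N + 1)
    rw [Finset.prod_range_succ'] at this
    simpa using this
  induction N with
  | zero =>
    have := key 0 0 1 (by
        convert hasSum_zero with l
        rw [cc_zero]; split_ifs with h <;> simp [h]) (by
        convert hasSum_ite_eq (0 : ℤ) (1 : ℂ) with l
        rw [cc_zero])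
    convert this using 1
    simp [qp]
    ring
  | succ N ih =>
    have := key (N + 1) _ _ ih (hP N)
    convert this using 1
    rw [qp_succ _ (N + 1), qp_succ _ N]
    ring

/-- Euler function -/
noncomputable def eul (q : ℂ) : ℂ := ∏' n : ℕ, (1 - q ^ (n + 1))

lemma qp_tendsto {q : ℂ} (hq : ‖q‖ < 1) :
    Filter.Tendsto (qp q) Filter.atTop (nhds (eul q)) :=
  (ModularForm.multipliable_one_sub_pow hq).hasProd.tendsto_prod_nat

lemma eul_ne {q : ℂ} (hq : ‖q‖ < 1) : eul q ≠ 0 := by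
  have := tprod_one_add_ne_zero_of_summable (f := fun n : ℕ ↦ -q ^ (n + 1)) (by
    intro i; rw [← sub_eq_add_neg]; exact one_sub_pow_ne hq i) (by
    simpa using (summable_nat_add_iff 1).mpr (summable_geometric_of_lt_one (norm_nonneg _) hq))
  simpa [eul, sub_eq_add_neg] using this

lemma qr_tendsto {q : ℂ} (hq : ‖q‖ < 1) (f : ℕ → ℤ) (hf : Filter.Tendsto f Filter.atTop Filter.atTop) :
    Filter.Tendsto (fun N => qr q (f N)) Filter.atTop (nhds (eul q)⁻¹) := by
  have h1 : Filter.Tendsto (fun N => (f N).toNat) Filter.atTop Filter.atTop := by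
    rw [Filter.tendsto_atTop] at hf ⊢
    intro b
    filter_upwards [hf b] with N hN
    omega
  have := ((qp_tendsto hq).comp h1).inv₀ (eul_ne hq)
  refine this.congr' ?_
  filter_upwards [hf.eventually_ge_atTop 0] with N hN
  simp [qr, not_lt.mpr hN]

lemma qr_bdd {q : ℂ} (hq : ‖q‖ < 1) : ∃ K : ℝ, 0 ≤ K ∧ ∀ n, ‖qr q n‖ ≤ K := by
  have h := ((qp_tendsto hq).inv₀ (eul_ne hq)).norm.bddAbove_range
  obtain ⟨K, hK⟩ := h
  refine ⟨max K 0, le_max_right _ _, fun n => ?_⟩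
  unfold qr
  split_ifs
  · simp
  · exact (hK ⟨n.toNat, rfl⟩).trans (le_max_left _ _)

lemma qp_bdd {q : ℂ} (hq : ‖q‖ < 1) : ∃ K : ℝ, 0 ≤ K ∧ ∀ n, ‖qp q n‖ ≤ K := by
  obtain ⟨K, hK⟩ := (qp_tendsto hq).norm.bddAbove_range
  exact ⟨max K 0, le_max_right _ _, fun n => (hK ⟨n, rfl⟩).trans (le_max_left _ _)⟩

/-- Tannery -/
lemma cc_tendsto {s : ℂ} (hs : ‖s‖ < 1) (w : ℤ → ℂ)
    (hw : Summable fun l : ℤ => ‖s ^ (l * (l - 1)) * w l‖) (L : ℕ → ℂ) (L' : ℂ)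
    (hL : ∀ N, HasSum (fun l => cc s N l * w l) (L N)) (hL' : Filter.Tendsto L Filter.atTop (nhds L')) :
    ∑' l : ℤ, (-1) ^ l * s ^ (l * (l - 1)) * w l = eul (s ^ 2) * L' := by
  have hq : ‖s ^ 2‖ < 1 := by rw [norm_pow]; exact pow_lt_one₀ (norm_nonneg _) hs (by simp)
  obtain ⟨K, hK0, hK⟩ := qr_bdd hq
  obtain ⟨M, hM0, hM⟩ := qp_bdd hq
  have h1 : Filter.Tendsto (fun N => ∑' l : ℤ, cc s N l * w l) Filter.atTop
      (nhds (∑' l : ℤ, ((-1) ^ l * s ^ (l * (l - 1)) * w l) * (eul (s ^ 2))⁻¹)) := by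
    refine tendsto_tsum_of_dominated_convergence (hw.mul_left (M * K * K)) ?_ ?_
    · intro l
      have t1 : Filter.Tendsto (fun N : ℕ => qp (s ^ 2) (2 * N)) Filter.atTop (nhds (eul (s ^ 2))) :=
        (qp_tendsto hq).comp (Filter.tendsto_id.const_mul_atTop' (by norm_num))
      have t2 := qr_tendsto hq (fun N : ℕ => (N : ℤ) + l)
        (Filter.tendsto_atTop_add_const_right _ _ tendsto_natCast_atTop_atTop)
      have t3 := qr_tendsto hq (fun N : ℕ => (N : ℤ) - l)
        (Filter.tendsto_atTop_add_const_right _ _ tendsto_natCast_atTop_atTop)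
      have := (((t1.mul t2).mul t3).const_mul ((-1) ^ l * s ^ (l * (l - 1)))).mul_const (w l)
      convert this using 2
      · simp only [cc]; ring
      · have := eul_ne hq
        field_simp
    · refine Filter.Eventually.of_forall fun N l => ?_
      simp only [cc, norm_mul, norm_zpow, norm_neg, norm_one, one_zpow, one_mul]
      have a := hK (N + l)
      have b := hK (N - l)
      have c := hM (2 * N)
      calc _ = (‖qp (s ^ 2) (2 * N)‖ * ‖qr (s ^ 2) (N + l)‖ * ‖qr (s ^ 2) (N - l)‖) *
            (‖s‖ ^ (l * (l - 1)) * ‖w l‖) := by ring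
        _ ≤ _ := by gcongr
  have h2 : Filter.Tendsto (fun N => ∑' l : ℤ, cc s N l * w l) Filter.atTop (nhds L') :=
    hL'.congr fun N => ((hL N).tsum_eq).symm
  have h3 := tendsto_nhds_unique h1 h2
  rw [tsum_mul_right] at h3
  have := eul_ne hq
  rw [← h3]; field_simp

lemma summable_zpow_bound {s : ℂ} (hs0 : s ≠ 0) (hs : ‖s‖ < 1) (k : ℕ) (S : ℝ) :
    Summable fun l : ℤ => (|l| : ℝ) ^ k * (‖s‖ ^ (l ^ 2) * Real.exp (S * |l|)) := by
  have hT : 0 < - Real.log ‖s‖ / Real.pi :=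
    div_pos (neg_pos.mpr (Real.log_neg (norm_pos_iff.mpr hs0) hs)) Real.pi_pos
  have := summable_pow_mul_jacobiTheta₂_term_bound (S / (2 * Real.pi)) hT k
  convert this using 2 with l
  congr 1
  · push_cast; rfl
  have hp := norm_pos_iff.mpr hs0
  rw [← Real.exp_log (zpow_pos hp (l ^ 2)), Real.log_zpow, ← Real.exp_add]
  congr 1
  have := Real.pi_pos.ne'
  push_cast
  field_simp
  ring

lemma summable_jac {s : ℂ} (hs0 : s ≠ 0) (hs : ‖s‖ < 1) :
    Summable fun l : ℤ => ‖s ^ (l * (l - 1)) * (l : ℂ)‖ := by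
  have hp := norm_pos_iff.mpr hs0
  refine (summable_zpow_bound hs0 hs 1 (- Real.log ‖s‖)).of_nonneg_of_le (fun _ => norm_nonneg _) ?_
  intro l
  rw [norm_mul, norm_zpow, mul_comm]
  have h1 : ‖(l : ℂ)‖ = |(l : ℝ)| := by simp
  rw [h1, pow_one]
  push_cast
  gcongr
  rw [show l * (l - 1) = l ^ 2 + (- l) by ring, zpow_add₀ hp.ne']
  gcongr
  rw [← Real.exp_log (zpow_pos hp (-l)), Real.log_zpow]
  apply Real.exp_le_exp.mpr
  push_cast
  have := Real.log_neg hp hs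
  nlinarith [le_abs_self (l : ℝ), neg_abs_le (l : ℝ)]

/-- Jacobi's identity. -/
lemma jacobi_cube {s : ℂ} (hs0 : s ≠ 0) (hs : ‖s‖ < 1) :
    ∑' l : ℤ, (-1) ^ l * s ^ (l * (l - 1)) * (l : ℂ) = - eul (s ^ 2) ^ 3 := by
  have hq : ‖s ^ 2‖ < 1 := by rw [norm_pow]; exact pow_lt_one₀ (norm_nonneg _) hs (by simp)
  have := cc_tendsto hs (fun l => (l : ℂ)) (summable_jac hs0 hs)
    (fun N => ∑' l : ℤ, cc s N l * l) (- (eul (s ^ 2) * eul (s ^ 2))) (by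
      intro N
      cases N with
      | zero =>
        have : (fun l : ℤ => cc s 0 l * (l : ℂ)) = fun _ => 0 := by
          funext l
          rw [cc_zero]; split_ifs with h <;> simp [h]
        simp only [this, tsum_zero]
        exact hasSum_zero
      | succ N => exact (cc_hasSum' hs0 hs N).summable.hasSum) (by
      rw [← Filter.tendsto_add_atTop_iff_nat 1]
      simp only [(cc_hasSum' hs0 hs _).tsum_eq]
      exact ((qp_tendsto hq).mul ((qp_tendsto hq).comp (Filter.tendsto_add_atTop_nat 1))).neg)
  rw [this]; ring

lemma theta4_ne {s : ℂ} (hs0 : s ≠ 0) (hs : ‖s‖ < 1) :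
    ∑' l : ℤ, (-1) ^ l * s ^ (l ^ 2) ≠ 0 := by
  have hq : ‖s ^ 2‖ < 1 := by rw [norm_pow]; exact pow_lt_one₀ (norm_nonneg _) hs (by simp)
  have hne : ∀ k : ℕ, 1 - s * (s ^ 2) ^ k ≠ 0 := by
    intro k
    have := one_sub_pow_ne hs (2 * k)
    rwa [pow_succ, mul_comm _ s, pow_mul] at this
  have hsum : Summable fun k : ℕ => ‖-(s * (s ^ 2) ^ k)‖ := by
    simpa using (summable_geometric_of_lt_one (norm_nonneg _) hq).mul_left ‖s‖
  have hprod : Multipliable fun k : ℕ => 1 - s * (s ^ 2) ^ k := by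
    simpa [sub_eq_add_neg] using multipliable_one_add_of_summable (f := fun k : ℕ => -(s * (s ^ 2) ^ k)) hsum
  have hprod_ne : ∏' k : ℕ, (1 - s * (s ^ 2) ^ k) ≠ 0 := by
    have := tprod_one_add_ne_zero_of_summable (f := fun k : ℕ => -(s * (s ^ 2) ^ k)) (by
      intro i; rw [← sub_eq_add_neg]; exact hne i) hsum
    simpa [sub_eq_add_neg] using this
  have := cc_tendsto hs (fun l => s ^ l) (by
      have := summable_zpow_bound hs0 hs 0 0
      convert this using 2 with l
      rw [← zpow_add₀ hs0, norm_zpow]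
      simp only [pow_zero, one_mul, zero_mul, Real.exp_zero, mul_one]
      congr 1; ring) _ _ (fun N => cc_hasSum hs0 hs hs0 N) (by
      have h := hprod.hasProd.tendsto_prod_nat
      have h2 := h.mul h
      simp only [← Finset.prod_mul_distrib] at h2
      refine h2.congr fun N => Finset.prod_congr rfl fun k _ => ?_
      congr 2
      field_simp
      ring)
  have e : (fun l : ℤ => (-1) ^ l * s ^ (l ^ 2)) = fun l : ℤ => (-1) ^ l * s ^ (l * (l - 1)) * s ^ l := by
    funext l
    rw [mul_assoc, ← zpow_add₀ hs0]; congr 2; ring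
  rw [e, this]
  exact mul_ne_zero (eul_ne hq) (mul_ne_zero hprod_ne hprod_ne)

end

section
open Complex

noncomputable def oul (q : ℂ) : ℂ := ∏' k : ℕ, (1 - q * (q ^ 2) ^ k)

lemma oul_mult {q : ℂ} (hq : ‖q‖ < 1) : Multipliable fun k : ℕ => 1 - q * (q ^ 2) ^ k := by
  have hq2 : ‖q ^ 2‖ < 1 := by rw [norm_pow]; exact pow_lt_one₀ (norm_nonneg _) hq (by simp)
  have hsum : Summable fun k : ℕ => ‖-(q * (q ^ 2) ^ k)‖ := by
    simpa using (summable_geometric_of_lt_one (norm_nonneg _) hq2).mul_left ‖q‖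
  simpa [sub_eq_add_neg] using multipliable_one_add_of_summable (f := fun k : ℕ => -(q * (q ^ 2) ^ k)) hsum

lemma eul_split {q : ℂ} (hq : ‖q‖ < 1) : eul q = oul q * eul (q ^ 2) := by
  have hq2 : ‖q ^ 2‖ < 1 := by rw [norm_pow]; exact pow_lt_one₀ (norm_nonneg _) hq (by simp)
  have h1 := oul_mult hq
  have h2 := ModularForm.multipliable_one_sub_pow hq2
  have e1 : ∀ k : ℕ, 1 - q * (q ^ 2) ^ k = 1 - q ^ (2 * k + 1) := by intro k; ring
  have e2 : ∀ k : ℕ, 1 - (q ^ 2) ^ (k + 1) = 1 - q ^ (2 * k + 1 + 1) := by intro k; ring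
  have := tprod_even_mul_odd (f := fun n : ℕ => 1 - q ^ (n + 1)) (by simpa [e1] using h1)
    (by simpa [e2] using h2)
  simp only [eul, oul, e1, e2, ← this]

lemma oul_mul {q : ℂ} (hq : ‖q‖ < 1) : oul q * oul (-q) = oul (q ^ 2) := by
  have hq2 : ‖q ^ 2‖ < 1 := by rw [norm_pow]; exact pow_lt_one₀ (norm_nonneg _) hq (by simp)
  unfold oul
  rw [← (oul_mult hq).tprod_mul (oul_mult (q := -q) (by simpa using hq))]
  congr 1; funext k
  ring

lemma eul_cube {q : ℂ} (hq : ‖q‖ < 1) : eul (q ^ 2) ^ 3 = eul q * eul (q ^ 4) * eul (-q) := by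
  have hq2 : ‖q ^ 2‖ < 1 := by rw [norm_pow]; exact pow_lt_one₀ (norm_nonneg _) hq (by simp)
  have h1 := eul_split hq
  have h2 := eul_split (q := -q) (by simpa using hq)
  have h3 := eul_split hq2
  have h4 := oul_mul hq
  rw [show (-q) ^ 2 = q ^ 2 by ring] at h2
  rw [show (q ^ 2) ^ 2 = q ^ 4 by ring] at h3
  rw [h1, h2]
  calc _ = eul (q ^ 2) * eul (q ^ 2) ^ 2 := by ring
    _ = (oul q * oul (-q)) * eul (q ^ 4) * eul (q ^ 2) ^ 2 := by rw [h4, ← h3]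
    _ = _ := by ring

lemma eta_eq (τ : ℂ) : dedekindEta τ = exp (Real.pi * I * τ / 12) * eul (exp (2 * Real.pi * I * τ)) := by
  unfold dedekindEta eul
  congr 2; funext n
  rw [← Complex.exp_nat_mul]
  congr 2; push_cast; ring

lemma norm_exp_lt {w : ℂ} (h : w.re < 0) : ‖exp w‖ < 1 := by
  rw [Complex.norm_exp]; exact Real.exp_lt_one_iff.mpr h

lemma E2_eul {u : ℂ} (hu : 0 < u.im) :
    E2fun (u / 32) = exp (Real.pi * I * u / 16) * eul (exp (Real.pi * I * (u + 2) / 4) ^ 2) ^ 3 := by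
  have hq : ‖exp (Real.pi * I * u / 2)‖ < 1 := by
    apply norm_exp_lt
    simp
    have := mul_pos Real.pi_pos hu
    linarith
  have hc := eul_cube hq
  have hqm : ‖-exp (Real.pi * I * u / 2)‖ < 1 := by simpa using hq
  have h1 := eul_ne hq
  have hq4 : ‖exp (Real.pi * I * u / 2) ^ 4‖ < 1 := by
    rw [norm_pow]; exact pow_lt_one₀ (norm_nonneg _) hq (by simp)
  have h3 := eul_ne hq4
  unfold E2fun
  rw [eta_eq, eta_eq, eta_eq]
  rw [show 2 * (Real.pi : ℂ) * I * (16 * (u / 32)) = (2 : ℕ) * (Real.pi * I * u / 2) by push_cast; ring,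
    show 2 * (Real.pi : ℂ) * I * (8 * (u / 32)) = Real.pi * I * u / 2 by ring,
    show 2 * (Real.pi : ℂ) * I * (32 * (u / 32)) = (4 : ℕ) * (Real.pi * I * u / 2) by push_cast; ring,
    Complex.exp_nat_mul, Complex.exp_nat_mul]
  have e : exp (Real.pi * I * (u + 2) / 4) ^ 2 = -exp (Real.pi * I * u / 2) := by
    rw [← Complex.exp_nat_mul, ← mul_neg_one, ← Complex.exp_pi_mul_I, ← Complex.exp_add]
    congr 1; push_cast; ring
  rw [e]
  rw [mul_pow, mul_pow, mul_pow, show (9 : ℕ) = 3 * 3 by norm_num, pow_mul (eul _), hc]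
  have e2 : exp (Real.pi * I * (16 * (u / 32)) / 12) ^ (3 * 3) =
      exp (Real.pi * I * u / 16) * exp (Real.pi * I * (8 * (u / 32)) / 12) ^ 3 *
      exp (Real.pi * I * (32 * (u / 32)) / 12) ^ 3 := by
    rw [← Complex.exp_nat_mul, ← Complex.exp_nat_mul, ← Complex.exp_nat_mul,
      ← Complex.exp_add, ← Complex.exp_add]; congr 1; push_cast; ring
  rw [e2]
  have n1 := Complex.exp_ne_zero (Real.pi * I * (8 * (u / 32)) / 12)
  have n2 := Complex.exp_ne_zero (Real.pi * I * (32 * (u / 32)) / 12)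
  generalize exp (Real.pi * I * (8 * (u / 32)) / 12) = a1 at *
  generalize exp (Real.pi * I * (32 * (u / 32)) / 12) = a2 at *
  generalize exp (Real.pi * I * u / 16) = a3 at *
  generalize eul (exp (Real.pi * I * u / 2) ^ 4) = a4 at *
  generalize eul (exp (Real.pi * I * u / 2)) = a5 at *
  generalize eul (-exp (Real.pi * I * u / 2)) = a6 at *
  field_simp

lemma hasSum_mod4 {A : ℤ → ℂ} {a : ℂ} (h : HasSum A a) :
    HasSum (fun k : ℤ => (A (4 * k + 1) + A (-4 * k)) + (A (4 * k + 2) + A (-4 * k - 1))) a := by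
  have hs := h.summable
  have inj : ∀ r : ℤ, Function.Injective fun k : ℤ => 4 * k + r := by
    intro r a b hab; simp at hab; exact hab
  have s0 := (hs.comp_injective (inj 0)).hasSum
  have s1 := (hs.comp_injective (inj 1)).hasSum
  have s2 := (hs.comp_injective (inj 2)).hasSum
  have s3 := (hs.comp_injective (inj 3)).hasSum
  have tot := ((Int.divModEquiv 4).symm.hasSum_iff.mpr h).prod_fiberwise
    (g := fun k => ∑ r : Fin 4, A (k * 4 + (r : ℕ))) (by
      intro k
      simpa using! hasSum_fintype (fun r : Fin 4 => A (k * 4 + (r : ℕ))))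
  have tot2 := ((s0.add s1).add s2).add s3
  have e : a = _ := tot.unique (hasSum_of_eq tot2 (fun k => by
    simp only [Fin.sum_univ_four, Function.comp]
    simp [mul_comm]) rfl)
  have s0' := (Equiv.neg ℤ).hasSum_iff.mpr s0
  have s3' := (Equiv.subLeft (-1 : ℤ)).hasSum_iff.mpr s3
  rw [e]
  refine hasSum_of_eq ((s1.add s0').add (s2.add s3')) (fun k => ?_) (by ring)
  simp only [Function.comp, Equiv.neg_apply, Equiv.subLeft_apply]
  congr 3 <;> ring_nf

noncomputable def fs (s t : ℝ) : ℂ := s * exp (-Real.pi * s ^ 2 * t / 16)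

noncomputable def gk (t : ℝ) (k : ℤ) : ℂ :=
  (-1) ^ k * (fs (8 * k + 1) t + I * fs (8 * k + 3) t)

lemma exp_int_pi (n : ℤ) : exp (Real.pi * I * n) = (-1) ^ n := by
  rw [mul_comm, Complex.exp_int_mul, Complex.exp_pi_mul_I]

lemma E2_hasSum {t : ℝ} (ht : 0 < t) :
    HasSum (fun k : ℤ => exp (Real.pi * I / 16) * gk t k) (E2fun ((1 + I * t) / 32)) := by
  have hu : 0 < (1 + I * (t : ℂ)).im := by simpa using ht
  rw [E2_eul hu]
  set u : ℂ := 1 + I * t with hud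
  set s := exp (Real.pi * I * (u + 2) / 4) with hs
  have hs0 : s ≠ 0 := Complex.exp_ne_zero _
  have hs1 : ‖s‖ < 1 := by
    apply norm_exp_lt
    simp [hud]
    have := mul_pos Real.pi_pos ht
    linarith
  have hsumm : Summable fun l : ℤ => (-1) ^ l * s ^ (l * (l - 1)) * (l : ℂ) := by
    refine Summable.of_norm ((summable_jac hs0 hs1).congr fun l => ?_)
    simp
  have h0 := hsumm.hasSum
  rw [jacobi_cube hs0 hs1] at h0
  have h1 := hasSum_mod4 (h0.mul_left (-exp (Real.pi * I * u / 16)))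
  refine hasSum_of_eq h1 (fun k => ?_) (by ring)
  have hz : ∀ l : ℤ, exp (Real.pi * I * u / 16) * s ^ (l * (l - 1)) =
      exp (Real.pi * I * (2 * l - 1) ^ 2 / 16) * exp (-Real.pi * (2 * l - 1) ^ 2 * t / 16) *
        exp (Real.pi * I * (l * (l - 1)) / 2) := by
    intro l
    rw [hs, ← Complex.exp_int_mul, ← Complex.exp_add, ← Complex.exp_add, ← Complex.exp_add, hud]
    congr 1
    push_cast
    linear_combination (-(Real.pi : ℂ) * (2 * l - 1) ^ 2 * t / 16) * (-I_sq)
  have r1 := hz (4 * k + 1)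
  have r2 := hz (4 * k + 2)
  rw [show -4 * k * (-4 * k - 1) = (4 * k + 1) * (4 * k + 1 - 1) by ring,
    show (-4 * k - 1) * (-4 * k - 1 - 1) = (4 * k + 2) * (4 * k + 2 - 1) by ring]
  have p1 : (-1 : ℂ) ^ (4 * k + 1) = -1 := Odd.neg_one_zpow ⟨2 * k, by ring⟩
  have p2 : (-1 : ℂ) ^ (-4 * k) = 1 := Even.neg_one_zpow ⟨-2 * k, by ring⟩
  have p3 : (-1 : ℂ) ^ (4 * k + 2) = 1 := Even.neg_one_zpow ⟨2 * k + 1, by ring⟩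
  have p4 : (-1 : ℂ) ^ (-4 * k - 1) = -1 := Odd.neg_one_zpow ⟨-2 * k - 1, by ring⟩
  rw [p1, p2, p3, p4]
  have q1 : exp (Real.pi * I * (((4 * k + 1 : ℤ) : ℂ) * (((4 * k + 1 : ℤ) : ℂ) - 1)) / 2) = 1 := by
    have := exp_int_pi (2 * (k * (4 * k + 1)))
    rw [Even.neg_one_zpow ⟨k * (4 * k + 1), by ring⟩] at this
    refine Eq.trans ?_ this; congr 1; push_cast; ring
  have q2 : exp (Real.pi * I * (((4 * k + 2 : ℤ) : ℂ) * (((4 * k + 2 : ℤ) : ℂ) - 1)) / 2) = -1 := by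
    have := exp_int_pi ((2 * k + 1) * (4 * k + 1))
    rw [Odd.neg_one_zpow ⟨k * (4 * k + 1) + 2 * k, by ring⟩] at this
    refine Eq.trans ?_ this; congr 1; push_cast; ring
  have w1 : exp (Real.pi * I * (2 * ((4 * k + 1 : ℤ) : ℂ) - 1) ^ 2 / 16) = (-1) ^ k * exp (Real.pi * I / 16) := by
    have := exp_int_pi (2 * (2 * k ^ 2) + k)
    rw [zpow_add₀ (by norm_num), Even.neg_one_zpow ⟨2 * k ^ 2, by ring⟩, one_mul] at this
    rw [← this, ← Complex.exp_add]; congr 1; push_cast; ring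
  have w2 : exp (Real.pi * I * (2 * ((4 * k + 2 : ℤ) : ℂ) - 1) ^ 2 / 16) =
      (-1) ^ k * I * exp (Real.pi * I / 16) := by
    have := exp_int_pi (2 * (2 * k ^ 2 + k) + k)
    rw [zpow_add₀ (by norm_num), Even.neg_one_zpow ⟨2 * k ^ 2 + k, by ring⟩, one_mul] at this
    rw [show (Real.pi : ℂ) * I * (2 * ((4 * k + 2 : ℤ) : ℂ) - 1) ^ 2 / 16 =
      Real.pi * I * ((2 * (2 * k ^ 2 + k) + k : ℤ) : ℂ) + Real.pi / 2 * I + Real.pi * I / 16 by push_cast; ring,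
      Complex.exp_add, Complex.exp_add, this, Complex.exp_pi_div_two_mul_I]
  rw [q1, w1] at r1
  rw [q2, w2] at r2
  have x1 : exp (-Real.pi * (2 * ((4 * k + 1 : ℤ) : ℂ) - 1) ^ 2 * t / 16) =
     exp (-Real.pi * (((8 * k + 1 : ℝ)) : ℂ) ^ 2 * t / 16) := by congr 1; push_cast; ring
  have x2 : exp (-Real.pi * (2 * ((4 * k + 2 : ℤ) : ℂ) - 1) ^ 2 * t / 16) =
     exp (-Real.pi * (((8 * k + 3 : ℝ)) : ℂ) ^ 2 * t / 16) := by congr 1; push_cast; ring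
  rw [x1] at r1
  rw [x2] at r2
  simp only [gk, fs]
  push_cast at r1 r2 ⊢
  linear_combination (-(8 * (k : ℂ) + 1)) * r1 + (8 * (k : ℂ) + 3) * r2

end

section
open Complex
open MeasureTheory Set

lemma cot_hasSum {z : ℂ} (hz : z ∈ Complex.integerComplement) :
    HasSum (fun n : ℕ => 1 / (z + n) + 1 / (z - n)) (Real.pi * cot (Real.pi * z) + 1 / z) := by
  have h := (summable_cotTerm hz).hasSum
  rw [← cot_series_rep' hz] at h
  rw [← hasSum_nat_add_iff' 1]
  refine hasSum_of_eq (ι := ℕ) h (fun n => ?_) ?_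
  · simp only [cotTerm]; push_cast; ring
  · simp; try ring

lemma alt_hasSum (f : ℕ → ℂ) {A E : ℂ} (h : HasSum f A) (hev : HasSum (fun m : ℕ => f (2 * m)) E) :
    HasSum (fun n : ℕ => (-1 : ℂ) ^ n * f n) (2 * E - A) := by
  have hodd : Summable (fun m : ℕ => f (2 * m + 1)) :=
    h.summable.comp_injective (i := fun m : ℕ => 2 * m + 1) (fun a b h => by simpa using h)
  obtain ⟨o, ho⟩ := hodd
  have e := (HasSum.even_add_odd (f := f) hev ho).unique h
  have a1 : HasSum (fun m : ℕ => (-1 : ℂ) ^ (2 * m) * f (2 * m)) E :=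
    hasSum_of_eq hev (fun m => by simp [pow_mul]) rfl
  have a2 : HasSum (fun m : ℕ => (-1 : ℂ) ^ (2 * m + 1) * f (2 * m + 1)) (-o) :=
    hasSum_of_eq ho.neg (fun m => by simp [pow_mul, pow_succ]) rfl
  have := HasSum.even_add_odd (f := fun n => (-1 : ℂ) ^ n * f n) a1 a2
  refine hasSum_of_eq this (fun n => rfl) ?_
  linear_combination e

lemma csc_hasSum {z : ℂ} (hz : z ∈ Complex.integerComplement) :
    HasSum (fun n : ℕ => (-1 : ℂ) ^ n * (1 / (z + n) + 1 / (z - n)))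
      (Real.pi / sin (Real.pi * z) + 1 / z) := by
  have h1 := cot_hasSum hz
  have hz2 : z / 2 ∈ Complex.integerComplement := by
    intro ⟨n, hn⟩
    exact hz ⟨2 * n, by push_cast; rw [hn]; ring⟩
  have h2 := (cot_hasSum hz2).mul_left (1 / 2)
  have hev := hasSum_of_eq (g := fun m : ℕ => 1 / (z + (2 * m : ℕ)) + 1 / (z - (2 * m : ℕ))) h2 (fun m => by
    rw [show z + (2 * m : ℕ) = 2 * (z / 2 + m) by push_cast; ring,
      show z - (2 * m : ℕ) = 2 * (z / 2 - m) by push_cast; ring]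
    simp only [one_div, mul_inv]
    ring) rfl
  have := alt_hasSum (fun n : ℕ => 1 / (z + n) + 1 / (z - n)) h1 hev
  refine hasSum_of_eq this (fun n => rfl) ?_
  have hs : sin (Real.pi * z) ≠ 0 := sin_pi_mul_ne_zero hz
  have hs2 : sin (Real.pi * (z / 2)) ≠ 0 := sin_pi_mul_ne_zero hz2
  have hz0 : z ≠ 0 := integerComplement.ne_zero hz
  have k1 : sin (Real.pi * z) = 2 * sin (Real.pi * (z / 2)) * cos (Real.pi * (z / 2)) := by
    rw [← Complex.sin_two_mul]; congr 1; ring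
  have k2 : cos (Real.pi * z) = 2 * cos (Real.pi * (z / 2)) ^ 2 - 1 := by
    rw [← Complex.cos_two_mul]; congr 1; ring
  have key : cot (Real.pi * (z / 2)) - cot (Real.pi * z) = 1 / sin (Real.pi * z) := by
    simp only [Complex.cot]
    rw [k2]; rw [k1] at hs ⊢
    generalize sin (Real.pi * (z / 2)) = s at *
    generalize cos (Real.pi * (z / 2)) = c at *
    have hc : c ≠ 0 := fun h => hs (by simp [h])
    field_simp; ring
  have : (Real.pi : ℂ) / sin (Real.pi * z) = Real.pi * (cot (Real.pi * (z / 2)) - cot (Real.pi * z)) := by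
    rw [key]; ring
  rw [this]
  field_simp
  ring

noncomputable def blk (f : ℤ → ℂ) (n : ℕ) : ℂ := if n = 0 then f 0 else f n + f (-n)

lemma hasSum_blk' {f : ℤ → ℂ} {a b : ℂ} (h : HasSum (fun n : ℕ => f n + f (-n)) b) (e : b = a + f 0) :
    HasSum (blk f) a := by
  have h2 := h.sub (hasSum_ite_eq (0 : ℕ) (f 0))
  refine hasSum_of_eq (ι := ℕ) h2 (fun n => ?_) (by rw [e]; ring)
  unfold blk
  split_ifs with hn <;> simp [hn]

lemma hasSum_blk {f : ℤ → ℂ} {a : ℂ} (h : HasSum f a) : HasSum (blk f) a := by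
  exact hasSum_blk' h.nat_add_neg rfl

lemma swap_lemma {B : ℕ → ℝ → ℂ} (hB : ∀ n, IntegrableOn (B n) (Ioi 0))
    (hs : Summable fun n => ∫ t in Ioi (0:ℝ), ‖B n t‖) {g : ℝ → ℂ} (hg : Integrable g) {L : ℝ → ℕ → ℂ}
    (hL : ∀ (x : ℝ) n, ∫ t in Ioi (0:ℝ), B n t * exp (-Real.pi * x ^ 2 * t) = L x n) :
    ∫ t in Ioi (0:ℝ), (∑' n, B n t) * ∫ x : ℝ, exp (-Real.pi * x ^ 2 * t) * g x =
      ∫ x : ℝ, (∑' n, L x n) * g x := by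
  have hle : ∀ t ∈ Ioi (0:ℝ), ∀ x : ℝ, ‖exp (-Real.pi * x ^ 2 * t)‖ ≤ 1 := by
    intro t ht x
    rw [Complex.norm_exp]
    have : (-(Real.pi : ℂ) * (x : ℂ) ^ 2 * t) = ((-(Real.pi * x ^ 2 * t) : ℝ) : ℂ) := by push_cast; ring
    rw [this, ofReal_re]
    apply Real.exp_le_one_iff.mpr
    have ht' : 0 < t := ht
    have := Real.pi_pos
    simp only [Left.neg_nonpos_iff]
    positivity
  have hp : ∀ n, Integrable (fun p : ℝ × ℝ => B n p.1 * (exp (-Real.pi * p.2 ^ 2 * p.1) * g p.2))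
      ((volume.restrict (Ioi (0:ℝ))).prod volume) := by
    intro n
    have h1 : Integrable (fun p : ℝ × ℝ => exp (-Real.pi * p.2 ^ 2 * p.1) * (B n p.1 * g p.2))
      ((volume.restrict (Ioi (0:ℝ))).prod volume) := by
      refine Integrable.bdd_mul (c := 1) (Integrable.mul_prod (hB n) hg) ?_ ?_
      · apply Continuous.aestronglyMeasurable; fun_prop
      · have := (Measure.quasiMeasurePreserving_fst (μ := volume.restrict (Ioi (0:ℝ))) (ν := (volume : Measure ℝ))).ae
          (ae_restrict_mem measurableSet_Ioi)
        filter_upwards [this] with p hp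
        exact hle _ hp _
    refine h1.congr (Filter.Eventually.of_forall fun p => ?_)
    simp only; ring
  have a1 : HasSum (fun n => ∫ t in Ioi (0:ℝ), B n t * ∫ x : ℝ, exp (-Real.pi * x ^ 2 * t) * g x)
      (∫ t in Ioi (0:ℝ), ∑' n, B n t * ∫ x : ℝ, exp (-Real.pi * x ^ 2 * t) * g x) := by
    refine hasSum_integral_of_summable_integral_norm (fun n => ?_) ?_
    · have := (hp n).integral_prod_left
      simp only [integral_const_mul] at this
      exact this
    · refine Summable.of_nonneg_of_le (fun n => integral_nonneg fun _ => norm_nonneg _) (fun n => ?_)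
        (hs.mul_right (∫ x, ‖g x‖))
      rw [← integral_mul_const]
      refine setIntegral_mono_on ?_ ((hB n).norm.mul_const _) measurableSet_Ioi fun t ht => ?_
      · have := (hp n).integral_prod_left
        simp only [integral_const_mul] at this
        exact this.norm
      · rw [norm_mul]
        refine mul_le_mul_of_nonneg_left ?_ (norm_nonneg _)
        refine norm_integral_le_of_norm_le hg.norm (Filter.Eventually.of_forall fun x => ?_)
        rw [norm_mul]
        exact mul_le_of_le_one_left (norm_nonneg _) (hle t ht x)
  have hLb : ∀ x n, ‖L x n‖ ≤ ∫ t in Ioi (0:ℝ), ‖B n t‖ := by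
    intro x n
    rw [← hL x n]
    refine norm_integral_le_of_norm_le (hB n).norm ?_
    filter_upwards [ae_restrict_mem measurableSet_Ioi] with t ht
    rw [norm_mul]
    exact mul_le_of_le_one_right (norm_nonneg _) (hle t ht x)
  have hgL : ∀ n, Integrable fun x => L x n * g x := by
    intro n
    have := (hp n).integral_prod_right
    refine this.congr (Filter.Eventually.of_forall fun x => ?_)
    simp only
    rw [← hL x n, ← integral_mul_const]
    congr 1; funext t; ring
  have a2 : HasSum (fun n => ∫ x, L x n * g x) (∫ x, ∑' n, L x n * g x) := by
    refine hasSum_integral_of_summable_integral_norm hgL ?_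
    refine Summable.of_nonneg_of_le (fun n => integral_nonneg fun _ => norm_nonneg _) (fun n => ?_)
        (hs.mul_right (∫ x, ‖g x‖))
    rw [← integral_const_mul]
    refine integral_mono (hgL n).norm (hg.norm.const_mul _) fun x => ?_
    simp only [norm_mul]
    exact mul_le_mul_of_nonneg_right (hLb x n) (norm_nonneg _)
  simp only [tsum_mul_right] at a1 a2
  refine a1.unique (hasSum_of_eq a2 (fun n => ?_) rfl)
  have := integral_integral_swap (f := fun t x : ℝ => B n t * (exp (-Real.pi * x ^ 2 * t) * g x)) (hp n)
  simp only [integral_const_mul] at this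
  rw [this]
  congr 1; funext x
  rw [← hL x n, ← integral_mul_const]
  congr 1; funext t; ring

end

section
open Complex
open MeasureTheory Set

lemma fs_int {s : ℝ} (hs : s ≠ 0) : IntegrableOn (fs s) (Ioi 0) := by
  unfold fs
  refine Integrable.const_mul ?_ _
  have : ((-(Real.pi * s ^ 2 / 16) : ℝ) : ℂ).re < 0 := by
    rw [ofReal_re]; have := Real.pi_pos; have := sq_pos_of_ne_zero hs; simp only [Left.neg_neg_iff]; positivity
  refine (integrableOn_exp_mul_complex_Ioi this 0).congr_fun (fun t _ => ?_) measurableSet_Ioi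
  simp only; congr 1; push_cast; ring

lemma fs_laplace {s : ℝ} (hs : s ≠ 0) (x : ℝ) :
    IntegrableOn (fun t : ℝ => fs s t * exp (-Real.pi * x ^ 2 * t)) (Ioi 0) ∧
    ∫ t in Ioi (0:ℝ), fs s t * exp (-Real.pi * x ^ 2 * t) = 16 / Real.pi * (s / (s ^ 2 + 16 * x ^ 2)) := by
  have hpi := Real.pi_pos
  have hs2 := sq_pos_of_ne_zero hs
  have hpos : 0 < s ^ 2 + 16 * x ^ 2 := by positivity
  have hre : ((-(Real.pi * (s ^ 2 + 16 * x ^ 2) / 16) : ℝ) : ℂ).re < 0 := by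
    rw [ofReal_re]; simp only [Left.neg_neg_iff]; positivity
  have e : ∀ t : ℝ, fs s t * exp (-Real.pi * x ^ 2 * t) =
      s * exp (((-(Real.pi * (s ^ 2 + 16 * x ^ 2) / 16) : ℝ) : ℂ) * t) := by
    intro t
    unfold fs
    rw [mul_assoc, ← Complex.exp_add]; congr 2; push_cast; ring
  simp only [e]
  refine ⟨(integrableOn_exp_mul_complex_Ioi hre 0).const_mul _, ?_⟩
  rw [integral_const_mul, integral_exp_mul_complex_Ioi hre]
  have h1 : (Real.pi : ℂ) ≠ 0 := by exact_mod_cast hpi.ne'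
  have h2 : (s : ℂ) ^ 2 + 16 * (x : ℂ) ^ 2 ≠ 0 := by exact_mod_cast hpos.ne'
  push_cast
  simp only [mul_zero, Complex.exp_zero]
  field_simp

noncomputable def Lk (x : ℝ) (k : ℤ) : ℂ :=
  16 / Real.pi * ((-1) ^ k * (((8 * k + 1 : ℝ) : ℂ) / (((8 * k + 1 : ℝ) : ℂ) ^ 2 + 16 * x ^ 2) +
    I * (((8 * k + 3 : ℝ) : ℂ) / (((8 * k + 3 : ℝ) : ℂ) ^ 2 + 16 * x ^ 2))))

lemma s1_ne (k : ℤ) : (8 * k + 1 : ℝ) ≠ 0 := by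
  have : (8 * k + 1 : ℤ) ≠ 0 := by omega
  exact_mod_cast this
lemma s3_ne (k : ℤ) : (8 * k + 3 : ℝ) ≠ 0 := by
  have : (8 * k + 3 : ℤ) ≠ 0 := by omega
  exact_mod_cast this

lemma gk_int (k : ℤ) : IntegrableOn (fun t => gk t k) (Ioi 0) := by
  unfold gk
  exact ((fs_int (s1_ne k)).add ((fs_int (s3_ne k)).const_mul I)).const_mul _

lemma gk_laplace (k : ℤ) (x : ℝ) :
    IntegrableOn (fun t : ℝ => gk t k * exp (-Real.pi * x ^ 2 * t)) (Ioi 0) ∧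
    ∫ t in Ioi (0:ℝ), gk t k * exp (-Real.pi * x ^ 2 * t) = Lk x k := by
  obtain ⟨i1, e1⟩ := fs_laplace (s1_ne k) x
  obtain ⟨i3, e3⟩ := fs_laplace (s3_ne k) x
  have e : ∀ t : ℝ, gk t k * exp (-Real.pi * x ^ 2 * t) =
    (-1) ^ k * (fs (8 * k + 1) t * exp (-Real.pi * x ^ 2 * t) +
      I * (fs (8 * k + 3) t * exp (-Real.pi * x ^ 2 * t))) := by
    intro t; unfold gk; ring
  simp only [e]
  refine ⟨(i1.add (i3.const_mul I)).const_mul _, ?_⟩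
  rw [integral_const_mul, integral_add i1 (i3.const_mul I), integral_const_mul, e1, e3]
  unfold Lk
  ring

lemma blk_int (n : ℕ) : IntegrableOn (fun t => blk (gk t) n) (Ioi 0) := by
  unfold blk
  split_ifs with h
  · exact gk_int 0
  · exact (gk_int n).add (gk_int (-n))

lemma blk_laplace (x : ℝ) (n : ℕ) :
    ∫ t in Ioi (0:ℝ), blk (gk t) n * exp (-Real.pi * x ^ 2 * t) = blk (Lk x) n := by
  unfold blk
  split_ifs with h
  · exact (gk_laplace 0 x).2
  · simp only [add_mul]
    rw [integral_add (gk_laplace n x).1 (gk_laplace (-n) x).1, (gk_laplace n x).2, (gk_laplace (-n) x).2]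

noncomputable def dd (p q t : ℝ) : ℝ :=
  (q - p) * Real.exp (-(Real.pi * q ^ 2 / 16) * t) +
    p * (Real.exp (-(Real.pi * p ^ 2 / 16) * t) - Real.exp (-(Real.pi * q ^ 2 / 16) * t))

lemma norm_fs_sub {p q t : ℝ} (hp : 0 < p) (hq : p ≤ q) (ht : 0 < t) :
    ‖fs q t + fs (-p) t‖ ≤ dd p q t := by
  have e : fs q t + fs (-p) t = (((q - p) * Real.exp (-(Real.pi * q ^ 2 / 16) * t) -
    p * (Real.exp (-(Real.pi * p ^ 2 / 16) * t) - Real.exp (-(Real.pi * q ^ 2 / 16) * t)) : ℝ) : ℂ) := by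
    unfold fs
    push_cast
    rw [show -(Real.pi : ℂ) * q ^ 2 * t / 16 = -(Real.pi * q ^ 2 / 16) * t by ring,
      show -(Real.pi : ℂ) * (-p) ^ 2 * t / 16 = -(Real.pi * p ^ 2 / 16) * t by ring]
    ring
  rw [e, Complex.norm_real, Real.norm_eq_abs]
  have h1 : Real.exp (-(Real.pi * q ^ 2 / 16) * t) ≤ Real.exp (-(Real.pi * p ^ 2 / 16) * t) := by
    apply Real.exp_le_exp.mpr
    have := Real.pi_pos
    have : Real.pi * p ^ 2 ≤ Real.pi * q ^ 2 := by gcongr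
    nlinarith
  have h2 := Real.exp_pos (-(Real.pi * q ^ 2 / 16) * t)
  have a1 : 0 ≤ (q - p) * Real.exp (-(Real.pi * q ^ 2 / 16) * t) := mul_nonneg (by linarith) h2.le
  have a2 : 0 ≤ p * (Real.exp (-(Real.pi * p ^ 2 / 16) * t) - Real.exp (-(Real.pi * q ^ 2 / 16) * t)) :=
    mul_nonneg hp.le (by linarith)
  unfold dd
  rw [abs_le]; constructor <;> linarith

lemma dd_int {p q : ℝ} (hp : 0 < p) (hq : 0 < q) : IntegrableOn (dd p q) (Ioi 0) ∧
    ∫ t in Ioi (0:ℝ), dd p q t = 16 / Real.pi * ((q - p) / q ^ 2 + p * (1 / p ^ 2 - 1 / q ^ 2)) := by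
  have hpi := Real.pi_pos
  have n1 : -(Real.pi * q ^ 2 / 16) < 0 := by simp only [Left.neg_neg_iff]; positivity
  have n2 : -(Real.pi * p ^ 2 / 16) < 0 := by simp only [Left.neg_neg_iff]; positivity
  have i1 := integrableOn_exp_mul_Ioi n1 0
  have i2 := integrableOn_exp_mul_Ioi n2 0
  have i3 : IntegrableOn (fun t => Real.exp (-(Real.pi * p ^ 2 / 16) * t) - Real.exp (-(Real.pi * q ^ 2 / 16) * t)) (Ioi 0) :=
    i2.sub i1
  unfold dd
  refine ⟨(i1.const_mul _).add (i3.const_mul _), ?_⟩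
  rw [integral_add (i1.const_mul _) (i3.const_mul _), integral_const_mul, integral_const_mul,
    integral_sub i2 i1, integral_exp_mul_Ioi n1, integral_exp_mul_Ioi n2]
  simp only [mul_zero, Real.exp_zero]
  field_simp

lemma dd_le (n : ℕ) (hn : n ≠ 0) {a : ℝ} (ha : 0 < a) (ha3 : a ≤ 3) :
    IntegrableOn (dd (8 * n - a) (8 * n + a)) (Ioi 0) ∧
    ∫ t in Ioi (0:ℝ), dd (8 * n - a) (8 * n + a) t ≤ 16 / Real.pi * (1 / (n : ℝ) ^ 2) := by
  have hn1 : (1 : ℝ) ≤ n := by exact_mod_cast Nat.one_le_iff_ne_zero.mpr hn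
  have hp : 0 < 8 * (n : ℝ) - a := by linarith
  have hq : 0 < 8 * (n : ℝ) + a := by linarith
  obtain ⟨h1, h2⟩ := dd_int hp hq
  refine ⟨h1, ?_⟩
  rw [h2]
  have hpi := Real.pi_pos
  refine mul_le_mul_of_nonneg_left ?_ (by positivity)
  have hn0 : (0 : ℝ) < n := by linarith
  rw [show (8 * (n : ℝ) + a - (8 * n - a)) / (8 * n + a) ^ 2 + (8 * n - a) * (1 / (8 * n - a) ^ 2 - 1 / (8 * n + a) ^ 2)
    = (2 * a * (24 * n - a)) / ((8 * n - a) * (8 * n + a) ^ 2) by field_simp; ring]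
  rw [div_le_div_iff₀ (by positivity) (by positivity)]
  have k1 : 2 * a * (24 * n - a) ≤ 144 * n := by nlinarith
  have k2 : 5 * (n:ℝ) ≤ 8 * n - a := by linarith
  have k3 : 64 * (n:ℝ) ^ 2 ≤ (8 * n + a) ^ 2 := by nlinarith
  calc 2 * a * (24 * n - a) * (n:ℝ) ^ 2 ≤ 144 * n * (n:ℝ) ^ 2 := by gcongr
    _ ≤ (5 * n) * (64 * (n:ℝ) ^ 2) := by nlinarith [pow_pos hn0 3]
    _ ≤ _ := by rw [one_mul]; gcongr

lemma blk_norm_le (n : ℕ) (hn : n ≠ 0) :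
    ∫ t in Ioi (0:ℝ), ‖blk (gk t) n‖ ≤ 2 * (16 / Real.pi * (1 / (n : ℝ) ^ 2)) := by
  obtain ⟨i1, l1⟩ := dd_le n hn (a := 1) (by norm_num) (by norm_num)
  obtain ⟨i3, l3⟩ := dd_le n hn (a := 3) (by norm_num) (by norm_num)
  have hn1 : (1 : ℝ) ≤ n := by exact_mod_cast Nat.one_le_iff_ne_zero.mpr hn
  calc _ ≤ ∫ t in Ioi (0:ℝ), (dd (8 * n - 1) (8 * n + 1) t + dd (8 * n - 3) (8 * n + 3) t) := by
        refine setIntegral_mono_on (blk_int n).norm (i1.add i3) measurableSet_Ioi fun t ht => ?_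
        have e : blk (gk t) n = (-1) ^ n * ((fs (8 * n + 1) t + fs (-(8 * n - 1)) t) +
          I * (fs (8 * n + 3) t + fs (-(8 * n - 3)) t)) := by
          rw [blk, if_neg hn, gk, gk]
          push_cast
          rw [show (8 * -(n:ℝ) + 1) = -(8 * n - 1) by ring, show (8 * -(n:ℝ) + 3) = -(8 * n - 3) by ring]
          have : (-1 : ℂ) ^ (-(n : ℤ)) = (-1) ^ n := by simp [zpow_neg, ← inv_pow]
          rw [this, zpow_natCast]; ring
        rw [e, norm_mul]
        simp only [norm_pow, norm_neg, norm_one, one_pow, one_mul]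
        refine (norm_add_le _ _).trans ?_
        rw [norm_mul, norm_I, one_mul]
        exact add_le_add (norm_fs_sub (by linarith) (by linarith) ht) (norm_fs_sub (by linarith) (by linarith) ht)
    _ ≤ _ := by
        rw [integral_add i1 i3]; linarith

lemma blk_summable : Summable fun n => ∫ t in Ioi (0:ℝ), ‖blk (gk t) n‖ := by
  rw [← summable_nat_add_iff 1]
  have : Summable fun n : ℕ => 2 * (16 / Real.pi * (1 / ((n + 1 : ℕ) : ℝ) ^ 2)) :=
    (((summable_nat_add_iff 1).mpr (Real.summable_one_div_nat_pow.mpr one_lt_two)).mul_left _).mul_left _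
  exact Summable.of_nonneg_of_le (fun n => integral_nonneg fun _ => norm_nonneg _)
    (fun n => blk_norm_le (n + 1) (by omega)) this

end

section
open Complex
open MeasureTheory Set

lemma ic_mem {a : ℝ} (h0 : 0 < a) (h8 : a < 8) (x : ℝ) : ((a : ℂ) + 4 * I * x) / 8 ∈ Complex.integerComplement := by
  rintro ⟨n, hn⟩
  have h := congrArg Complex.re hn
  have e : (((a : ℂ) + 4 * I * x) / 8).re = a / 8 := by
    have : ((a : ℂ) + 4 * I * x) / 8 = ((a / 8 : ℝ) : ℂ) + ((x / 2 : ℝ) : ℂ) * I := by push_cast; ring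
    rw [this]; simp
  rw [e] at h
  simp only [intCast_re] at h
  have h1 : (0 : ℝ) < n := by rw [h]; positivity
  have h2 : (n : ℝ) < 1 := by rw [h]; linarith
  have h3 : 0 < n := by exact_mod_cast h1
  have h4 : n < 1 := by exact_mod_cast h2
  omega

noncomputable def csp (a x : ℝ) : ℂ :=
  1 / sin (Real.pi * (((a : ℂ) + 4 * I * x) / 8)) + 1 / sin (Real.pi * (((a : ℂ) + 4 * I * (-x : ℝ)) / 8))

lemma frac_id {s x : ℝ} (hs : s ≠ 0) :
    (1 / 16 : ℂ) * (1 / (((s : ℂ) + 4 * I * x) / 8) + 1 / (((s : ℂ) + 4 * I * (-x : ℝ)) / 8)) =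
     s / (s ^ 2 + 16 * x ^ 2) := by
  have hpos : s ^ 2 + 16 * x ^ 2 ≠ 0 := by positivity
  have h2 : (s : ℂ) ^ 2 + 16 * (x : ℂ) ^ 2 ≠ 0 := by exact_mod_cast hpos
  have hf : (s : ℂ) ^ 2 + 16 * (x : ℂ) ^ 2 = ((s : ℂ) + 4 * I * x) * ((s : ℂ) + 4 * I * (-x : ℝ)) := by
    push_cast; linear_combination (16 * (x:ℂ) ^ 2) * I_sq
  have h3 : ((s : ℂ) + 4 * I * x) ≠ 0 := fun h => h2 (by rw [hf, h, zero_mul])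
  have h4 : ((s : ℂ) + 4 * I * (-x : ℝ)) ≠ 0 := fun h => h2 (by rw [hf, h, mul_zero])
  rw [hf]
  field_simp
  push_cast
  ring

lemma frac_hasSum {a : ℝ} (h0 : 0 < a) (h8 : a < 8) (hne : ∀ k : ℤ, 8 * (k:ℝ) + a ≠ 0) (x : ℝ) :
    HasSum (fun n : ℕ => (-1 : ℂ) ^ n * ((((8 * (n : ℤ) + a : ℝ)) : ℂ) / (((8 * (n : ℤ) + a : ℝ) : ℂ) ^ 2 + 16 * x ^ 2) +
      (((8 * ((-n : ℤ) : ℤ) + a : ℝ)) : ℂ) / (((8 * ((-n : ℤ) : ℤ) + a : ℝ) : ℂ) ^ 2 + 16 * x ^ 2)))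
      (Real.pi / 16 * csp a x + a / (a ^ 2 + 16 * x ^ 2)) := by
  have h := ((csc_hasSum (ic_mem h0 h8 x)).add (csc_hasSum (ic_mem h0 h8 (-x)))).mul_left (1 / 16)
  refine hasSum_of_eq h (fun n => ?_) ?_
  · rw [← frac_id (hne _), ← frac_id (hne _)]
    rw [show (((8 * (n : ℤ) + a : ℝ) : ℂ) + 4 * I * x) / 8 = ((a : ℂ) + 4 * I * x) / 8 + n by push_cast; ring,
      show (((8 * (n : ℤ) + a : ℝ) : ℂ) + 4 * I * (-x : ℝ)) / 8 = ((a : ℂ) + 4 * I * (-x : ℝ)) / 8 + n by push_cast; ring,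
      show (((8 * ((-n : ℤ) : ℤ) + a : ℝ) : ℂ) + 4 * I * x) / 8 = ((a : ℂ) + 4 * I * x) / 8 - n by push_cast; ring,
      show (((8 * ((-n : ℤ) : ℤ) + a : ℝ) : ℂ) + 4 * I * (-x : ℝ)) / 8 = ((a : ℂ) + 4 * I * (-x : ℝ)) / 8 - n by push_cast; ring]
    ring
  · rw [← frac_id h0.ne']; unfold csp; ring

noncomputable def gg (x : ℝ) : ℂ := exp (-Real.pi * x / 2) / cosh (Real.pi * (x + I / 4))

lemma csp_eq (x : ℝ) : csp 1 x + I * csp 3 x = 2 * exp (Real.pi * I / 8) * (gg x + gg (-x)) := by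
  have n1 := sin_pi_mul_ne_zero (ic_mem (a := 1) (by norm_num) (by norm_num) x)
  have n2 := sin_pi_mul_ne_zero (ic_mem (a := 1) (by norm_num) (by norm_num) (-x))
  have n3 := sin_pi_mul_ne_zero (ic_mem (a := 3) (by norm_num) (by norm_num) x)
  have n4 := sin_pi_mul_ne_zero (ic_mem (a := 3) (by norm_num) (by norm_num) (-x))
  unfold csp gg
  set A := exp (Real.pi * I / 8) with hA
  set y := exp (Real.pi * x / 2) with hy
  have hA0 : A ≠ 0 := Complex.exp_ne_zero _
  have hy0 : y ≠ 0 := Complex.exp_ne_zero _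
  have A4 : A ^ 4 = I := by
    rw [hA, ← Complex.exp_nat_mul]
    refine Eq.trans ?_ Complex.exp_pi_div_two_mul_I; congr 1; push_cast; ring
  have es : ∀ k : ℕ, ∀ x' : ℝ, sin (Real.pi * ((((k : ℝ) : ℂ) + 4 * I * x') / 8)) =
      ((A ^ k)⁻¹ * exp (Real.pi * x' / 2) - A ^ k * (exp (Real.pi * x' / 2))⁻¹) * I / 2 := by
    intro k x'
    rw [Complex.sin, hA, ← Complex.exp_nat_mul, ← Complex.exp_neg, ← Complex.exp_neg, ← Complex.exp_add,
      ← Complex.exp_add]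
    congr 4
    · push_cast; linear_combination (-(Real.pi:ℂ) * x' / 2) * I_sq
    · push_cast; linear_combination ((Real.pi:ℂ) * x' / 2) * I_sq
  have hneg : exp (Real.pi * ((-x : ℝ) : ℂ) / 2) = y⁻¹ := by
    rw [hy, ← Complex.exp_neg]; congr 1; push_cast; ring
  have e1 := es 1 x
  have e2 := es 1 (-x)
  have e3 := es 3 x
  have e4 := es 3 (-x)
  rw [hneg] at e2 e4
  rw [← hy] at e1 e3
  simp only [Nat.cast_one, Nat.cast_ofNat, pow_one] at e1 e2 e3 e4
  rw [e1] at n1 ⊢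
  rw [e2] at n2 ⊢
  rw [e3] at n3 ⊢
  rw [e4] at n4 ⊢
  have c1 : cosh (Real.pi * (x + I / 4)) = (y ^ 2 * A ^ 2 + (y ^ 2 * A ^ 2)⁻¹) / 2 := by
    rw [Complex.cosh, hA, hy, ← Complex.exp_nat_mul, ← Complex.exp_nat_mul, ← Complex.exp_add, ← Complex.exp_neg]
    congr 3 <;> (push_cast; ring)
  have c2 : cosh (Real.pi * ((-x : ℝ) + I / 4)) = ((y ^ 2)⁻¹ * A ^ 2 + ((y ^ 2)⁻¹ * A ^ 2)⁻¹) / 2 := by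
    rw [Complex.cosh, hA, hy, ← Complex.exp_nat_mul, ← Complex.exp_nat_mul, ← Complex.exp_neg, ← Complex.exp_add, ← Complex.exp_neg]
    congr 3 <;> (push_cast; ring)
  have d1 : exp (-Real.pi * x / 2) = y⁻¹ := by rw [hy, ← Complex.exp_neg]; congr 1; ring
  have d2 : exp (-Real.pi * (-x : ℝ) / 2) = y := by rw [hy]; congr 1; push_cast; ring
  rw [c1, c2, d1, d2]
  clear_value A y
  clear hA hy es e1 e2 e3 e4 c1 c2 d1 d2 hneg
  have A8 : A ^ 8 = -1 := by linear_combination (A ^ 4 + I) * A4 + I_sq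
  rw [← A4] at n1 n2 n3 n4 ⊢
  have r1 : (A⁻¹ * y - A * y⁻¹) * A ^ 4 / 2 = -(A ^ 5) / (2 * y) * (1 + A ^ 6 * y ^ 2) := by
    field_simp
    linear_combination (y ^ 2) * A8
  have r2 : (A⁻¹ * y⁻¹ - A * y⁻¹⁻¹) * A ^ 4 / 2 = -(A ^ 5) / (2 * y) * (y ^ 2 + A ^ 6) := by
    field_simp
    linear_combination A8
  have r3 : ((A ^ 3)⁻¹ * y - A ^ 3 * y⁻¹) * A ^ 4 / 2 = A / (2 * y) * (y ^ 2 - A ^ 6) := by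
    field_simp
  have r4 : ((A ^ 3)⁻¹ * y⁻¹ - A ^ 3 * y⁻¹⁻¹) * A ^ 4 / 2 = A / (2 * y) * (1 - A ^ 6 * y ^ 2) := by
    field_simp
  have r5 : (y ^ 2 * A ^ 2 + (y ^ 2 * A ^ 2)⁻¹) / 2 = (1 + A ^ 6 * y ^ 2) * (1 - A ^ 6 * y ^ 2) / (2 * y ^ 2 * A ^ 2) := by
    field_simp
    linear_combination (y ^ 4 * A ^ 4) * A8
  have r6 : ((y ^ 2)⁻¹ * A ^ 2 + ((y ^ 2)⁻¹ * A ^ 2)⁻¹) / 2 = (y ^ 2 + A ^ 6) * (y ^ 2 - A ^ 6) / (2 * y ^ 2 * A ^ 2) := by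
    field_simp
    linear_combination (A ^ 4) * A8
  rw [r1] at n1
  rw [r2] at n2
  rw [r3] at n3
  rw [r4] at n4
  rw [r1, r2, r3, r4, r5, r6]
  have m1 := right_ne_zero_of_mul n1
  have m2 := right_ne_zero_of_mul n2
  have m3 := right_ne_zero_of_mul n3
  have m4 := right_ne_zero_of_mul n4
  have A5 : -(A ^ 5) = 1 / A ^ 3 := by field_simp; linear_combination -A8
  rw [A5]
  field_simp
  ring

end

section
open Complex
open MeasureTheory Set

lemma Lk_sum (x : ℝ) : HasSum (blk (Lk x)) (2 * exp (Real.pi * I / 8) * (gg x + gg (-x))) := by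
  have h1 := frac_hasSum (a := 1) (by norm_num) (by norm_num) (fun k => s1_ne k) x
  have h3 := frac_hasSum (a := 3) (by norm_num) (by norm_num) (fun k => s3_ne k) x
  have h := (h1.add (h3.mul_left I)).mul_left (16 / (Real.pi : ℂ))
  have hpi : (Real.pi : ℂ) ≠ 0 := by exact_mod_cast Real.pi_pos.ne'
  refine hasSum_blk' (hasSum_of_eq h (fun n => ?_) rfl) ?_
  · unfold Lk
    have : (-1 : ℂ) ^ (-(n : ℤ)) = (-1) ^ n := by simp [zpow_neg, ← inv_pow]
    rw [this, zpow_natCast]; ring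
  · rw [← csp_eq]
    unfold Lk
    simp only [zpow_zero, Int.cast_zero, mul_zero, zero_add]
    have : 16 / (Real.pi : ℂ) * (Real.pi / 16) = 1 := by field_simp
    linear_combination (csp 1 x + I * csp 3 x) * this

lemma gauss_le {a : ℝ} (ha : 0 < a) (c x : ℝ) :
    Real.exp (-a * x ^ 2) * Real.exp (c * |x|) ≤ Real.exp (c ^ 2 / (2 * a)) * Real.exp (-(a / 2) * x ^ 2) := by
  rw [← Real.exp_add, ← Real.exp_add]
  apply Real.exp_le_exp.mpr
  have h : 0 ≤ (a * |x| - c) ^ 2 / (2 * a) := by positivity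
  have e : (a * |x| - c) ^ 2 / (2 * a) = a / 2 * x ^ 2 - c * |x| + c ^ 2 / (2 * a) := by
    rw [← sq_abs x]; field_simp; ring
  linarith

lemma gauss_int {a : ℝ} (ha : 0 < a) (c : ℝ) :
    Integrable fun x : ℝ => Real.exp (-a * x ^ 2) * Real.exp (c * |x|) := by
  refine ((integrable_exp_neg_mul_sq (b := a / 2) (by positivity)).const_mul (Real.exp (c ^ 2 / (2 * a)))).mono' ?_ ?_
  · apply Continuous.aestronglyMeasurable; fun_prop
  · refine Filter.Eventually.of_forall fun x => ?_
    rw [Real.norm_of_nonneg (by positivity)]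
    exact gauss_le ha c x

lemma norm_cosh_sq (x y : ℝ) : ‖cosh (x + y * I)‖ ^ 2 = Real.sinh x ^ 2 + Real.cos y ^ 2 := by
  rw [Complex.cosh_add, Complex.cosh_mul_I, Complex.sinh_mul_I, ← ofReal_cosh, ← ofReal_cos, ← ofReal_sinh, ← ofReal_sin,
    ← Complex.normSq_eq_norm_sq]
  have : (Real.cosh x : ℂ) * Real.cos y + Real.sinh x * (Real.sin y * I) =
    ((Real.cosh x * Real.cos y : ℝ) : ℂ) + ((Real.sinh x * Real.sin y : ℝ) : ℂ) * I := by push_cast; ring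
  rw [this, Complex.normSq_add_mul_I]
  have h1 := Real.cosh_sq x
  have h2 := Real.sin_sq_add_cos_sq y
  linear_combination (Real.cos y ^ 2) * h1 + Real.sinh x ^ 2 * h2

lemma sinh_le_cosh (x y : ℝ) : |Real.sinh x| ≤ ‖cosh (x + y * I)‖ := by
  refine abs_le_of_sq_le_sq ?_ (norm_nonneg _)
  rw [norm_cosh_sq]; nlinarith [sq_nonneg (Real.cos y)]

lemma cos_le_cosh (x y : ℝ) : |Real.cos y| ≤ ‖cosh (x + y * I)‖ := by
  refine abs_le_of_sq_le_sq ?_ (norm_nonneg _)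
  rw [norm_cosh_sq]; nlinarith [sq_nonneg (Real.sinh x)]

lemma norm_gauss (T : ℂ) (x : ℝ) : ‖exp (Real.pi * I * T * x ^ 2)‖ = Real.exp (-(Real.pi * T.im) * x ^ 2) := by
  rw [Complex.norm_exp]; congr 1
  have : (Real.pi * I * T * (x:ℂ) ^ 2) = ((Real.pi * x ^ 2 : ℝ) : ℂ) * (I * T) := by push_cast; ring
  rw [this, Complex.re_ofReal_mul]; simp; ring

lemma gg_int {T : ℂ} (hT : 0 < T.im) : Integrable fun x : ℝ => gg x * exp (Real.pi * I * T * x ^ 2) := by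
  have hpi := Real.pi_pos
  have hc : ∀ x : ℝ, Real.sqrt 2 / 2 ≤ ‖cosh (Real.pi * ((x : ℂ) + I / 4))‖ := by
    intro x
    have := cos_le_cosh (Real.pi * x) (Real.pi / 4)
    rw [Real.cos_pi_div_four, abs_of_pos (by positivity)] at this
    convert this using 3
    push_cast; ring
  have hne : ∀ x : ℝ, cosh (Real.pi * ((x : ℂ) + I / 4)) ≠ 0 := by
    intro x h
    have := hc x
    rw [h, norm_zero] at this
    have : 0 < Real.sqrt 2 / 2 := by positivity
    linarith
  refine ((gauss_int (a := Real.pi * T.im) (by positivity) (Real.pi / 2)).const_mul (2 / Real.sqrt 2)).mono' ?_ ?_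
  · apply Continuous.aestronglyMeasurable
    unfold gg
    refine Continuous.mul (Continuous.div ?_ ?_ hne) ?_ <;> fun_prop
  · refine Filter.Eventually.of_forall fun x => ?_
    rw [norm_mul, norm_gauss, gg, norm_div, Complex.norm_exp]
    have e1 : (-(Real.pi : ℂ) * x / 2).re = -(Real.pi * x / 2) := by
      rw [show (-(Real.pi : ℂ) * x / 2) = ((-(Real.pi * x / 2) : ℝ) : ℂ) by push_cast; ring, ofReal_re]
    rw [e1]
    have e2 : Real.exp (-(Real.pi * x / 2)) ≤ Real.exp (Real.pi / 2 * |x|) := by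
      apply Real.exp_le_exp.mpr
      have := neg_abs_le x
      nlinarith
    have e3 : Real.exp (-(Real.pi * x / 2)) / ‖cosh (Real.pi * ((x : ℂ) + I / 4))‖ ≤ Real.exp (Real.pi / 2 * |x|) / (Real.sqrt 2 / 2) := by
      gcongr
      exact hc x
    calc _ ≤ Real.exp (Real.pi / 2 * |x|) / (Real.sqrt 2 / 2) * Real.exp (-(Real.pi * T.im) * x ^ 2) := by gcongr
      _ = _ := by field_simp

lemma gauss_cint {T : ℂ} (hT : 0 < T.im) : Integrable fun x : ℝ => exp (Real.pi * I * T * x ^ 2) := by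
  have hpi := Real.pi_pos
  refine (integrable_exp_neg_mul_sq (b := Real.pi * T.im) (by positivity)).mono' ?_ ?_
  · apply Continuous.aestronglyMeasurable; fun_prop
  · exact Filter.Eventually.of_forall fun x => (norm_gauss T x).le

lemma kernel_eq {T : ℂ} (hT : 0 < T.im) {t : ℝ} (ht : 0 < t) :
    ∫ x : ℝ, exp (-Real.pi * x ^ 2 * t) * exp (Real.pi * I * T * x ^ 2) = 1 / (t - I * T) ^ ((1 : ℂ) / 2) := by
  have hpi := Real.pi_pos
  have hre : 0 < (t - I * T).re := by simp; linarith
  have hb : 0 < ((Real.pi : ℂ) * (t - I * T)).re := by rw [Complex.re_ofReal_mul]; positivity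
  have hne : (t - I * T) ≠ 0 := fun h => by rw [h] at hre; simp at hre
  have := integral_gaussian_complex hb
  have hpc : (Real.pi : ℂ) ≠ 0 := by exact_mod_cast hpi.ne'
  rw [show (Real.pi : ℂ) / (Real.pi * (t - I * T)) = (t - I * T)⁻¹ by field_simp,
    Complex.inv_cpow _ _ (by
      intro h
      have := Complex.abs_arg_lt_pi_div_two_iff.mpr (Or.inl hre)
      rw [h, abs_of_pos hpi] at this; linarith)] at this
  rw [one_div ((t - I * T) ^ ((1 : ℂ) / 2)), ← this]
  congr 1; funext x
  rw [← Complex.exp_add]; congr 1; ring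

lemma rhs_eval {τ : ℂ} (hτ : 0 < τ.im) :
    -(I/8) * (I * ∫ t in Set.Ioi (0 : ℝ),
          E2fun ((1 + I * t) / 32) / ((-I * (1 + I * t + τ)) ^ ((1 : ℂ)/2))) =
    1 / 2 * exp (3 * Real.pi * I / 16) * ∫ x : ℝ, gg x * exp (Real.pi * I * (τ + 1) * x ^ 2) := by
  have hT : 0 < (τ + 1).im := by simpa using hτ
  have e1 : ∫ t in Set.Ioi (0 : ℝ), E2fun ((1 + I * t) / 32) / ((-I * (1 + I * t + τ)) ^ ((1 : ℂ)/2)) =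
      ∫ t in Set.Ioi (0 : ℝ), exp (Real.pi * I / 16) * ((∑' n, blk (gk t) n) *
        ∫ x : ℝ, exp (-Real.pi * x ^ 2 * t) * exp (Real.pi * I * (τ + 1) * x ^ 2)) := by
    refine setIntegral_congr_fun measurableSet_Ioi fun t ht => ?_
    have ht' : 0 < t := ht
    rw [kernel_eq hT ht']
    have h1 := E2_hasSum ht'
    have h2 : HasSum (gk t) (E2fun ((1 + I * t) / 32) / exp (Real.pi * I / 16)) :=
      hasSum_of_eq (h1.div_const (exp (Real.pi * I / 16))) (fun k => by
        rw [mul_div_cancel_left₀ _ (Complex.exp_ne_zero _)]) rfl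
    rw [(hasSum_blk h2).tsum_eq]
    rw [show -I * (1 + I * (t:ℂ) + τ) = t - I * (τ + 1) by linear_combination (-(t:ℂ)) * I_sq]
    have := Complex.exp_ne_zero (Real.pi * I / 16)
    rw [← mul_assoc, mul_div_cancel₀ _ this]
    ring
  rw [e1, integral_const_mul, swap_lemma blk_int blk_summable (gauss_cint hT) blk_laplace]
  have hgi := gg_int hT
  have e2 : ∫ x : ℝ, (∑' n, blk (Lk x) n) * exp (Real.pi * I * (τ + 1) * x ^ 2) =
      2 * exp (Real.pi * I / 8) * (2 * ∫ x : ℝ, gg x * exp (Real.pi * I * (τ + 1) * x ^ 2)) := by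
    simp only [(Lk_sum _).tsum_eq]
    have e3 : ∫ x : ℝ, gg (-x) * exp (Real.pi * I * (τ + 1) * x ^ 2) =
        ∫ x : ℝ, gg x * exp (Real.pi * I * (τ + 1) * x ^ 2) := by
      rw [← integral_neg_eq_self]
      simp
    have hgi2 : Integrable fun x : ℝ => gg (-x) * exp (Real.pi * I * (τ + 1) * x ^ 2) := by
      have := hgi.comp_neg
      simpa using this
    rw [two_mul (∫ x : ℝ, gg x * exp (Real.pi * I * (τ + 1) * x ^ 2))]
    nth_rewrite 2 [← e3]
    rw [← integral_add hgi hgi2, ← integral_const_mul]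
    congr 1; funext x; ring
  rw [e2]
  have e4 : exp (3 * Real.pi * I / 16) = exp (Real.pi * I / 16) * exp (Real.pi * I / 8) := by
    rw [← Complex.exp_add]; congr 1; ring
  rw [e4]
  linear_combination (-(1/2) * exp (Real.pi * I / 16) * exp (Real.pi * I / 8) * ∫ x : ℝ, gg x * exp (Real.pi * I * (τ + 1) * x ^ 2)) * I_sq

end

section
open Complex
open MeasureTheory Set Filter Topology

lemma shift_lemma {f : ℂ → ℂ} {a : ℝ} (ha : 0 ≤ a)
    (hd : ∀ z : ℂ, 0 ≤ z.im → z.im ≤ a → DifferentiableAt ℂ f z) {B : ℝ → ℝ}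
    (hB : ∀ x y : ℝ, 0 ≤ y → y ≤ a → 1 ≤ |x| → ‖f (x + y * I)‖ ≤ B |x|)
    (hBt : Tendsto B atTop (𝓝 0))
    (h0 : Integrable fun x : ℝ => f x) (h1 : Integrable fun x : ℝ => f (x + a * I)) :
    ∫ x : ℝ, f x = ∫ x : ℝ, f (x + a * I) := by
  have t0 := intervalIntegral_tendsto_integral h0 tendsto_neg_atTop_atBot tendsto_id
  have t1 := intervalIntegral_tendsto_integral h1 tendsto_neg_atTop_atBot tendsto_id
  have key : ∀ᶠ R : ℝ in atTop, ‖(∫ x in (-R)..R, f x) - ∫ x in (-R)..R, f (x + a * I)‖ ≤ 2 * (B R * a) := by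
    filter_upwards [eventually_ge_atTop (1 : ℝ)] with R hR
    have hR0 : 0 ≤ R := by linarith
    have c := Complex.integral_boundary_rect_eq_zero_of_differentiableOn f ((-R : ℝ) : ℂ) (R + a * I) (by
      intro z hz
      rw [mem_reProdIm] at hz
      have h2 := hz.2
      simp [uIcc_of_le ha] at h2
      exact (hd z h2.1 h2.2).differentiableWithinAt)
    simp only [ofReal_re, ofReal_im, add_re, add_im, mul_re, mul_im, I_re, I_im, mul_zero, mul_one, zero_mul,
      sub_zero, add_zero, zero_add, ofReal_zero, smul_eq_mul] at c
    have v1 : ‖∫ y in (0:ℝ)..a, f (R + y * I)‖ ≤ B R * |a - 0| := by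
      refine intervalIntegral.norm_integral_le_of_norm_le_const fun y hy => ?_
      rw [uIoc_of_le ha] at hy
      have := hB R y hy.1.le hy.2 (by rwa [abs_of_nonneg hR0])
      rwa [abs_of_nonneg hR0] at this
    have v2 : ‖∫ y in (0:ℝ)..a, f ((-R : ℝ) + y * I)‖ ≤ B R * |a - 0| := by
      refine intervalIntegral.norm_integral_le_of_norm_le_const fun y hy => ?_
      rw [uIoc_of_le ha] at hy
      have := hB (-R) y hy.1.le hy.2 (by rwa [abs_neg, abs_of_nonneg hR0])
      rwa [abs_neg, abs_of_nonneg hR0] at this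
    rw [sub_zero, abs_of_nonneg ha] at v1 v2
    have e : (∫ x in (-R)..R, f x) - ∫ x in (-R)..R, f (x + a * I) =
      I * (∫ y in (0:ℝ)..a, f ((-R : ℝ) + y * I)) - I * ∫ y in (0:ℝ)..a, f (R + y * I) := by
      linear_combination c
    rw [e]
    refine (norm_sub_le _ _).trans ?_
    rw [norm_mul, norm_mul, norm_I]; linarith
  have lim : Tendsto (fun R : ℝ => (∫ x in (-R)..R, f x) - ∫ x in (-R)..R, f (x + a * I)) atTop (𝓝 0) := by
    refine squeeze_zero_norm' key ?_
    simpa using ((hBt.mul_const a).const_mul 2)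
  have := tendsto_nhds_unique (t0.sub t1) lim
  exact sub_eq_zero.mp this

noncomputable def NN (T z : ℂ) (w : ℂ) : ℂ := exp (Real.pi * I * T * w ^ 2 - 2 * Real.pi * z * w)

noncomputable def hh (T z : ℂ) : ℂ := ∫ x : ℝ, NN T z x / cosh (Real.pi * x)

lemma NN_norm_le (T z : ℂ) (x y : ℝ) (hy0 : 0 ≤ y) (hy : y ≤ 1) :
    ‖NN T z (x + y * I)‖ ≤ Real.exp (Real.pi * (|T.im| + 2 * ‖z‖)) *
      (Real.exp (-(Real.pi * T.im) * x ^ 2) * Real.exp (2 * Real.pi * (‖T‖ + ‖z‖) * |x|)) := by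
  have hpi := Real.pi_pos
  rw [NN, Complex.norm_exp, ← Real.exp_add, ← Real.exp_add]
  apply Real.exp_le_exp.mpr
  have e : (Real.pi * I * T * ((x:ℂ) + y * I) ^ 2 - 2 * Real.pi * z * (x + y * I)).re =
    Real.pi * (-(T.im) * x ^ 2 + T.im * y ^ 2 - 2 * T.re * x * y - 2 * z.re * x + 2 * z.im * y) := by
    have : (Real.pi * I * T * ((x:ℂ) + y * I) ^ 2 - 2 * Real.pi * z * (x + y * I)) =
      ((Real.pi : ℝ) : ℂ) * (I * T * ((x ^ 2 - y ^ 2 : ℝ) + (2 * x * y : ℝ) * I) - 2 * z * (x + y * I)) := by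
      push_cast; linear_combination (Real.pi * I * T * y ^ 2) * I_sq
    have aux : ∀ p q : ℝ, (I * T * ((p:ℂ) + (q:ℂ) * I) - 2 * z * (x + y * I)).re =
        -(T.im) * p - T.re * q - 2 * z.re * x + 2 * z.im * y := by
      intro p q; simp; ring
    rw [this, Complex.re_ofReal_mul, aux]
    ring
  rw [e]
  have a1 : T.im * y ^ 2 ≤ |T.im| := by
    calc T.im * y ^ 2 ≤ |T.im| * 1 := by
          apply mul_le_mul (le_abs_self _) (by nlinarith) (by positivity) (abs_nonneg _)
      _ = _ := mul_one _
  have a2 : -(T.re * x * y) ≤ ‖T‖ * |x| := by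
    calc -(T.re * x * y) ≤ |T.re * x * y| := neg_le_abs _
      _ = |T.re| * |x| * y := by rw [abs_mul, abs_mul, abs_of_nonneg hy0]
      _ ≤ |T.re| * |x| * 1 := by gcongr
      _ ≤ _ := by rw [mul_one]; gcongr; exact Complex.abs_re_le_norm T
  have a3 : -(z.re * x) ≤ ‖z‖ * |x| := by
    calc -(z.re * x) ≤ |z.re * x| := neg_le_abs _
      _ = |z.re| * |x| := abs_mul _ _
      _ ≤ _ := by gcongr; exact Complex.abs_re_le_norm z
  have a4 : z.im * y ≤ ‖z‖ := by
    calc z.im * y ≤ |z.im| * 1 := by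
          apply mul_le_mul (le_abs_self _) hy hy0 (abs_nonneg _)
      _ ≤ _ := by rw [mul_one]; exact Complex.abs_im_le_norm z
  have : -(T.im) * x ^ 2 + T.im * y ^ 2 - 2 * T.re * x * y - 2 * z.re * x + 2 * z.im * y ≤
    (|T.im| + 2 * ‖z‖) + (-(T.im) * x ^ 2 + 2 * (‖T‖ + ‖z‖) * |x|) := by linarith
  calc _ ≤ Real.pi * ((|T.im| + 2 * ‖z‖) + (-(T.im) * x ^ 2 + 2 * (‖T‖ + ‖z‖) * |x|)) := by gcongr
    _ = _ := by ring

lemma cosh_pi_ge (x : ℝ) : 1 ≤ ‖cosh ((Real.pi : ℂ) * x)‖ := by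
  have := cos_le_cosh (Real.pi * x) 0
  simpa using this

lemma cosh_pi_ne (x : ℝ) : cosh ((Real.pi : ℂ) * x) ≠ 0 := by
  intro h; have := cosh_pi_ge x; rw [h, norm_zero] at this; linarith

lemma hh_int {T : ℂ} (hT : 0 < T.im) (z : ℂ) : Integrable fun x : ℝ => NN T z x / cosh (Real.pi * x) := by
  have hpi := Real.pi_pos
  refine ((gauss_int (a := Real.pi * T.im) (by positivity) (2 * Real.pi * (‖T‖ + ‖z‖))).const_mul
    (Real.exp (Real.pi * (|T.im| + 2 * ‖z‖)))).mono' ?_ ?_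
  · apply Continuous.aestronglyMeasurable
    unfold NN
    refine Continuous.div ?_ ?_ cosh_pi_ne <;> fun_prop
  · refine Eventually.of_forall fun x => ?_
    rw [norm_div]
    refine (div_le_self (norm_nonneg _) (cosh_pi_ge x)).trans ?_
    have := NN_norm_le T z x 0 le_rfl zero_le_one
    simpa using this

lemma NN_int {T : ℂ} (hT : 0 < T.im) (z : ℂ) : Integrable fun x : ℝ => NN T z x := by
  have hpi := Real.pi_pos
  refine ((gauss_int (a := Real.pi * T.im) (by positivity) (2 * Real.pi * (‖T‖ + ‖z‖))).const_mul
    (Real.exp (Real.pi * (|T.im| + 2 * ‖z‖)))).mono' ?_ ?_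
  · apply Continuous.aestronglyMeasurable
    unfold NN
    fun_prop
  · refine Eventually.of_forall fun x => ?_
    have := NN_norm_le T z x 0 le_rfl zero_le_one
    simpa using this

end

section
open Complex
open MeasureTheory Set Filter Topology

lemma cosh_ge_one_add_sq (x : ℝ) : 1 + x ^ 2 ≤ Real.cosh (Real.pi * x) := by
  have h1 : Real.cosh (Real.pi * x) = 1 + 2 * Real.sinh (Real.pi * x / 2) ^ 2 := by
    have := Real.cosh_two_mul (Real.pi * x / 2)
    rw [show 2 * (Real.pi * x / 2) = Real.pi * x by ring, Real.cosh_sq] at this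
    linarith
  have h2 : (Real.pi * x / 2) ^ 2 ≤ Real.sinh (Real.pi * x / 2) ^ 2 := by
    apply sq_le_sq.mpr
    rw [Real.abs_sinh]
    exact Real.self_le_sinh_iff.mpr (abs_nonneg _)
  have h3 : 9 ≤ Real.pi ^ 2 := by nlinarith [Real.pi_gt_three]
  nlinarith [sq_nonneg x]

lemma inv_cosh_int : Integrable fun x : ℝ => 1 / Real.cosh (Real.pi * x) := by
  refine integrable_inv_one_add_sq.mono' ?_ ?_
  · apply Continuous.aestronglyMeasurable
    refine Continuous.div continuous_const (by fun_prop) (fun x => (Real.cosh_pos _).ne')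
  · refine Eventually.of_forall fun x => ?_
    rw [Real.norm_of_nonneg (by have := Real.cosh_pos (Real.pi * x); positivity), ← one_div]
    exact one_div_le_one_div_of_le (by positivity) (cosh_ge_one_add_sq x)

lemma integral_inv_cosh : ∫ x : ℝ, 1 / Real.cosh (Real.pi * x) = 1 := by
  have hpi := Real.pi_pos
  have hd : ∀ x : ℝ, HasDerivAt (fun x => (1 / Real.pi) * Real.arctan (Real.sinh (Real.pi * x))) (1 / Real.cosh (Real.pi * x)) x := by
    intro x
    have h0 : HasDerivAt (fun x : ℝ => Real.pi * x) Real.pi x := by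
      simpa using (hasDerivAt_id x).const_mul Real.pi
    have := ((h0.sinh).arctan).const_mul (1 / Real.pi)
    refine this.congr_deriv ?_
    have hc := Real.cosh_pos (Real.pi * x)
    rw [add_comm, ← Real.cosh_sq]
    field_simp
  have hs : Tendsto (fun x : ℝ => Real.sinh (Real.pi * x)) atTop atTop := by
    refine tendsto_atTop_mono' _ ?_ (tendsto_id.const_mul_atTop hpi)
    filter_upwards [eventually_ge_atTop (0:ℝ)] with x hx
    exact Real.self_le_sinh_iff.mpr (by simp; positivity)
  have hs' : Tendsto (fun x : ℝ => Real.sinh (Real.pi * x)) atBot atBot := by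
    have := tendsto_neg_atTop_atBot.comp (hs.comp tendsto_neg_atBot_atTop)
    refine this.congr fun x => ?_
    simp
  have t1 := ((tendsto_nhds_of_tendsto_nhdsWithin Real.tendsto_arctan_atTop).comp hs).const_mul (1 / Real.pi)
  have t2 := ((tendsto_nhds_of_tendsto_nhdsWithin Real.tendsto_arctan_atBot).comp hs').const_mul (1 / Real.pi)
  rw [integral_of_hasDerivAt_of_tendsto hd inv_cosh_int t2 t1]
  field_simp
  norm_num

lemma inv_cosh_cint : Integrable fun x : ℝ => 1 / cosh ((Real.pi : ℂ) * x) := by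
  have := inv_cosh_int.ofReal (𝕜 := ℂ)
  refine this.congr (Eventually.of_forall fun x => ?_)
  simp

lemma integral_inv_ccosh : ∫ x : ℝ, 1 / cosh ((Real.pi : ℂ) * x) = 1 := by
  have := congrArg (fun x : ℝ => (x : ℂ)) integral_inv_cosh
  simp only [ofReal_one] at this
  refine Eq.trans ?_ this
  rw [← integral_complex_ofReal]
  congr 1; ext x; simp

lemma hh_diff {T : ℂ} (hT : 0 < T.im) : Differentiable ℂ (hh T) := by
  intro z0
  have hpi := Real.pi_pos
  have := hasDerivAt_integral_of_dominated_loc_of_deriv_le (μ := volume) (𝕜 := ℂ) (x₀ := z0)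
    (F := fun z (x : ℝ) => NN T z x / cosh (Real.pi * x))
    (F' := fun z (x : ℝ) => (-2 * Real.pi * x) * NN T z x / cosh (Real.pi * x))
    (s := Metric.ball z0 1)
    (bound := fun x => (2 * Real.pi * Real.exp (Real.pi * (|T.im| + 2 * (‖z0‖ + 1)))) *
      (Real.exp (-(Real.pi * T.im) * x ^ 2) * Real.exp ((2 * Real.pi * (‖T‖ + (‖z0‖ + 1)) + 1) * |x|)))
    (Metric.ball_mem_nhds _ one_pos) (Eventually.of_forall fun z => (hh_int hT z).aestronglyMeasurable)
    (hh_int hT z0) ?_ ?_ ?_ ?_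
  · exact this.2.differentiableAt
  · apply Continuous.aestronglyMeasurable
    unfold NN
    refine Continuous.div ?_ ?_ cosh_pi_ne <;> fun_prop
  · refine Eventually.of_forall fun x z hz => ?_
    have hzn : ‖z‖ ≤ ‖z0‖ + 1 := by
      have h1 : ‖z - z0‖ < 1 := by simpa [dist_eq_norm] using hz
      have h2 := norm_add_le (z - z0) z0
      rw [sub_add_cancel] at h2; linarith
    rw [norm_div]
    refine (div_le_self (norm_nonneg _) (cosh_pi_ge x)).trans ?_
    have h := NN_norm_le T z x 0 le_rfl zero_le_one
    rw [ofReal_zero, zero_mul, add_zero] at h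
    rw [norm_mul]
    have e1 : ‖(-2 * Real.pi * x : ℂ)‖ = 2 * Real.pi * |x| := by
      simp [abs_of_pos hpi]
    rw [e1]
    have hx : |x| ≤ Real.exp |x| := by linarith [Real.add_one_le_exp |x|]
    calc 2 * Real.pi * |x| * ‖NN T z x‖ ≤ 2 * Real.pi * Real.exp |x| * (Real.exp (Real.pi * (|T.im| + 2 * ‖z‖)) *
      (Real.exp (-(Real.pi * T.im) * x ^ 2) * Real.exp (2 * Real.pi * (‖T‖ + ‖z‖) * |x|))) := by gcongr
      _ ≤ 2 * Real.pi * Real.exp |x| * (Real.exp (Real.pi * (|T.im| + 2 * (‖z0‖ + 1))) *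
      (Real.exp (-(Real.pi * T.im) * x ^ 2) * Real.exp (2 * Real.pi * (‖T‖ + (‖z0‖ + 1)) * |x|))) := by gcongr
      _ = _ := by rw [add_mul _ 1 |x|, Real.exp_add _ (1 * |x|), one_mul]; ring
  · exact (gauss_int (by positivity) _).const_mul _
  · refine Eventually.of_forall fun x z hz => ?_
    have h0 : HasDerivAt (fun z : ℂ => (Real.pi : ℂ) * I * T * (x:ℂ) ^ 2 - 2 * Real.pi * z * x) (-2 * (Real.pi : ℂ) * x) z := by
      have := (((hasDerivAt_id z).const_mul (2 * Real.pi : ℂ)).mul_const (x : ℂ)).const_sub (Real.pi * I * T * (x:ℂ) ^ 2)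
      have e : -(2 * (Real.pi:ℂ) * 1 * x) = -2 * Real.pi * x := by ring
      rw [e] at this
      exact this
    have := h0.cexp.div_const (cosh (Real.pi * x))
    refine this.congr_deriv ?_
    rw [NN]; ring

lemma hh_add_one {T : ℂ} (hT : 0 < T.im) (z : ℂ) :
    hh T z + hh T (z + 1) = 2 / (-I * T) ^ (1 / 2 : ℂ) * exp (Real.pi * I * (z + 1 / 2) ^ 2 / T) := by
  have hpi := Real.pi_pos
  have hpi' : (Real.pi : ℂ) ≠ 0 := by exact_mod_cast hpi.ne'
  have hT0 : T ≠ 0 := by rintro rfl; simp at hT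
  rw [hh, hh, ← integral_add (hh_int hT z) (hh_int hT _)]
  have e : ∀ x : ℝ, NN T z x / cosh (Real.pi * x) + NN T (z + 1) x / cosh (Real.pi * x) =
      2 * exp ((Real.pi * I * T) * x ^ 2 + (-2 * Real.pi * (z + 1 / 2)) * x + 0) := by
    intro x
    rw [← add_div, div_eq_iff (cosh_pi_ne x), Complex.cosh, NN, NN]
    have q : ∀ A B C : ℂ, 2 * A * ((B + C) / 2) = A * B + A * C := by intros; ring
    rw [q, ← exp_add, ← exp_add]
    congr 2 <;> ring
  simp_rw [e]
  rw [integral_const_mul, integral_cexp_quadratic (by simp; positivity)]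
  have hre : 0 < (-I * T).re := by simpa using hT
  have harg : (-I * T).arg ≠ Real.pi := by
    have := (abs_arg_lt_pi_div_two_iff (z := -I * T)).mpr (Or.inl hre)
    rw [abs_lt] at this
    linarith
  have e1 : (Real.pi : ℂ) / -(Real.pi * I * T) = (-I * T)⁻¹ := by
    rw [div_eq_iff (by simp [hT0])]
    field_simp
  rw [e1, inv_cpow _ _ harg]
  have e2 : (0 - (-2 * (Real.pi:ℂ) * (z + 1 / 2)) ^ 2 / (4 * (Real.pi * I * T))) = Real.pi * I * (z + 1 / 2) ^ 2 / T := by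
    field_simp
    rw [I_sq]; ring
  rw [e2]
  ring

lemma cosh_pi_strip {w : ℂ} (h0 : 0 ≤ w.im) (h1 : w.im ≤ 1) (h : cosh (Real.pi * w) = 0) : w = I / 2 := by
  have hpi := Real.pi_pos
  have := norm_cosh_sq (Real.pi * w.re) (Real.pi * w.im)
  have e : ((Real.pi * w.re : ℝ) : ℂ) + (Real.pi * w.im : ℝ) * I = Real.pi * w := by
    push_cast; conv_rhs => rw [← re_add_im w]
    ring
  rw [e, h, norm_zero] at this
  have s1 : Real.sinh (Real.pi * w.re) = 0 := by nlinarith [sq_nonneg (Real.sinh (Real.pi * w.re)), sq_nonneg (Real.cos (Real.pi * w.im))]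
  have s2 : Real.cos (Real.pi * w.im) = 0 := by nlinarith [sq_nonneg (Real.sinh (Real.pi * w.re)), sq_nonneg (Real.cos (Real.pi * w.im))]
  have r1 : w.re = 0 := by
    rw [Real.sinh_eq_zero] at s1; exact (mul_eq_zero.mp s1).resolve_left hpi.ne'
  have r2 : w.im = 1 / 2 := by
    rw [← Real.cos_pi_div_two] at s2
    have := Real.injOn_cos ⟨by positivity, by nlinarith⟩ ⟨by positivity, by linarith⟩ s2
    field_simp at this
    linarith
  apply Complex.ext <;> simp [r1, r2]

lemma hh_add_T {T : ℂ} (hT : 0 < T.im) (z : ℂ) :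
    hh T (z + T) = -exp (2 * Real.pi * I * z + Real.pi * I * T) * hh T z +
      2 * exp (Real.pi * I * z + 3 * Real.pi * I * T / 4) := by
  have hpi := Real.pi_pos
  have hpi' : (Real.pi : ℂ) ≠ 0 := by exact_mod_cast hpi.ne'
  set c : ℂ := I / 2 with hc
  have hcc : cosh (Real.pi * c) = 0 := by
    rw [hc, show (Real.pi : ℂ) * (I / 2) = (Real.pi / 2) * I by ring, cosh_mul_I, cos_pi_div_two]
  set f : ℂ → ℂ := fun w => dslope (NN T z) c w / dslope (fun w => cosh (Real.pi * w)) c w with hf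
  have hNd : Differentiable ℂ (NN T z) := by unfold NN; fun_prop
  have hCd : Differentiable ℂ (fun w : ℂ => cosh (Real.pi * w)) := by fun_prop
  have hf1 : ∀ w, w ≠ c → f w = (NN T z w - NN T z c) / cosh (Real.pi * w) := by
    intro w hw
    have : w - c ≠ 0 := sub_ne_zero.mpr hw
    rw [hf]; simp only
    rw [dslope_of_ne _ hw, dslope_of_ne _ hw, slope_def_field, slope_def_field, hcc, sub_zero,
      div_div_div_cancel_right₀ this]
  have hder : HasDerivAt (fun w : ℂ => cosh (Real.pi * w)) (Real.pi * I) c := by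
    have h0 : HasDerivAt (fun w : ℂ => Real.pi * w) (Real.pi : ℂ) c := by
      simpa using (hasDerivAt_id c).const_mul (Real.pi : ℂ)
    refine h0.ccosh.congr_deriv ?_
    rw [hc, show (Real.pi : ℂ) * (I / 2) = (Real.pi / 2) * I by ring, sinh_mul_I, sin_pi_div_two]
    ring
  have hdd : ∀ w : ℂ, 0 ≤ w.im → w.im ≤ 1 → DifferentiableAt ℂ f w := by
    intro w h0 h1
    have a1 := ((Complex.differentiableOn_dslope (c := c) (s := univ) univ_mem).mpr hNd.differentiableOn).differentiableAt (x := w) univ_mem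
    have a2 := ((Complex.differentiableOn_dslope (c := c) (s := univ) univ_mem).mpr hCd.differentiableOn).differentiableAt (x := w) univ_mem
    refine a1.div a2 ?_
    by_cases hw : w = c
    · rw [hw, dslope_same, hder.deriv]
      simp [hpi']
    · rw [dslope_of_ne _ hw, slope_def_field, hcc, sub_zero]
      refine div_ne_zero (fun h => hw (cosh_pi_strip h0 h1 h)) (sub_ne_zero.mpr hw)
  have hxne : ∀ x : ℝ, (x : ℂ) ≠ c := by
    intro x h; have := congrArg Complex.im h; simp [hc] at this
  have hxne1 : ∀ x : ℝ, (x : ℂ) + (1 : ℝ) * I ≠ c := by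
    intro x h; have := congrArg Complex.im h; simp [hc] at this
  have hN1 : ∀ x : ℝ, NN T z (x + (1 : ℝ) * I) = exp (-(Real.pi * I * T) - 2 * Real.pi * I * z) * NN T (z + T) x := by
    intro x
    rw [NN, NN, ← exp_add]; congr 1
    push_cast
    linear_combination (Real.pi * I * T + 2 * Real.pi * T * x) * I_sq
  have hC1 : ∀ x : ℝ, cosh (Real.pi * (x + (1 : ℝ) * I)) = -cosh (Real.pi * x) := by
    intro x
    rw [ofReal_one, one_mul, mul_add, cosh_add, cosh_mul_I, sinh_mul_I]; simp
  have f0 : ∀ x : ℝ, f x = NN T z x / cosh (Real.pi * x) - NN T z c * (1 / cosh (Real.pi * x)) := by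
    intro x; rw [hf1 _ (hxne x)]; ring
  have f1 : ∀ x : ℝ, f (x + (1 : ℝ) * I) = -exp (-(Real.pi * I * T) - 2 * Real.pi * I * z) *
      (NN T (z + T) x / cosh (Real.pi * x)) + NN T z c * (1 / cosh (Real.pi * x)) := by
    intro x; rw [hf1 _ (hxne1 x), hN1, hC1]; rw [div_neg]; ring
  have i0 : Integrable fun x : ℝ => f x := by
    simp_rw [f0]
    exact (hh_int hT z).sub (inv_cosh_cint.const_mul _)
  have i1 : Integrable fun x : ℝ => f (x + (1 : ℝ) * I) := by
    simp_rw [f1]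
    exact ((hh_int hT _).const_mul _).add (inv_cosh_cint.const_mul _)
  set a := Real.pi * T.im with ha
  have hap : 0 < a := by positivity
  set b := 2 * Real.pi * (‖T‖ + ‖z‖) with hb
  have hG : ∀ r : ℝ, Real.exp (-a * r ^ 2) * Real.exp (b * r) ≤ Real.exp (b ^ 2 / (4 * a)) := by
    intro r
    rw [← Real.exp_add]
    apply Real.exp_le_exp.mpr
    rw [le_div_iff₀ (by positivity)]
    nlinarith [sq_nonneg (2 * a * r - b)]
  set K := Real.exp (Real.pi * (|T.im| + 2 * ‖z‖)) * Real.exp (b ^ 2 / (4 * a)) + ‖NN T z c‖ with hK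
  have key := shift_lemma (f := f) zero_le_one hdd (B := fun r => K / r) (by
      intro x y h0 h1 hx
      have hne : (x : ℂ) + y * I ≠ c := by
        intro h; have := congrArg Complex.re h; simp [hc] at this; rw [this] at hx; norm_num at hx
      rw [hf1 _ hne, norm_div]
      have n1 := NN_norm_le T z x y h0 h1
      rw [← ha, ← hb, ← sq_abs] at n1
      have n2 : ‖NN T z (x + y * I) - NN T z c‖ ≤ K := by
        refine (norm_sub_le _ _).trans ?_
        rw [hK]; gcongr
        refine n1.trans ?_
        gcongr
        exact hG |x|
      have n3 : |x| ≤ ‖cosh (Real.pi * (x + y * I))‖ := by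
        have := sinh_le_cosh (Real.pi * x) (Real.pi * y)
        rw [show ((Real.pi * x : ℝ) : ℂ) + (Real.pi * y : ℝ) * I = Real.pi * (x + y * I) by push_cast; ring] at this
        refine le_trans ?_ this
        rw [Real.abs_sinh, abs_mul, abs_of_pos hpi]
        refine le_trans ?_ (Real.self_le_sinh_iff.mpr (by positivity))
        nlinarith [abs_nonneg x, Real.pi_gt_three]
      have : 0 < |x| := by linarith
      have hKp : 0 ≤ K := (norm_nonneg _).trans n2
      gcongr) (tendsto_const_nhds.div_atTop tendsto_id) i0 i1
  simp_rw [f0, f1] at key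
  rw [integral_sub (hh_int hT z) (inv_cosh_cint.const_mul _), integral_add ((hh_int hT _).const_mul _) (inv_cosh_cint.const_mul _),
    integral_const_mul, integral_const_mul, integral_inv_ccosh] at key
  change hh T z - _ = _ * hh T (z + T) + _ at key
  have hNc : NN T z c = exp (-(Real.pi * I * T / 4) - Real.pi * I * z) := by
    rw [NN]; congr 1; rw [hc]
    linear_combination (Real.pi * I * T / 4) * I_sq
  rw [hNc] at key
  have e1 : exp (-(Real.pi * I * T) - 2 * Real.pi * I * z) * exp (2 * Real.pi * I * z + Real.pi * I * T) = 1 := by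
    rw [← exp_add, ← exp_zero]; congr 1; ring
  have e2 : exp (2 * Real.pi * I * z + Real.pi * I * T) * exp (-(Real.pi * I * T / 4) - Real.pi * I * z) = exp (Real.pi * I * z + 3 * Real.pi * I * T / 4) := by
    rw [← exp_add]; congr 1; ring
  rw [← e2]
  linear_combination (exp (2 * Real.pi * I * z + Real.pi * I * T)) * key - hh T (z+T) * e1

end

section
open Complex
open MeasureTheory Set Filter Topology

def LatT (T : ℂ) : Set ℂ := {u | ∃ m n : ℤ, u = m + n * T}

lemma lat_sep {T : ℂ} (hT : 0 < T.im) {u v : ℂ} (hu : u ∈ LatT T) (hv : v ∈ LatT T) (h : u ≠ v) :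
    min 1 T.im ≤ dist u v := by
  obtain ⟨m, n, rfl⟩ := hu
  obtain ⟨m', n', rfl⟩ := hv
  rw [dist_eq_norm]
  by_cases hn : n = n'
  · subst hn
    have hm : m ≠ m' := by rintro rfl; exact h rfl
    have e : ((m : ℂ) + n * T) - (m' + n * T) = ((m - m' : ℤ) : ℂ) := by push_cast; ring
    rw [e, Complex.norm_intCast]
    refine (min_le_left _ _).trans ?_
    exact_mod_cast Int.one_le_abs (sub_ne_zero.mpr hm)
  · refine (min_le_right _ _).trans ?_
    refine le_trans ?_ (Complex.abs_im_le_norm _)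
    have e : (((m : ℂ) + n * T) - (m' + n' * T)).im = ((n - n' : ℤ) : ℝ) * T.im := by simp; ring
    rw [e, abs_mul, abs_of_pos hT]
    have : (1 : ℝ) ≤ |((n - n' : ℤ) : ℝ)| := by exact_mod_cast Int.one_le_abs (sub_ne_zero.mpr hn)
    nlinarith

lemma lat_punct {T : ℂ} (hT : 0 < T.im) (c : ℂ) : ∀ᶠ u in 𝓝[≠] c, u ∉ LatT T := by
  set δ := min 1 T.im with hδ
  have hδp : 0 < δ := lt_min one_pos hT
  rw [eventually_nhdsWithin_iff]
  by_cases h : ∃ p ∈ LatT T, p ≠ c ∧ dist p c < δ / 2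
  · obtain ⟨p, hp, hpc, hpd⟩ := h
    filter_upwards [Metric.ball_mem_nhds c (dist_pos.mpr hpc)] with u hu huc huL
    rw [Metric.mem_ball] at hu
    have hup : u ≠ p := by rintro rfl; exact lt_irrefl _ hu
    have h1 := lat_sep hT huL hp hup
    have h2 := dist_triangle_right u p c
    linarith
  · push Not at h
    filter_upwards [Metric.ball_mem_nhds c (half_pos hδp)] with u hu huc huL
    have := h u huL huc
    rw [Metric.mem_ball] at hu
    linarith

lemma lat_nhds {T : ℂ} (hT : 0 < T.im) {c : ℂ} (hc : c ∉ LatT T) : ∀ᶠ u in 𝓝 c, u ∉ LatT T := by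
  have := lat_punct hT c
  rw [eventually_nhdsWithin_iff] at this
  filter_upwards [this] with u hu
  by_cases h : u = c
  · rwa [h]
  · exact hu h

lemma lat_add {T u : ℂ} (a b : ℤ) : u + (a + b * T) ∈ LatT T ↔ u ∈ LatT T := by
  constructor
  · rintro ⟨m, n, h⟩
    exact ⟨m - a, n - b, by push_cast; linear_combination h⟩
  · rintro ⟨m, n, h⟩
    exact ⟨m + a, n + b, by push_cast; linear_combination h⟩

def Rem (G : ℂ → ℂ) (c : ℂ) : Prop := ∃ F : ℂ → ℂ, AnalyticAt ℂ F c ∧ ∀ᶠ u in 𝓝[≠] c, G u = F u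

lemma tendsto_punct_sub (c a : ℂ) : Tendsto (fun u => u - a) (𝓝[≠] (c + a)) (𝓝[≠] c) := by
  refine tendsto_nhdsWithin_of_tendsto_nhds_of_eventually_within _ ?_ ?_
  · have : Tendsto (fun u => u - a) (𝓝 (c + a)) (𝓝 (c + a - a)) := (continuous_id.sub continuous_const).tendsto _
    rw [add_sub_cancel_right] at this
    exact this.mono_left nhdsWithin_le_nhds
  · filter_upwards [self_mem_nhdsWithin] with u hu h
    apply hu
    simp only [mem_singleton_iff] at h ⊢
    rw [← h]; ring

lemma Rem.shift {G k : ℂ → ℂ} {c : ℂ} (h : Rem G c) (a : ℂ) (hk : Differentiable ℂ k)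
    (he : ∀ᶠ u in 𝓝[≠] (c + a), G u = k u * G (u - a)) : Rem G (c + a) := by
  obtain ⟨F, hF, hFG⟩ := h
  refine ⟨fun u => k u * F (u - a), ?_, ?_⟩
  · refine (hk.analyticAt _).mul ?_
    have h1 : AnalyticAt ℂ (fun u : ℂ => u - a) (c + a) := by fun_prop
    refine AnalyticAt.fun_comp (g := F) ?_ h1
    rwa [add_sub_cancel_right]
  · filter_upwards [he, (tendsto_punct_sub c a).eventually hFG] with u h1 h2
    rw [h1, h2]

lemma rem_of_isLittle {G : ℂ → ℂ} {c : ℂ} (hd : ∀ᶠ u in 𝓝[≠] c, DifferentiableAt ℂ G u)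
    (h0 : Tendsto (fun u => (u - c) * G u) (𝓝[≠] c) (𝓝 0)) : Rem G c := by
  rw [eventually_nhdsWithin_iff] at hd
  refine ⟨Function.update G c (limUnder (𝓝[≠] c) G), ?_, ?_⟩
  · have := Complex.differentiableOn_update_limUnder_of_isLittleO (f := G) hd ?_ ?_
    · exact this.analyticAt hd
    · intro u hu
      exact (hu.1 hu.2).differentiableWithinAt
    · have h2 : Tendsto (fun u => (u - c) * (G u - G c)) (𝓝[≠] c) (𝓝 0) := by
        have h3 : Tendsto (fun u => (u - c) * G c) (𝓝[≠] c) (𝓝 0) := by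
          have : Tendsto (fun u => (u - c) * G c) (𝓝 c) (𝓝 ((c - c) * G c)) := by
            apply Continuous.tendsto; fun_prop
          rw [sub_self, zero_mul] at this
          exact this.mono_left nhdsWithin_le_nhds
        have := h0.sub h3
        simpa [mul_sub] using this
      rw [Asymptotics.isLittleO_iff_tendsto']
      · refine h2.congr fun u => ?_
        rw [div_inv_eq_mul, mul_comm]
      · filter_upwards [self_mem_nhdsWithin] with u hu h
        exact absurd (inv_eq_zero.mp h) (sub_ne_zero.mpr hu)
  · filter_upwards [self_mem_nhdsWithin] with u hu
    rw [Function.update_of_ne hu]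

lemma Rem.tendsto {G : ℂ → ℂ} {c : ℂ} (h : Rem G c) : Tendsto G (𝓝[≠] c) (𝓝 (limUnder (𝓝[≠] c) G)) := by
  obtain ⟨F, hF, hFG⟩ := h
  apply tendsto_nhds_limUnder
  refine ⟨F c, ?_⟩
  exact (hF.continuousAt.tendsto.mono_left nhdsWithin_le_nhds).congr' (by filter_upwards [hFG] with u hu using hu.symm)

lemma Rem.analytic {G : ℂ → ℂ} {c : ℂ} (h : Rem G c) : AnalyticAt ℂ (fun c => limUnder (𝓝[≠] c) G) c := by
  have h' := h
  obtain ⟨F, hF, hFG⟩ := h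
  refine hF.congr ?_
  have h1 := hF.eventually_analyticAt
  have h2 : ∀ᶠ u in 𝓝[≠] c, F u = limUnder (𝓝[≠] u) G := by
    rw [← eventually_eventually_nhdsWithin] at hFG
    have h1' : ∀ᶠ u in 𝓝[≠] c, AnalyticAt ℂ F u := h1.filter_mono nhdsWithin_le_nhds
    filter_upwards [hFG, h1', self_mem_nhdsWithin] with u hu ha hne
    have hu' : ∀ᶠ v in 𝓝[≠] u, G v = F v := by
      rw [isOpen_compl_singleton.nhdsWithin_eq hne] at hu
      exact hu.filter_mono nhdsWithin_le_nhds
    symm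
    apply Tendsto.limUnder_eq
    exact (ha.continuousAt.tendsto.mono_left nhdsWithin_le_nhds).congr' (by filter_upwards [hu'] with v hv using hv.symm)
  have h3 : F c = limUnder (𝓝[≠] c) G := by
    symm
    apply Tendsto.limUnder_eq
    exact (hF.continuousAt.tendsto.mono_left nhdsWithin_le_nhds).congr' (by filter_upwards [hFG] with v hv using hv.symm)
  rw [eventually_nhdsWithin_iff] at h2
  filter_upwards [h2] with u hu
  by_cases hc : u = c
  · rw [hc]; exact h3
  · exact hu hc

theorem liouville {T : ℂ} (hT : 0 < T.im) {G : ℂ → ℂ} (hd : ∀ u, u ∉ LatT T → DifferentiableAt ℂ G u)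
    (h0 : Tendsto (fun u => u * G u) (𝓝[≠] 0) (𝓝 0))
    (f1 : ∀ u, u ∉ LatT T → G (u + 1) = - G u)
    (f2 : ∀ u, u ∉ LatT T → G (u + T) = exp (2 * Real.pi * I * u) * G u) :
    ∀ u, u ∉ LatT T → G u = 0 := by
  have hpi := Real.pi_pos
  have L1 : ∀ u, u ∉ LatT T → u - 1 ∉ LatT T := by
    intro u hu h; apply hu; rw [← lat_add (-1) 0]; convert h using 1; push_cast; ring
  have LT : ∀ u, u ∉ LatT T → u - T ∉ LatT T := by
    intro u hu h; apply hu; rw [← lat_add 0 (-1)]; convert h using 1; push_cast; ring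
  have R0 : Rem G 0 := by
    refine rem_of_isLittle ?_ (by simpa using h0)
    filter_upwards [lat_punct hT 0] with u hu using hd u hu
  have p1 : ∀ c, Rem G c → Rem G (c + 1) := by
    intro c hc
    refine hc.shift 1 (k := fun _ => -1) (by fun_prop) ?_
    filter_upwards [lat_punct hT (c + 1)] with u hu
    have := f1 (u - 1) (L1 u hu)
    rw [sub_add_cancel] at this
    rw [this]; ring
  have p1' : ∀ c, Rem G c → Rem G (c - 1) := by
    intro c hc
    rw [sub_eq_add_neg]
    refine hc.shift (-1) (k := fun _ => -1) (by fun_prop) ?_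
    filter_upwards [lat_punct hT (c + -1)] with u hu
    rw [sub_neg_eq_add, f1 u hu]; ring
  have pT : ∀ c, Rem G c → Rem G (c + T) := by
    intro c hc
    refine hc.shift T (k := fun u => exp (2 * Real.pi * I * (u - T))) (by fun_prop) ?_
    filter_upwards [lat_punct hT (c + T)] with u hu
    have := f2 (u - T) (LT u hu)
    rwa [sub_add_cancel] at this
  have pT' : ∀ c, Rem G c → Rem G (c - T) := by
    intro c hc
    rw [sub_eq_add_neg]
    refine hc.shift (-T) (k := fun u => exp (-(2 * Real.pi * I * u))) (by fun_prop) ?_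
    filter_upwards [lat_punct hT (c + -T)] with u hu
    rw [sub_neg_eq_add, f2 u hu, ← mul_assoc, ← exp_add]; simp
  have Rall : ∀ c, Rem G c := by
    intro c
    by_cases hc : c ∈ LatT T
    · obtain ⟨m, n, rfl⟩ := hc
      have hm : ∀ m : ℤ, Rem G (m : ℂ) := by
        intro m
        induction m using Int.induction_on with
        | zero => simpa using R0
        | succ i ih => push_cast; exact p1 _ (by simpa using ih)
        | pred i ih => push_cast; exact p1' _ (by simpa using ih)
      induction n using Int.induction_on with
      | zero => simpa using hm m
      | succ i ih =>
        have := pT _ ih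
        convert this using 1; push_cast; ring
      | pred i ih =>
        have := pT' _ ih
        convert this using 1; push_cast; ring
    · refine ⟨G, ?_, Eventually.of_forall fun _ => rfl⟩
      rw [Complex.analyticAt_iff_eventually_differentiableAt]
      filter_upwards [lat_nhds hT hc] with u hu using hd u hu
  set E : ℂ → ℂ := fun c => limUnder (𝓝[≠] c) G with hE
  have Ed : Differentiable ℂ E := fun c => (Rall c).analytic.differentiableAt
  have EG : ∀ u, u ∉ LatT T → E u = G u := by
    intro u hu
    exact Tendsto.limUnder_eq ((hd u hu).continuousAt.tendsto.mono_left nhdsWithin_le_nhds)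
  have t_add : ∀ c a : ℂ, Tendsto (fun u => u + a) (𝓝[≠] c) (𝓝[≠] (c + a)) := by
    intro c a
    have := tendsto_punct_sub (c + a) (-a)
    simpa using this
  have E1 : ∀ c, E (c + 1) = - E c := by
    intro c
    refine tendsto_nhds_unique ((Rall (c + 1)).tendsto.comp (t_add c 1)) ?_
    refine (Rall c).tendsto.neg.congr' ?_
    filter_upwards [lat_punct hT c] with u hu
    simp [f1 u hu]
  have E2 : ∀ c, E (c + T) = exp (2 * Real.pi * I * c) * E c := by
    intro c
    refine tendsto_nhds_unique ((Rall (c + T)).tendsto.comp (t_add c T)) ?_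
    have hx : Tendsto (fun u : ℂ => exp (2 * Real.pi * I * u)) (𝓝[≠] c) (𝓝 (exp (2 * Real.pi * I * c))) := by
      refine Tendsto.mono_left (Continuous.tendsto ?_ c) nhdsWithin_le_nhds
      fun_prop
    refine (hx.mul (Rall c).tendsto).congr' ?_
    filter_upwards [lat_punct hT c] with u hu
    simp [f2 u hu]
  have nexp : ∀ c : ℂ, ‖exp (2 * Real.pi * I * c)‖ = Real.exp (-(2 * Real.pi * c.im)) := by
    intro c; rw [Complex.norm_exp]; congr 1; simp
  have E1k : ∀ (k : ℤ) c, ‖E (c + k)‖ = ‖E c‖ := by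
    intro k
    induction k using Int.induction_on with
    | zero => simp
    | succ i ih =>
      intro c
      push_cast
      rw [← add_assoc, E1, norm_neg]; exact_mod_cast ih c
    | pred i ih =>
      intro c
      rw [← ih c, ← norm_neg, ← E1]
      congr 2; push_cast; ring
  obtain ⟨M, hM⟩ : ∃ M, ∀ a ∈ Icc (0:ℝ) 1, ∀ b ∈ Icc (0:ℝ) 1, ‖E (a + b * T)‖ ≤ M := by
    have hcomp : IsCompact ((Icc (0:ℝ) 1) ×ˢ (Icc (0:ℝ) 1)) := isCompact_Icc.prod isCompact_Icc
    have hcont : Continuous fun p : ℝ × ℝ => E (p.1 + p.2 * T) := by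
      have := Ed.continuous; fun_prop
    obtain ⟨M, hM⟩ := hcomp.exists_bound_of_continuousOn hcont.continuousOn
    exact ⟨M, fun a ha b hb => hM (a, b) ⟨ha, hb⟩⟩
  have hM1 : ∀ a : ℝ, ∀ b ∈ Icc (0:ℝ) 1, ‖E (a + b * T)‖ ≤ M := by
    intro a b hb
    have := E1k ⌊a⌋ ((Int.fract a : ℝ) + b * T)
    have e : ((Int.fract a : ℝ) : ℂ) + b * T + (⌊a⌋ : ℤ) = a + b * T := by
      have : (a : ℂ) = ((⌊a⌋ + Int.fract a : ℝ) : ℂ) := by rw [Int.floor_add_fract]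
      rw [this]; push_cast; ring
    rw [e] at this
    rw [this]
    exact hM _ ⟨Int.fract_nonneg a, (Int.fract_lt_one a).le⟩ b hb
  have him : ∀ a b : ℝ, ((a : ℂ) + b * T).im = b * T.im := by intro a b; simp
  have hM2 : ∀ (n : ℕ) (a : ℝ), ∀ b ∈ Icc (0:ℝ) 1, ‖E (a + (b + n : ℝ) * T)‖ ≤ M := by
    intro n
    induction n with
    | zero => intro a b hb; simpa using hM1 a b hb
    | succ n ih =>
      intro a b hb
      have e : ((a : ℂ) + (b + (n + 1 : ℕ) : ℝ) * T) = (a + (b + n : ℝ) * T) + T := by push_cast; ring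
      rw [e, E2, norm_mul, nexp, him]
      have : Real.exp (-(2 * Real.pi * ((b + n) * T.im))) ≤ 1 := by
        rw [Real.exp_le_one_iff]
        have := hb.1
        have : 0 ≤ 2 * Real.pi * ((b + n) * T.im) := by positivity
        linarith
      calc _ ≤ 1 * ‖E (a + (b + n : ℝ) * T)‖ := by gcongr
        _ ≤ M := by rw [one_mul]; exact ih a b hb
  have hM3 : ∀ (n : ℕ) (a : ℝ), ∀ b ∈ Icc (0:ℝ) 1, ‖E (a + (b - n : ℝ) * T)‖ ≤ M := by
    intro n
    induction n with
    | zero => intro a b hb; simpa using hM1 a b hb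
    | succ n ih =>
      intro a b hb
      have e : ((a : ℂ) + (b - n : ℝ) * T) = (a + (b - (n + 1 : ℕ) : ℝ) * T) + T := by push_cast; ring
      have h := ih a b hb
      rw [e, E2, norm_mul, nexp, him] at h
      refine le_trans ?_ h
      have : 1 ≤ Real.exp (-(2 * Real.pi * ((b - (n + 1 : ℕ)) * T.im))) := by
        rw [Real.one_le_exp_iff]
        have h1 := hb.2
        have h2 : 0 ≤ (n + 1 : ℕ) - b := by push_cast; linarith [Nat.cast_nonneg (α := ℝ) n]
        have : 0 ≤ 2 * Real.pi * (((n + 1 : ℕ) - b) * T.im) := by positivity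
        linarith
      exact le_mul_of_one_le_left (norm_nonneg _) this
  have bdd : ∀ u, ‖E u‖ ≤ M := by
    intro u
    set β := u.im / T.im with hβ
    set α := (u - β * T).re with hα
    have hu : u = α + β * T := by
      apply Complex.ext
      · simp [hα]
      · simp [hβ]; field_simp
    have fr : Int.fract β ∈ Icc (0:ℝ) 1 := ⟨Int.fract_nonneg β, (Int.fract_lt_one β).le⟩
    have hb : β = Int.fract β + ⌊β⌋ := (Int.fract_add_floor β).symm
    obtain ⟨n, hn | hn⟩ := ⌊β⌋.eq_nat_or_neg
    · have := hM2 n α _ fr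
      rw [hn] at hb
      rw [hu, hb]; simpa using this
    · have := hM3 n α _ fr
      rw [hn] at hb
      rw [hu, hb]; simpa [sub_eq_add_neg] using this
  have hbd : Bornology.IsBounded (range E) := by
    rw [isBounded_iff_forall_norm_le]
    exact ⟨M, by rintro _ ⟨u, rfl⟩; exact bdd u⟩
  intro u hu
  rw [← EG u hu]
  have := Ed.apply_eq_apply_of_bounded hbd (u + 1) u
  rw [E1] at this
  have h2 : (2 : ℂ) * E u = 0 := by linear_combination -this
  exact (mul_eq_zero.mp h2).resolve_left two_ne_zero

end

section
open Complex
open MeasureTheory Set Filter Topology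

noncomputable def sa (τ : ℂ) (n : ℤ) : ℂ := (-1) ^ n * exp (Real.pi * I * τ * (n ^ 2 + n))
noncomputable def st (τ u : ℂ) (n : ℤ) : ℂ := sa τ n / sin (Real.pi * (u + n * τ))
noncomputable def SS (τ u : ℂ) : ℂ := ∑' n : ℤ, st τ u n
noncomputable def th (τ : ℂ) : ℂ := jacobiTheta (τ + 1)

lemma norm_sin_ge (w : ℂ) : |w.im| ≤ ‖sin w‖ := by
  have e : sin w = cosh ((w.im : ℝ) + (Real.pi / 2 - w.re : ℝ) * I) := by
    rw [← Complex.cos_pi_div_two_sub, ← Complex.cosh_mul_I]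
    congr 1
    conv_lhs => rw [← re_add_im w]
    push_cast
    linear_combination (-(w.im:ℂ)) * I_sq
  rw [e]
  refine le_trans ?_ (sinh_le_cosh _ _)
  rw [Real.abs_sinh]
  exact Real.self_le_sinh_iff.mpr (abs_nonneg _)

lemma sa_summable {τ : ℂ} (hτ : 0 < τ.im) : Summable fun n => ‖sa τ n‖ := by
  have := ((summable_jacobiTheta₂_term_iff (τ / 2) τ).mpr hτ).norm
  refine this.congr fun n => ?_
  rw [sa, norm_mul, norm_zpow, norm_neg, norm_one, one_zpow, one_mul, jacobiTheta₂_term]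
  congr 2; ring

lemma th_hasSum {τ : ℂ} (hτ : 0 < τ.im) : HasSum (fun n : ℤ => (-1 : ℂ) ^ n * exp (Real.pi * I * τ * n ^ 2)) (th τ) := by
  have := hasSum_jacobiTheta₂_term 0 (τ := τ + 1) (by simpa using hτ)
  rw [← jacobiTheta_eq_jacobiTheta₂] at this
  refine hasSum_of_eq this (fun n => ?_) rfl
  rw [jacobiTheta₂_term, ← exp_int_pi, ← exp_add]
  rw [Complex.exp_eq_exp_iff_exists_int]
  obtain ⟨k, hk⟩ := Int.even_mul_succ_self n
  refine ⟨n - k, ?_⟩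
  have hk' : (n : ℂ) * (n + 1) = k + k := by exact_mod_cast hk
  push_cast
  linear_combination (-(Real.pi : ℂ) * I) * hk'

lemma th_ne {τ : ℂ} (hτ : 0 < τ.im) : th τ ≠ 0 := by
  have h := theta4_ne (s := exp (Real.pi * I * τ)) (exp_ne_zero _) (norm_exp_lt (by
    simp; have := Real.pi_pos; positivity))
  rw [← (th_hasSum hτ).tsum_eq]
  convert h using 4 with n
  rw [← Complex.exp_int_mul]; congr 1; push_cast; ring

lemma th_trans {τ : ℂ} (hτ : 0 < τ.im) : th (τ / (τ + 1)) = (-I * (τ + 1)) ^ (1 / 2 : ℂ) * th τ := by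
  have hT0 : τ + 1 ≠ 0 := by
    intro h; have := congrArg Complex.im h; simp at this; linarith
  have := jacobiTheta_S_smul ⟨τ + 1, by simpa using hτ⟩
  rw [UpperHalfPlane.modular_S_smul] at this
  simp only at this
  rw [th, th, ← this, ← jacobiTheta_two_add (-(τ + 1))⁻¹]
  congr 1
  rw [inv_neg]
  field_simp
  ring

lemma st_exc {τ : ℂ} (hτ : 0 < τ.im) (c : ℂ) : ∃ E : Finset ℤ, ∀ n ∉ E, ∀ u ∈ Metric.ball c 1,
    1 ≤ ‖sin (Real.pi * (u + n * τ))‖ := by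
  obtain ⟨N, hN⟩ := exists_nat_gt ((2 + |c.im|) / τ.im)
  rw [div_lt_iff₀ hτ] at hN
  refine ⟨Finset.Icc (-N) N, fun n hn u hu => ?_⟩
  refine le_trans ?_ (norm_sin_ge _)
  have e : (Real.pi * (u + n * τ)).im = Real.pi * (u.im + n * τ.im) := by simp
  rw [e, abs_mul, abs_of_pos Real.pi_pos]
  have hn' : (N : ℝ) ≤ |(n : ℝ)| := by
    have : (N : ℤ) ≤ |n| := by
      rw [Finset.mem_Icc, ← abs_le] at hn; omega
    exact_mod_cast this
  have hu' : |u.im| ≤ 1 + |c.im| := by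
    have h1 : ‖u - c‖ < 1 := by simpa [dist_eq_norm] using hu
    have h2 := Complex.abs_im_le_norm (u - c)
    have h3 := abs_sub_abs_le_abs_sub u.im c.im
    rw [sub_im] at h2; linarith
  have h4 : |(n : ℝ)| * τ.im - |u.im| ≤ |u.im + n * τ.im| := by
    have := abs_sub_abs_le_abs_sub (n * τ.im) (-u.im)
    rw [abs_mul, abs_of_pos hτ, abs_neg, sub_neg_eq_add, add_comm] at this
    linarith
  have h5 : 1 ≤ |u.im + n * τ.im| := by nlinarith
  nlinarith [Real.pi_gt_three]

lemma st_le {τ u : ℂ} {n : ℤ} (h : 1 ≤ ‖sin (Real.pi * (u + n * τ))‖) : ‖st τ u n‖ ≤ ‖sa τ n‖ := by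
  rw [st, norm_div]; exact div_le_self (norm_nonneg _) h

lemma st_summable {τ : ℂ} (hτ : 0 < τ.im) (u : ℂ) : Summable fun n => st τ u n := by
  obtain ⟨E, hE⟩ := st_exc hτ u
  refine Summable.of_norm_bounded_eventually (sa_summable hτ) ?_
  filter_upwards [E.finite_toSet.compl_mem_cofinite] with n hn
  exact st_le (hE n (by simpa using hn) u (Metric.mem_ball_self one_pos))

lemma SS_hasSum {τ : ℂ} (hτ : 0 < τ.im) (u : ℂ) : HasSum (fun n => st τ u n) (SS τ u) := (st_summable hτ u).hasSum

lemma st_diff {τ c : ℂ} {n : ℤ} (h : sin (Real.pi * (c + n * τ)) ≠ 0) : DifferentiableAt ℂ (fun u => st τ u n) c := by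
  unfold st
  refine DifferentiableAt.div (by fun_prop) (by fun_prop) h

lemma SS_split {τ : ℂ} (hτ : 0 < τ.im) (c : ℂ) (F : Finset ℤ) (hF : ∀ n ∉ F, sin (Real.pi * (c + n * τ)) ≠ 0) :
    DifferentiableAt ℂ (fun u => SS τ u - ∑ n ∈ F, st τ u n) c := by
  obtain ⟨E, hE⟩ := st_exc hτ c
  have h1 : DifferentiableOn ℂ (fun u => ∑' n : {n // n ∉ F ∪ E}, st τ u n) (Metric.ball c 1) := by
    refine differentiableOn_tsum_of_summable_norm (u := fun n : {n // n ∉ F ∪ E} => ‖sa τ n‖)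
      ((sa_summable hτ).subtype _) ?_ Metric.isOpen_ball ?_
    · intro n u hu
      refine (st_diff ?_).differentiableWithinAt
      have hn : (n : ℤ) ∉ E := fun h => n.2 (Finset.mem_union_right _ h)
      intro h; have := hE n hn u hu; rw [h, norm_zero] at this; linarith
    · intro n u hu
      have hn : (n : ℤ) ∉ E := fun h => n.2 (Finset.mem_union_right _ h)
      exact st_le (hE n hn u hu)
  have h2 := h1.differentiableAt (Metric.ball_mem_nhds c one_pos)
  have h3 : DifferentiableAt ℂ (fun u => ∑ n ∈ (F ∪ E) \ F, st τ u n) c := by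
    refine DifferentiableAt.fun_sum fun n hn => st_diff (hF n (Finset.mem_sdiff.mp hn).2)
  refine (h2.add h3).congr_of_eventuallyEq (Eventually.of_forall fun u => ?_)
  have e1 := (st_summable hτ u).sum_add_tsum_subtype_compl (F ∪ E)
  have e2 := Finset.sum_sdiff (f := fun n => st τ u n) (Finset.subset_union_left (s₁ := F) (s₂ := E))
  simp only [Pi.add_apply]
  rw [SS, ← e1, ← e2]; ring

lemma sin_ne_of {τ u : ℂ} (hu : u ∉ LatT τ) (n : ℤ) : sin (Real.pi * (u + n * τ)) ≠ 0 := by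
  have hpi' : (Real.pi : ℂ) ≠ 0 := by exact_mod_cast Real.pi_ne_zero
  intro h
  rw [Complex.sin_eq_zero_iff] at h
  obtain ⟨k, hk⟩ := h
  apply hu
  refine ⟨k, -n, ?_⟩
  have : u + n * τ = k := by
    apply mul_left_cancel₀ hpi'; rw [hk]; ring
  push_cast; linear_combination this

lemma SS_diff {τ : ℂ} (hτ : 0 < τ.im) {c : ℂ} (hc : c ∉ LatT τ) : DifferentiableAt ℂ (SS τ) c := by
  have := SS_split hτ c ∅ (fun n _ => sin_ne_of hc n)
  simpa using this

lemma SS_lim {τ : ℂ} (hτ : 0 < τ.im) : Tendsto (fun u => u * SS τ u) (𝓝[≠] 0) (𝓝 (1 / Real.pi)) := by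
  have hpi' : (Real.pi : ℂ) ≠ 0 := by exact_mod_cast Real.pi_ne_zero
  have h1 := SS_split hτ 0 {0} (by
    intro n hn h
    rw [Finset.mem_singleton] at hn
    have := norm_sin_ge (Real.pi * (0 + n * τ))
    rw [h, norm_zero] at this
    have h2 := abs_nonpos_iff.mp this
    simp at h2
    rcases h2 with h2 | h2
    · exact hn h2
    · exact hτ.ne' h2)
  simp only [Finset.sum_singleton] at h1
  have h2 : Tendsto (fun u => u * (SS τ u - st τ u 0)) (𝓝[≠] 0) (𝓝 0) := by
    have : Tendsto (fun u => u * (SS τ u - st τ u 0)) (𝓝 0) (𝓝 (0 * (SS τ 0 - st τ 0 0))) :=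
      (continuousAt_id.mul h1.continuousAt).tendsto
    rw [zero_mul] at this
    exact this.mono_left nhdsWithin_le_nhds
  have h3 : Tendsto (fun u : ℂ => u * st τ u 0) (𝓝[≠] 0) (𝓝 (1 / Real.pi)) := by
    have hd : HasDerivAt (fun u : ℂ => sin (Real.pi * u)) (Real.pi : ℂ) 0 := by
      have h0 : HasDerivAt (fun w : ℂ => Real.pi * w) (Real.pi : ℂ) 0 := by
        simpa using (hasDerivAt_id (0:ℂ)).const_mul (Real.pi : ℂ)
      simpa using h0.csin
    have := (hasDerivAt_iff_tendsto_slope.mp hd).inv₀ hpi'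
    rw [← one_div] at this
    refine this.congr fun u => ?_
    rw [slope_def_field, st, sa]
    simp [div_eq_mul_inv]
  have := h2.add h3
  rw [zero_add] at this
  refine this.congr fun u => ?_
  ring

lemma SS_add_one {τ : ℂ} (u : ℂ) : SS τ (u + 1) = - SS τ u := by
  rw [SS, SS, ← tsum_neg]
  congr 1; ext n
  rw [st, st, show (Real.pi : ℂ) * (u + 1 + n * τ) = Real.pi * (u + n * τ) + Real.pi by ring, Complex.sin_add_pi, div_neg]

lemma SS_add_tau {τ : ℂ} (hτ : 0 < τ.im) {u : ℂ} (hu : u ∉ LatT τ) :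
    SS τ (u + τ) = -exp (2 * Real.pi * I * u) * SS τ u + 2 * I * exp (Real.pi * I * u) * th τ := by
  have h1 := hasSum_shift (SS_hasSum hτ (u + τ)) (-1)
  have h2 := ((SS_hasSum hτ u).mul_left (-exp (2 * Real.pi * I * u))).add ((th_hasSum hτ).mul_left (2 * I * exp (Real.pi * I * u)))
  refine h1.unique (hasSum_of_eq h2 (fun n => ?_) rfl)
  have hs := sin_ne_of hu n
  have e0 : (Real.pi : ℂ) * (u + τ + (n + -1 : ℤ) * τ) = Real.pi * (u + n * τ) := by push_cast; ring
  rw [st, e0, st, sa, sa]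
  have e1 : ((-1 : ℂ)) ^ (n + -1) = - (-1) ^ n := by
    rw [zpow_add₀ (by norm_num)]; norm_num
  rw [e1]
  have e2 : exp (Real.pi * I * τ * (((n + -1 : ℤ) : ℂ) ^ 2 + (n + -1 : ℤ))) =
    exp (Real.pi * I * τ * (n ^ 2 + n)) * exp (2 * Real.pi * I * u) * exp (-(Real.pi * (u + n * τ)) * I) ^ 2 := by
    rw [← exp_nat_mul, ← exp_add, ← exp_add]; congr 1; push_cast; ring
  have e3 : exp (Real.pi * I * τ * n ^ 2) * exp (Real.pi * I * u) =
    exp (Real.pi * I * τ * (n ^ 2 + n)) * exp (2 * Real.pi * I * u) * exp (-(Real.pi * (u + n * τ)) * I) := by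
    rw [← exp_add, ← exp_add, ← exp_add]; congr 1; ring
  have e4 : exp (-(Real.pi * (u + n * τ)) * I) ^ 2 = 1 - 2 * I * exp (-(Real.pi * (u + n * τ)) * I) * sin (Real.pi * (u + n * τ)) := by
    rw [Complex.sin]
    have : exp (-(Real.pi * (u + n * τ)) * I) * exp ((Real.pi * (u + n * τ)) * I) = 1 := by
      rw [← exp_add, ← exp_zero]; congr 1; ring
    linear_combination (-I ^ 2) * this + (exp (-(Real.pi * (u + n * τ)) * I) ^ 2 - 1) * I_sq
  rw [e2, e4]
  generalize exp (-(Real.pi * (u + n * τ)) * I) = X at *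
  generalize sin (Real.pi * (u + n * τ)) = Y at *
  generalize exp (Real.pi * I * τ * (n ^ 2 + n)) = Z at *
  generalize exp (2 * Real.pi * I * u) = V at *
  generalize exp (Real.pi * I * τ * n ^ 2) = A at *
  generalize exp (Real.pi * I * u) = B at *
  generalize ((-1 : ℂ)) ^ n = J at *
  field_simp
  linear_combination (-2 * I * Y * J) * e3

end

section
open Complex
open MeasureTheory Set Filter Topology

noncomputable def WW (τ u : ℂ) : ℂ :=
  (1 / (τ + 1)) * exp (Real.pi * I * (u ^ 2 - τ * u) / (τ + 1)) * SS (τ / (τ + 1)) (u / (τ + 1))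

lemma T_ne {τ : ℂ} (hτ : 0 < τ.im) : τ + 1 ≠ 0 := by
  intro h; have := congrArg Complex.im h; simp at this; linarith

lemma tau'_im {τ : ℂ} (hτ : 0 < τ.im) : 0 < (τ / (τ + 1)).im := by
  have hT0 := T_ne hτ
  have e : τ / (τ + 1) = 1 - (τ + 1)⁻¹ := by field_simp; ring
  rw [e, sub_im, one_im, inv_im]
  simp only [add_im, one_im, add_zero]
  have : 0 < normSq (τ + 1) := normSq_pos.mpr hT0
  have : 0 < τ.im / normSq (τ + 1) := by positivity
  rw [neg_div]; linarith

lemma lat_eq (τ : ℂ) : LatT (τ + 1) = LatT τ := by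
  ext u
  constructor
  · rintro ⟨m, n, h⟩
    exact ⟨m + n, n, by push_cast; linear_combination h⟩
  · rintro ⟨m, n, h⟩
    exact ⟨m - n, n, by push_cast; linear_combination h⟩

lemma lat_div {τ u : ℂ} (hτ : 0 < τ.im) (hu : u ∉ LatT (τ + 1)) : u / (τ + 1) ∉ LatT (τ / (τ + 1)) := by
  have hT0 := T_ne hτ
  rintro ⟨m, n, h⟩
  apply hu
  refine ⟨-n, m + n, ?_⟩
  field_simp at h
  push_cast
  linear_combination h

lemma WW_add_T {τ : ℂ} (hτ : 0 < τ.im) (u : ℂ) : WW τ (u + (τ + 1)) = exp (2 * Real.pi * I * u) * WW τ u := by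
  have hT0 := T_ne hτ
  rw [WW, WW, add_div, div_self hT0, SS_add_one]
  have e : exp (Real.pi * I * ((u + (τ + 1)) ^ 2 - τ * (u + (τ + 1))) / (τ + 1)) =
    - (exp (2 * Real.pi * I * u) * exp (Real.pi * I * (u ^ 2 - τ * u) / (τ + 1))) := by
    rw [← exp_add, neg_eq_neg_one_mul, ← exp_pi_mul_I, ← exp_add]
    congr 1; field_simp; ring
  rw [e]; ring

lemma WW_add_one {τ u : ℂ} (hτ : 0 < τ.im) (hu : u ∉ LatT (τ + 1)) :
    WW τ (u + 1) = - WW τ u - (2 * I / (τ + 1)) * th (τ / (τ + 1)) *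
      exp (Real.pi * I * (u ^ 2 + (1 - τ) * u + 1) / (τ + 1)) := by
  have hT0 := T_ne hτ
  have hv : (u - τ) / (τ + 1) ∉ LatT (τ / (τ + 1)) := by
    apply lat_div hτ
    intro h; apply hu
    rw [← lat_add 1 (-1)]; convert h using 1; push_cast; ring
  have h1 := SS_add_tau (tau'_im hτ) hv
  rw [← add_div, sub_add_cancel] at h1
  have h2 : SS (τ / (τ + 1)) ((u + 1) / (τ + 1)) = - SS (τ / (τ + 1)) ((u - τ) / (τ + 1)) := by
    rw [← SS_add_one]; congr 1; field_simp; ring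
  rw [WW, WW, h1, h2]
  have e1 : exp (Real.pi * I * ((u + 1) ^ 2 - τ * (u + 1)) / (τ + 1)) =
    - exp (Real.pi * I * (u ^ 2 - τ * u) / (τ + 1)) * exp (2 * Real.pi * I * ((u - τ) / (τ + 1))) := by
    rw [neg_mul, ← exp_add, neg_eq_neg_one_mul, ← exp_pi_mul_I, ← exp_add]
    congr 1; field_simp; ring
  have e2 : exp (Real.pi * I * (u ^ 2 + (1 - τ) * u + 1) / (τ + 1)) =
    - exp (Real.pi * I * (u ^ 2 - τ * u) / (τ + 1)) * exp (Real.pi * I * ((u - τ) / (τ + 1))) := by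
    rw [neg_mul, ← exp_add, neg_eq_neg_one_mul, ← exp_pi_mul_I, ← exp_add]
    congr 1; field_simp; ring
  rw [e1, e2]
  ring

lemma WW_diff {τ u : ℂ} (hτ : 0 < τ.im) (hu : u ∉ LatT (τ + 1)) : DifferentiableAt ℂ (WW τ) u := by
  have h1 := SS_diff (tau'_im hτ) (lat_div hτ hu)
  have h2 : DifferentiableAt ℂ (fun u => SS (τ / (τ + 1)) (u / (τ + 1))) u := by
    have h3 : DifferentiableAt ℂ (fun u : ℂ => u / (τ + 1)) u := by fun_prop
    exact DifferentiableAt.comp u h1 h3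
  unfold WW
  exact DifferentiableAt.mul (by fun_prop) h2

lemma WW_lim {τ : ℂ} (hτ : 0 < τ.im) : Tendsto (fun u => u * WW τ u) (𝓝[≠] 0) (𝓝 (1 / Real.pi)) := by
  have hT0 := T_ne hτ
  have h1 := SS_lim (tau'_im hτ)
  have h2 : Tendsto (fun u : ℂ => u / (τ + 1)) (𝓝[≠] 0) (𝓝[≠] 0) := by
    refine tendsto_nhdsWithin_of_tendsto_nhds_of_eventually_within _ ?_ ?_
    · have : Tendsto (fun u : ℂ => u / (τ + 1)) (𝓝 0) (𝓝 (0 / (τ + 1))) := (continuous_id.div_const _).tendsto _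
      rw [zero_div] at this
      exact this.mono_left nhdsWithin_le_nhds
    · filter_upwards [self_mem_nhdsWithin] with u hu
      exact div_ne_zero hu hT0
  have h3 : Tendsto (fun u : ℂ => exp (Real.pi * I * (u ^ 2 - τ * u) / (τ + 1))) (𝓝[≠] 0) (𝓝 1) := by
    have : Tendsto (fun u : ℂ => exp (Real.pi * I * (u ^ 2 - τ * u) / (τ + 1))) (𝓝 0) (𝓝 (exp (Real.pi * I * (0 ^ 2 - τ * 0) / (τ + 1)))) := by
      apply Continuous.tendsto; fun_prop
    simp at this
    exact this.mono_left nhdsWithin_le_nhds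
  have := h3.mul (h1.comp h2)
  rw [one_mul] at this
  refine this.congr fun u => ?_
  rw [WW]; simp only [Function.comp]; ring

lemma cpow_half_mul (w : ℂ) (hw : w ≠ 0) : w ^ (1 / 2 : ℂ) * w ^ (1 / 2 : ℂ) = w := by
  rw [← cpow_add _ _ hw]; norm_num

theorem mordell_eq {τ : ℂ} (hτ : 0 < τ.im) : ∀ u, u ∉ LatT (τ + 1) → SS τ u - WW τ u =
    th τ * exp (3 * Real.pi * I / 4 - Real.pi * I * τ / 4) * hh (τ + 1) (u - τ / 2) := by
  have hT0 := T_ne hτ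
  have hT : 0 < (τ + 1).im := by simpa using hτ
  set C := th τ * exp (3 * Real.pi * I / 4 - Real.pi * I * τ / 4) with hC
  have key := liouville hT (G := fun u => SS τ u - WW τ u - C * hh (τ + 1) (u - τ / 2)) ?_ ?_ ?_ ?_
  · intro u hu
    exact sub_eq_zero.mp (key u hu)
  · intro u hu
    have h3 : DifferentiableAt ℂ (fun u => hh (τ + 1) (u - τ / 2)) u := by
      have := hh_diff hT; fun_prop
    exact ((SS_diff hτ (by rwa [lat_eq] at hu)).sub (WW_diff hτ hu)).sub (h3.const_mul C)
  · have h3 : Tendsto (fun u => u * (C * hh (τ + 1) (u - τ / 2))) (𝓝[≠] 0) (𝓝 0) := by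
      have : Tendsto (fun u => u * (C * hh (τ + 1) (u - τ / 2))) (𝓝 0) (𝓝 (0 * (C * hh (τ + 1) (0 - τ / 2)))) := by
        apply Continuous.tendsto
        have := (hh_diff hT).continuous; fun_prop
      rw [zero_mul] at this
      exact this.mono_left nhdsWithin_le_nhds
    have := ((SS_lim hτ).sub (WW_lim hτ)).sub h3
    rw [sub_self, sub_zero] at this
    refine this.congr fun u => ?_
    ring
  · intro u hu
    have h1 := hh_add_one hT (u - τ / 2)
    have h2 := WW_add_one hτ hu
    rw [th_trans hτ] at h2
    have hw : -I * (τ + 1) ≠ 0 := by simp [hT0]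
    have hq := cpow_half_mul _ hw
    have hq0 : (-I * (τ + 1)) ^ (1 / 2 : ℂ) ≠ 0 := by
      intro h; rw [h, mul_zero] at hq; exact hw hq.symm
    have e : exp (3 * Real.pi * I / 4 - Real.pi * I * τ / 4) * exp (Real.pi * I * (u - τ / 2 + 1 / 2) ^ 2 / (τ + 1)) =
        exp (Real.pi * I * (u ^ 2 + (1 - τ) * u + 1) / (τ + 1)) := by
      rw [← exp_add]; congr 1; field_simp; ring
    rw [SS_add_one, h2, show u + 1 - τ / 2 = u - τ / 2 + 1 by ring]
    have h1' : hh (τ + 1) (u - τ / 2 + 1) = 2 / (-I * (τ + 1)) ^ (1 / 2 : ℂ) * exp (Real.pi * I * (u - τ / 2 + 1 / 2) ^ 2 / (τ + 1)) - hh (τ + 1) (u - τ / 2) := by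
      linear_combination h1
    rw [h1', hC]
    generalize hh (τ + 1) (u - τ / 2) = H at *
    rw [← e]
    generalize exp (3 * Real.pi * I / 4 - Real.pi * I * τ / 4) = e1 at *
    generalize exp (Real.pi * I * (u - τ / 2 + 1 / 2) ^ 2 / (τ + 1)) = e2 at *
    have hq2 : (-I * (τ + 1)) ^ (1 / 2 : ℂ) * (I / (τ + 1)) = 1 / (-I * (τ + 1)) ^ (1 / 2 : ℂ) := by
      rw [eq_div_iff hq0]
      have : (-I * (τ + 1)) ^ (1 / 2 : ℂ) * (I / (τ + 1)) * (-I * (τ + 1)) ^ (1 / 2 : ℂ) =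
        ((-I * (τ + 1)) ^ (1 / 2 : ℂ) * (-I * (τ + 1)) ^ (1 / 2 : ℂ)) * (I / (τ + 1)) := by ring
      rw [this, hq]; field_simp; rw [I_sq]; ring
    generalize (-I * (τ + 1)) ^ (1 / 2 : ℂ) = Q at *
    rw [show 2 * I / (τ + 1) = 2 * (I / (τ + 1)) by ring, show 2 / Q = 2 * (1 / Q) by ring]
    linear_combination (2 * th τ * e1 * e2) * hq2
  · intro u hu
    have h1 := hh_add_T hT (u - τ / 2)
    have hu' : u ∉ LatT τ := by rwa [lat_eq] at hu
    have h2 := SS_add_tau hτ hu'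
    rw [WW_add_T hτ, show u + (τ + 1) = (u + τ) + 1 by ring, SS_add_one, h2,
      show u + τ + 1 - τ / 2 = u - τ / 2 + (τ + 1) by ring, h1]
    have e1 : exp (2 * Real.pi * I * (u - τ / 2) + Real.pi * I * (τ + 1)) = - exp (2 * Real.pi * I * u) := by
      rw [neg_eq_neg_one_mul, ← exp_pi_mul_I, ← exp_add]; congr 1; ring
    have e2 : exp (3 * Real.pi * I / 4 - Real.pi * I * τ / 4) * exp (Real.pi * I * (u - τ / 2) + 3 * Real.pi * I * (τ + 1) / 4) =
      - I * exp (Real.pi * I * u) := by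
      have : (-I : ℂ) = exp (Real.pi * I + Real.pi / 2 * I) := by
        rw [exp_add, exp_pi_mul_I, exp_pi_div_two_mul_I]; ring
      rw [this, ← exp_add, ← exp_add]; congr 1; ring
    rw [e1, hC]
    linear_combination (-2 * th τ) * e2

end

section
open Complex
open MeasureTheory Set Filter Topology

lemma thetaZw_eq {τ : ℂ} (hτ : 0 < τ.im) : jacobiThetaZw (τ / 2) τ = -I * exp (-(Real.pi * I * τ / 4)) * th τ := by
  have h := (hasSum_shift (th_hasSum hτ) 1).mul_left (-I * exp (-(Real.pi * I * τ / 4)))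
  rw [jacobiThetaZw, ← h.tsum_eq]
  congr 1; ext n
  have hI : -I * (-1 : ℂ) ^ (n + 1) = exp (Real.pi / 2 * I + Real.pi * I * n) := by
    rw [exp_add, exp_pi_div_two_mul_I, exp_int_pi, zpow_add₀ (by norm_num), zpow_one]; ring
  rw [show ∀ A B C D : ℂ, A * B * (C * D) = (A * C) * B * D by intros; ring, hI, ← exp_add, ← exp_add, ← exp_add]
  congr 1; push_cast; ring

lemma quarter_notMem {τ : ℂ} (hτ : 0 < τ.im) : τ / 4 ∉ LatT τ := by
  rintro ⟨m, n, h⟩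
  have := congrArg Complex.im h
  simp at this
  have h2 : (1 : ℝ) = 4 * n := by
    have : τ.im * (1 - 4 * n) = 0 := by linarith
    have := (mul_eq_zero.mp this).resolve_left hτ.ne'
    linarith
  have h3 : (1 : ℤ) = 4 * n := by exact_mod_cast h2
  omega

lemma muZw_eq {τ : ℂ} (hτ : 0 < τ.im) :
    muZw (τ / 4) (τ / 2) τ = (I / 2) * SS τ (τ / 4) / jacobiThetaZw (τ / 2) τ := by
  rw [muZw, SS, div_mul_eq_mul_div, ← tsum_mul_left, ← tsum_mul_left]
  congr 2; ext n
  have hs := sin_ne_of (quarter_notMem hτ) n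
  have e4 : 1 - exp (2 * Real.pi * I * (τ / 4)) * exp (2 * Real.pi * I * n * τ) =
      -(2 * I) * exp (Real.pi * (τ / 4 + n * τ) * I) * sin (Real.pi * (τ / 4 + n * τ)) := by
    rw [Complex.sin]
    have h1 : exp (-(Real.pi * (τ / 4 + n * τ)) * I) * exp ((Real.pi * (τ / 4 + n * τ)) * I) = 1 := by
      rw [← exp_add, ← exp_zero]; congr 1; ring
    have h2 : exp (2 * Real.pi * I * (τ / 4)) * exp (2 * Real.pi * I * n * τ) = exp (Real.pi * (τ / 4 + n * τ) * I) ^ 2 := by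
      rw [← exp_nat_mul, ← exp_add]; congr 1; push_cast; ring
    rw [h2]
    linear_combination I ^ 2 * h1 + (exp (Real.pi * (τ / 4 + n * τ) * I) ^ 2 - 1) * (-1) * I_sq
  rw [e4, st, sa]
  have e5 : exp (Real.pi * I * (τ / 4)) * exp (2 * Real.pi * I * n * (τ / 2)) * exp (Real.pi * I * τ * n * (n + 1)) =
      exp (Real.pi * I * τ * (n ^ 2 + n)) * exp (Real.pi * (τ / 4 + n * τ) * I) := by
    rw [← exp_add, ← exp_add, ← exp_add]; congr 1; ring
  have hX := exp_ne_zero (Real.pi * (τ / 4 + n * τ) * I)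
  generalize exp (Real.pi * (τ / 4 + n * τ) * I) = X at *
  generalize sin (Real.pi * (τ / 4 + n * τ)) = Y at *
  generalize exp (Real.pi * I * (τ / 4)) = A at *
  generalize exp (2 * Real.pi * I * n * (τ / 2)) = B at *
  generalize exp (Real.pi * I * τ * n * (n + 1)) = Z at *
  generalize exp (Real.pi * I * τ * (n ^ 2 + n)) = V at *
  generalize ((-1 : ℂ)) ^ n = J at *
  have hI := I_ne_zero
  field_simp
  linear_combination (-J) * e5 - J * V * X * I_sq

lemma V21_eq {τ : ℂ} (hτ : 0 < τ.im) :
    V21 τ = -(I / 2) * exp (3 * Real.pi * I * τ / 16) * SS τ (τ / 4) / th τ := by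
  rw [V21, muZw_eq hτ, thetaZw_eq hτ]
  have h0 := th_ne hτ
  have e : exp (3 * Real.pi * I * τ / 16) * exp (-(Real.pi * I * τ / 4)) = exp (-Real.pi * I * τ / 16) := by
    rw [← exp_add]; congr 1; ring
  rw [← e]
  have hX := exp_ne_zero (-(Real.pi * I * τ / 4))
  generalize exp (-(Real.pi * I * τ / 4)) = X at *
  have hI := I_ne_zero
  field_simp

lemma sqrt_T {T : ℂ} (hT : 0 < T.im) : (-I * T) ^ (1 / 2 : ℂ) = exp (-(Real.pi * I / 4)) * T ^ (1 / 2 : ℂ) := by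
  have hpi := Real.pi_pos
  have hT0 : T ≠ 0 := by rintro rfl; simp at hT
  have hI : (-I : ℂ) ≠ 0 := by simp
  rw [cpow_def_of_ne_zero (mul_ne_zero hI hT0), cpow_def_of_ne_zero hT0, ← exp_add]
  have ha := arg_nonneg_iff.mpr hT.le
  have hb := arg_le_pi T
  rw [(log_mul_eq_add_log_iff hI hT0).mpr (by rw [arg_neg_I]; constructor <;> linarith), log_neg_I]
  congr 1; ring

lemma hh_eval {τ : ℂ} (hτ : 0 < τ.im) :
    hh (τ + 1) (-(τ / 4)) = exp (Real.pi * I * (τ + 1) / 16 - Real.pi * I / 8) *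
      ∫ x : ℝ, gg x * exp (Real.pi * I * (τ + 1) * x ^ 2) := by
  have hpi := Real.pi_pos
  have hT : 0 < (τ + 1).im := by simpa using hτ
  set T := τ + 1 with hTd
  set z := -(τ / 4) with hz
  set f : ℂ → ℂ := fun w => NN T z w / cosh (Real.pi * w) with hf
  have f1 : ∀ x : ℝ, f (x + (1 / 4 : ℝ) * I) = exp (Real.pi * I * T / 16 - Real.pi * I / 8) *
      (gg x * exp (Real.pi * I * T * x ^ 2)) := by
    intro x
    rw [hf]; simp only
    rw [gg, NN]
    have e1 : (x : ℂ) + (1 / 4 : ℝ) * I = x + I / 4 := by push_cast; ring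
    rw [e1, div_mul_eq_mul_div, mul_div_assoc', ← exp_add, ← exp_add]
    congr 2
    have : τ = T - 1 := by rw [hTd]; ring
    rw [hz, this]
    linear_combination (Real.pi * T * x / 2 + Real.pi * I * T / 16) * I_sq
  have i0 : Integrable fun x : ℝ => f x := hh_int hT z
  have i1 : Integrable fun x : ℝ => f (x + (1 / 4 : ℝ) * I) := by
    simp_rw [f1]; exact (gg_int hT).const_mul _
  have hdd : ∀ w : ℂ, 0 ≤ w.im → w.im ≤ 1 / 4 → DifferentiableAt ℂ f w := by
    intro w h0 h1
    refine DifferentiableAt.div (by unfold NN; fun_prop) (by fun_prop) ?_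
    intro h
    have := cosh_pi_strip h0 (by linarith) h
    rw [this] at h1; simp at h1; norm_num at h1
  set a := Real.pi * T.im with ha
  have hap : 0 < a := by positivity
  set b := 2 * Real.pi * (‖T‖ + ‖z‖) with hb
  have hG : ∀ r : ℝ, Real.exp (-a * r ^ 2) * Real.exp (b * r) ≤ Real.exp (b ^ 2 / (4 * a)) := by
    intro r
    rw [← Real.exp_add]
    apply Real.exp_le_exp.mpr
    rw [le_div_iff₀ (by positivity)]
    nlinarith [sq_nonneg (2 * a * r - b)]
  set K := Real.exp (Real.pi * (|T.im| + 2 * ‖z‖)) * Real.exp (b ^ 2 / (4 * a)) with hK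
  have key := shift_lemma (f := f) (a := 1 / 4) (by norm_num) hdd (B := fun r => K / r) (by
      intro x y h0 h1 hx
      rw [hf]; simp only
      rw [norm_div]
      have n1 := NN_norm_le T z x y h0 (by linarith)
      rw [← ha, ← hb, ← sq_abs] at n1
      have n2 : ‖NN T z (x + y * I)‖ ≤ K := by
        rw [hK]
        refine n1.trans ?_
        gcongr
        exact hG |x|
      have n3 : |x| ≤ ‖cosh (Real.pi * (x + y * I))‖ := by
        have := sinh_le_cosh (Real.pi * x) (Real.pi * y)
        rw [show ((Real.pi * x : ℝ) : ℂ) + (Real.pi * y : ℝ) * I = Real.pi * (x + y * I) by push_cast; ring] at this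
        refine le_trans ?_ this
        rw [Real.abs_sinh, abs_mul, abs_of_pos hpi]
        refine le_trans ?_ (Real.self_le_sinh_iff.mpr (by positivity))
        nlinarith [abs_nonneg x, Real.pi_gt_three]
      have : 0 < |x| := by linarith
      have hKp : 0 ≤ K := (norm_nonneg _).trans n2
      gcongr) (tendsto_const_nhds.div_atTop tendsto_id) i0 i1
  simp_rw [f1] at key
  rw [integral_const_mul] at key
  exact key

lemma lhs_eval {τ : ℂ} (hτ : 0 < τ.im) :
    V21 τ - (Complex.exp (2 * (Real.pi : ℂ) * I / 8))⁻¹ *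
          (τ + 1) ^ (-(1/2 : ℂ)) * V21 (τ / (τ + 1)) =
    1 / 2 * exp (3 * Real.pi * I / 16) * ∫ x : ℝ, gg x * exp (Real.pi * I * (τ + 1) * x ^ 2) := by
  have hT0 := T_ne hτ
  have hT : 0 < (τ + 1).im := by simpa using hτ
  have hth := th_ne hτ
  have m := mordell_eq hτ (τ / 4) (by rw [lat_eq]; exact quarter_notMem hτ)
  rw [show τ / 4 - τ / 2 = -(τ / 4) by ring, hh_eval hτ] at m
  have hsq := cpow_half_mul _ hT0
  have hq0 : (τ + 1) ^ (1 / 2 : ℂ) ≠ 0 := by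
    intro h; rw [h, mul_zero] at hsq; exact hT0 hsq.symm
  rw [V21_eq hτ, V21_eq (tau'_im hτ), th_trans hτ, sqrt_T hT, cpow_neg]
  have e0 : (exp (2 * (Real.pi : ℂ) * I / 8))⁻¹ = exp (-(Real.pi * I / 4)) := by
    rw [← exp_neg]; congr 1; ring
  rw [e0]
  have e1 : -(I / 2) * exp (3 * Real.pi * I * τ / 16) * WW τ (τ / 4) / th τ =
      exp (-(Real.pi * I / 4)) * ((τ + 1) ^ (1 / 2 : ℂ))⁻¹ * (-(I / 2) * exp (3 * Real.pi * I * (τ / (τ + 1)) / 16) * SS (τ / (τ + 1)) (τ / (τ + 1) / 4) /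
        (exp (-(Real.pi * I / 4)) * (τ + 1) ^ (1 / 2 : ℂ) * th τ)) := by
    rw [WW, show τ / 4 / (τ + 1) = τ / (τ + 1) / 4 by ring]
    have e2 : exp (3 * Real.pi * I * (τ / (τ + 1)) / 16) = exp (3 * Real.pi * I * τ / 16) * exp (Real.pi * I * ((τ / 4) ^ 2 - τ * (τ / 4)) / (τ + 1)) := by
      rw [← exp_add]; congr 1; field_simp; ring
    rw [e2]
    have hX := exp_ne_zero (-(Real.pi * I / 4))
    have h1 : 1 / (τ + 1) = ((τ + 1) ^ (1 / 2 : ℂ))⁻¹ * ((τ + 1) ^ (1 / 2 : ℂ))⁻¹ := by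
      rw [← mul_inv, hsq, one_div]
    rw [h1]
    clear m e2 h1 e0 hsq
    generalize SS (τ / (τ + 1)) (τ / (τ + 1) / 4) = s at *
    generalize exp (-(Real.pi * I / 4)) = X at *
    generalize exp (3 * Real.pi * I * τ / 16) = E at *
    generalize exp (Real.pi * I * ((τ / 4) ^ 2 - τ * (τ / 4)) / (τ + 1)) = E' at *
    generalize (τ + 1) ^ (1 / 2 : ℂ) = Q at *
    generalize th τ = t at *
    field_simp
  rw [← e1]
  have e3 : SS τ (τ / 4) = WW τ (τ / 4) + th τ * exp (3 * Real.pi * I / 4 - Real.pi * I * τ / 4) *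
      (exp (Real.pi * I * (τ + 1) / 16 - Real.pi * I / 8) * ∫ x : ℝ, gg x * exp (Real.pi * I * (τ + 1) * x ^ 2)) := by
    linear_combination m
  rw [e3]
  generalize (∫ x : ℝ, gg x * exp (Real.pi * I * (τ + 1) * x ^ 2)) = J at *
  have e4 : -I * (exp (3 * Real.pi * I * τ / 16) * exp (3 * Real.pi * I / 4 - Real.pi * I * τ / 4) * exp (Real.pi * I * (τ + 1) / 16 - Real.pi * I / 8)) =
      exp (3 * Real.pi * I / 16) := by
    have : (-I : ℂ) = exp (-(Real.pi / 2 * I)) := by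
      rw [exp_neg, exp_pi_div_two_mul_I, inv_I]
    rw [this, ← exp_add, ← exp_add, ← exp_add]; congr 1; ring
  rw [← e4]
  field_simp
  ring

end

/-- Theorem 1.2(ii) for `(m,n) = (2,1)` on ℍ:
`V₂₁(τ) − ζ₈⁻¹ (τ+1)^{−1/2} V₂₁(τ/(τ+1)) = −(i/8)∫_{1}^{i∞} E₂(u/32)/√(−i(u+τ)) du`. -/
theorem V21_quantum_transform :
    ∀ τ : ℂ, 0 < τ.im →
      V21 τ - (Complex.exp (2 * (Real.pi : ℂ) * I / 8))⁻¹ *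
          (τ + 1) ^ (-(1/2 : ℂ)) * V21 (τ / (τ + 1)) =
        -(I/8) * (I * ∫ t in Set.Ioi (0 : ℝ),
          E2fun ((1 + I * t) / 32) / ((-I * (1 + I * t + τ)) ^ ((1 : ℂ)/2))) := by
  intro τ hτ
  rw [lhs_eval hτ, rhs_eval hτ]
end

section
/- Define V₁₁(τ) := −e^{−πiτ/16}·μ(τ/4 + 1/2, τ/2; τ) for τ ∈ ℍ. Then for every τ ∈ ℍ: V₁₁(τ + 4) = ζ₈^{−1}·V₁₁(τ), where ζ₈ := e^{2πi/8}; equivalently V₁₁(τ) − ζ₈·V₁₁(τ+4) = 0. (This is the transformation of Theorem 1.2(iii) for (m,n) = (1,1), with a₁ = 8, κ₁₁ = 1, b₁ = 4.) -/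
open Complex

/-- `V₁₁(τ) = −e^{−πiτ/16} μ(τ/4 + 1/2, τ/2; τ)`. -/
noncomputable def V11 (τ : ℂ) : ℂ :=
  -Complex.exp (-(Real.pi : ℂ) * I * τ / 16) * muZw (τ/4 + 1/2) (τ/2) τ

lemma exp_add_int (a b : ℂ) (k : ℤ) (h : a = b + k * (2 * (Real.pi : ℂ) * I)) :
    Complex.exp a = Complex.exp b := by
  rw [h, Complex.exp_add, Complex.exp_int_mul_two_pi_mul_I, mul_one]

lemma exp_add_half (a b : ℂ) (k : ℤ)
    (h : a = b + k * (2 * (Real.pi : ℂ) * I) + (Real.pi : ℂ) * I) :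
    Complex.exp a = -Complex.exp b := by
  rw [h, Complex.exp_add, Complex.exp_add, Complex.exp_int_mul_two_pi_mul_I, Complex.exp_pi_mul_I]
  ring

lemma theta_shift (v τ : ℂ) : jacobiThetaZw (v + 2) (τ + 4) = -jacobiThetaZw v τ := by
  unfold jacobiThetaZw
  rw [← tsum_neg]
  refine tsum_congr fun n => ?_
  rw [exp_add_int (2 * (Real.pi : ℂ) * I * ((n : ℂ) + 1/2) * (v + 2 + 1/2))
      (2 * (Real.pi : ℂ) * I * ((n : ℂ) + 1/2) * (v + 1/2)) (2 * n + 1) (by push_cast; ring),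
    exp_add_half ((Real.pi : ℂ) * I * (τ + 4) * ((n : ℂ) + 1/2) ^ 2)
      ((Real.pi : ℂ) * I * τ * ((n : ℂ) + 1/2) ^ 2) (2 * n ^ 2 + 2 * n) (by push_cast; ring)]
  ring

lemma mu_shift (u v τ : ℂ) : muZw (u + 1) (v + 2) (τ + 4) = muZw u v τ := by
  unfold muZw
  rw [theta_shift, exp_add_half ((Real.pi : ℂ) * I * (u + 1)) ((Real.pi : ℂ) * I * u) 0
    (by push_cast; ring), neg_div_neg_eq]
  congr 1
  refine tsum_congr fun n => ?_
  rw [exp_add_int (2 * (Real.pi : ℂ) * I * (n : ℂ) * (v + 2))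
      (2 * (Real.pi : ℂ) * I * (n : ℂ) * v) (2 * n) (by push_cast; ring),
    exp_add_int ((Real.pi : ℂ) * I * (τ + 4) * (n : ℂ) * ((n : ℂ) + 1))
      ((Real.pi : ℂ) * I * τ * (n : ℂ) * ((n : ℂ) + 1)) (2 * n * (n + 1)) (by push_cast; ring),
    exp_add_int (2 * (Real.pi : ℂ) * I * (u + 1)) (2 * (Real.pi : ℂ) * I * u) 1
      (by push_cast; ring),
    exp_add_int (2 * (Real.pi : ℂ) * I * (n : ℂ) * (τ + 4))
      (2 * (Real.pi : ℂ) * I * (n : ℂ) * τ) (4 * n) (by push_cast; ring)]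

/-- Theorem 1.2(iii) for `(m,n) = (1,1)`: `V₁₁(τ + 4) = ζ₈⁻¹ V₁₁(τ)` on ℍ. -/
theorem V11_shift :
    ∀ τ : ℂ, 0 < τ.im →
      V11 (τ + 4) = (Complex.exp (2 * (Real.pi : ℂ) * I / 8))⁻¹ * V11 τ := by
  intro τ _
  unfold V11
  rw [show (τ + 4) / 4 + 1 / 2 = (τ / 4 + 1 / 2) + 1 by ring,
    show (τ + 4) / 2 = τ / 2 + 2 by ring, mu_shift, ← Complex.exp_neg,
    show -(Real.pi : ℂ) * I * (τ + 4) / 16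
      = -(2 * (Real.pi : ℂ) * I / 8) + -(Real.pi : ℂ) * I * τ / 16 by ring, Complex.exp_add]
  ring
end

section
/- Let m ∈ {1, 2, 5}, with associated constants (ℓ_m, a_m, c_m, d_m) equal to (2, 8, 8, 3) for m = 1, (1, 8, 8, 3) for m = 2, and (2, 12, 12, 5) for m = 5. Let h ∈ ℤ odd and k ∈ ℕ with k ≥ 1, gcd(h,k) = 1, h/k ≠ −1/ℓ_m, and additionally for m = 5 assume h ≡ ±1 (mod 6) or k even (i.e., h/k ∈ S_{m1}∖{−1/ℓ_m}). Then all q-Pochhammer denominators in the two finite sums below are nonzero, and F_{h,k}(−i^{ℓ_m−3}·ζ_{c_m k}^{h}, −i^{3−ℓ_m}·ζ_{a_m k}^{d_m h}) + F_{h,k}(i^{ℓ_m−3}·ζ_{c_m k}^{h}, i^{3−ℓ_m}·ζ_{a_m k}^{d_m h}) = 0. In particular, for m = 1 this reads F_{h,k}(i·ζ_{8k}^{h}, −i·ζ_{8k}^{3h}) + F_{h,k}(−i·ζ_{8k}^{h}, i·ζ_{8k}^{3h}) = 0. -/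
open Complex

/-- The root of unity `ζ_N = e^{2πi/N}`. -/
noncomputable def zetaRoot (N : ℕ) : ℂ := Complex.exp (2 * (Real.pi : ℂ) * I / N)

/-- The q-Pochhammer symbol `(a; q)_n = ∏_{j=0}^{n-1} (1 - a q^j)`. -/
noncomputable def qPoch (a q : ℂ) (n : ℕ) : ℂ := ∏ j ∈ Finset.range n, (1 - a * q ^ j)

/-- The truncated q-hypergeometric series
`F_{h,k}(z₁,z₂) = ∑_{n=0}^{k−1} (−ζ_{2k}^h; ζ_{2k}^h)_n ζ_{4k}^{n(n+1)h}
  / ((z₁; ζ_{2k}^h)_{n+1}(z₂; ζ_{2k}^h)_{n+1})`. -/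
noncomputable def Fhk (h : ℤ) (k : ℕ) (z₁ z₂ : ℂ) : ℂ :=
  ∑ n ∈ Finset.range k,
    qPoch (-(zetaRoot (2 * k) ^ h)) (zetaRoot (2 * k) ^ h) n *
        zetaRoot (4 * k) ^ ((n * (n + 1) : ℤ) * h) /
      (qPoch z₁ (zetaRoot (2 * k) ^ h) (n + 1) * qPoch z₂ (zetaRoot (2 * k) ^ h) (n + 1))

lemma qPoch_succ (a q : ℂ) (n : ℕ) : qPoch a q (n+1) = qPoch a q n * (1 - a * q^n) := by
  simp [qPoch, Finset.prod_range_succ]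

lemma qPoch_succ' (a q : ℂ) (n : ℕ) : qPoch a q (n+1) = (1 - a) * qPoch (a * q) q n := by
  simp only [qPoch, Finset.prod_range_succ', pow_zero, mul_one]
  rw [mul_comm]
  congr 1
  apply Finset.prod_congr rfl
  intro j _
  ring

noncomputable def gTwo (w : ℂ) (k : ℕ) (x : ℂ) : ℂ :=
  ∑ n ∈ Finset.range k, qPoch (-(w^2)) (w^2) n * w^(n*(n+1)) /
    (qPoch x (w^2) (n+1) * qPoch (w^2/x) (w^2) (n+1))

lemma qPoch_ne (a q : ℂ) (k : ℕ) (hq : q^k = -1) (ha : a^(2*k) ≠ 1) (n : ℕ) :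
    qPoch a q n ≠ 0 := by
  rw [qPoch, Finset.prod_ne_zero_iff]
  intro j _ h0
  apply ha
  have h1 : a * q^j = 1 := (sub_eq_zero.mp h0).symm
  have h2 : (a * q^j)^(2*k) = a^(2*k) * ((q^k)^2)^j := by ring
  rw [h1, hq] at h2
  simpa using h2.symm

lemma q_ne (q : ℂ) (k : ℕ) (hk : 1 ≤ k) (hq : q^k = -1) : q ≠ 0 := by
  rintro rfl
  rw [zero_pow (by omega)] at hq
  norm_num at hq

lemma div_pow_ne (q x : ℂ) (k : ℕ) (hq : q^k = -1) (hx1 : x^(2*k) ≠ 1) :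
    (q/x)^(2*k) ≠ 1 := by
  rw [div_pow, mul_comm 2 k, pow_mul q, hq, mul_comm k 2]
  intro h
  apply hx1
  simpa using h

lemma gTwo_fe (w : ℂ) (k : ℕ) (hk : 1 ≤ k) (hq : (w^2)^k = -1) (x : ℂ) (hx0 : x ≠ 0)
    (hx1 : x^(2*k) ≠ 1) : gTwo w k (x * w^2) = -x^2 * gTwo w k x - x := by
  have hq0 := q_ne _ k hk hq
  have hxq : (x * w^2)^(2*k) ≠ 1 := by
    rw [mul_pow, mul_comm 2 k, pow_mul (w^2), hq, mul_comm k 2]; simpa using hx1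
  have hdx := div_pow_ne (w^2) x k hq hx1
  set u : ℕ → ℂ := fun n => qPoch (-(w^2)) (w^2) n * w^(n*(n+1)) /
    (qPoch (x * w^2) (w^2) n * qPoch (w^2/x) (w^2) n) with hu
  have key : ∀ n, qPoch (-(w^2)) (w^2) n * w^(n*(n+1)) /
      (qPoch (x * w^2) (w^2) (n+1) * qPoch (w^2/(x * w^2)) (w^2) (n+1)) +
      x^2 * (qPoch (-(w^2)) (w^2) n * w^(n*(n+1)) /
      (qPoch x (w^2) (n+1) * qPoch (w^2/x) (w^2) (n+1))) = x * u (n+1) - x * u n := by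
    intro n
    have e1 : w^2/(x*w^2) = 1/x := by rw [← div_div, div_right_comm, div_self hq0]
    have A := qPoch_ne _ _ k hq hxq (n+1)
    have B := qPoch_ne _ _ k hq hdx (n+1)
    have C := qPoch_ne _ _ k hq hx1 1
    have ew : w^((n+1)*(n+1+1)) = w^(n*(n+1)) * (w^2 * (w^2)^n) := by ring
    simp only [hu, e1]
    rw [qPoch_succ' (1/x), qPoch_succ' x, ew]
    rw [show 1/x * w^2 = w^2/x by ring]
    rw [qPoch_succ] at A B
    simp only [qPoch_succ (x*w^2), qPoch_succ (w^2/x), qPoch_succ (-(w^2))]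
    obtain ⟨A1, A2⟩ := mul_ne_zero_iff.mp A
    obtain ⟨B1, B2⟩ := mul_ne_zero_iff.mp B
    have C' : 1 - x ≠ 0 := by simpa [qPoch] using C
    have D : 1 - 1/x ≠ 0 := by
      intro h; apply C'; field_simp at h; linear_combination -h
    generalize qPoch (x*w^2) (w^2) n = P at *
    generalize qPoch (w^2/x) (w^2) n = R at *
    generalize qPoch (-(w^2)) (w^2) n = S at *
    generalize w^(n*(n+1)) = V at *
    have eA : 1 - x * w^2 * (w^2)^n = 1 - x * (w^2 * (w^2)^n) := by ring
    have eB : 1 - w^2 / x * (w^2)^n = (x - (w^2 * (w^2)^n)) / x := by field_simp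
    have eC : 1 - -w^2 * (w^2)^n = 1 + (w^2 * (w^2)^n) := by ring
    have eD : 1 - 1/x = -(1-x)/x := by field_simp; ring
    rw [eA] at A2; rw [eB] at B2
    rw [eA, eB, eC, eD]
    generalize w^2 * (w^2)^n = Q at *
    have B3 : x - Q ≠ 0 := by
      intro h; apply B2; rw [h]; simp
    field_simp
    ring
  have hsum := Finset.sum_congr (rfl : Finset.range k = Finset.range k) (fun n _ => key n)
  rw [Finset.sum_add_distrib, ← Finset.mul_sum,
    Finset.sum_range_sub (fun n => x * u n)] at hsum
  have u0 : u 0 = 1 := by simp [hu, qPoch]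
  have uk : u k = 0 := by
    have : qPoch (-(w^2)) (w^2) k = 0 := by
      obtain ⟨j, rfl⟩ : ∃ j, k = j+1 := ⟨k-1, by omega⟩
      rw [qPoch_succ]
      have : 1 - -w^2 * (w^2)^j = 1 + (w^2)^(j+1) := by ring
      rw [this, hq]; simp
    simp [hu, this]
  rw [u0, uk] at hsum
  unfold gTwo
  linear_combination hsum

lemma gTwo_cont (w : ℂ) (k : ℕ) (hq : (w^2)^k = -1) (x : ℂ) (hx0 : x ≠ 0)
    (hx1 : x^(2*k) ≠ 1) : ContinuousAt (gTwo w k) x := by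
  unfold gTwo
  have hdx := div_pow_ne (w^2) x k hq hx1
  refine tendsto_finsetSum _ (fun n _ => ?_)
  refine ContinuousAt.div (by fun_prop) ?_ (mul_ne_zero (qPoch_ne _ _ k hq hx1 _) (qPoch_ne _ _ k hq hdx _))
  unfold qPoch
  refine ContinuousAt.mul (by fun_prop) ?_
  refine tendsto_finsetProd _ (fun n _ => ?_)
  have : ContinuousAt (fun y : ℂ => 1 - w^2/y * (w^2)^n) x := by fun_prop (disch := assumption)
  exact this

lemma neg_pow_two_mul (x : ℂ) (k : ℕ) : (-x)^(2*k) = x^(2*k) := by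
  rw [pow_mul, neg_sq, ← pow_mul]

lemma gTwo_odd' (w : ℂ) (k : ℕ) (hk : 1 ≤ k) (hq : (w^2)^k = -1) (x : ℂ) (hx0 : x ≠ 0)
    (hx1 : x^(2*k) ≠ 1) (hx2 : x^(2*k) ≠ -1) : gTwo w k x + gTwo w k (-x) = 0 := by
  have hq0 := q_ne _ k hk hq
  have it : ∀ j : ℕ, gTwo w k (x * (w^2)^j) + gTwo w k (-(x * (w^2)^j)) =
      (-x^2)^j * (w^2)^(j*(j-1)) * (gTwo w k x + gTwo w k (-x)) := by
    intro j
    induction j with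
    | zero => simp
    | succ j ih =>
      have h0 : x * (w^2)^j ≠ 0 := mul_ne_zero hx0 (pow_ne_zero _ hq0)
      have h1 : (x * (w^2)^j)^(2*k) ≠ 1 := by
        have : (x * (w^2)^j)^(2*k) = x^(2*k) * (((w^2)^k)^2)^j := by ring
        rw [this, hq]; simpa using hx1
      have f1 := gTwo_fe w k hk hq _ h0 h1
      have f2 := gTwo_fe w k hk hq (-(x * (w^2)^j)) (neg_ne_zero.mpr h0)
        (by rwa [neg_pow_two_mul])
      rw [show x * (w^2)^(j+1) = x * (w^2)^j * w^2 by ring,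
        show -(x * (w^2)^j * w^2) = -(x * (w^2)^j) * w^2 by ring, f1, f2]
      have e : (w^2)^((j+1)*(j+1-1)) = (w^2)^(j*(j-1)) * (w^2)^(2*j) := by
        rw [← pow_add]; congr 1
        cases j with
        | zero => simp
        | succ i => simp; ring
      rw [e]
      have e2 : (w^2)^(2*j) = ((w^2)^j)^2 := by ring
      rw [e2]
      linear_combination (-x^2 * ((w^2)^j)^2) * ih
  have hk' := it k
  have e3 : (-x^2)^k * (w^2)^(k*(k-1)) = - x^(2*k) := by
    rw [pow_mul (w^2), hq, neg_pow, ← pow_mul]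
    obtain ⟨j, rfl⟩ : ∃ j, k = j+1 := ⟨k-1, by omega⟩
    have : ((-1:ℂ)^j)*(-1)^j = 1 := by rw [← mul_pow]; simp
    simp only [Nat.add_sub_cancel]
    rw [pow_succ]
    linear_combination (-x^(2*(j+1))) * this
  rw [e3, hq] at hk'
  simp only [mul_neg, mul_one, neg_neg] at hk'
  have : (1 + x^(2*k)) * (gTwo w k x + gTwo w k (-x)) = 0 := by linear_combination hk'
  rcases mul_eq_zero.mp this with h | h
  · exact absurd (by linear_combination h) hx2
  · exact h

lemma ev_pow_ne (n : ℕ) (hn : 0 < n) (a x : ℂ) :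
    ∀ᶠ y in nhdsWithin x {x}ᶜ, y^n ≠ a := by
  have hfin : ({y : ℂ | y^n = a}).Finite := by
    apply Set.Finite.subset (Polynomial.nthRoots n a).toFinset.finite_toSet
    intro y hy
    simpa [Polynomial.mem_nthRoots hn] using hy
  have hc : IsClosed ({y : ℂ | y^n = a} \ {x}) := (hfin.subset Set.sdiff_subset).isClosed
  have := hc.isOpen_compl.mem_nhds (x := x) (by simp)
  filter_upwards [mem_nhdsWithin_of_mem_nhds this, self_mem_nhdsWithin] with y h1 h2 h3
  exact h1 ⟨h3, h2⟩

lemma gTwo_odd (w : ℂ) (k : ℕ) (hk : 1 ≤ k) (hq : (w^2)^k = -1) (x : ℂ) (hx0 : x ≠ 0)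
    (hx1 : x^(2*k) ≠ 1) : gTwo w k x + gTwo w k (-x) = 0 := by
  have hc : ContinuousAt (fun y => gTwo w k y + gTwo w k (-y)) x := by
    apply ContinuousAt.add (gTwo_cont w k hq x hx0 hx1)
    exact ContinuousAt.comp (f := fun y : ℂ => -y) (g := gTwo w k) (gTwo_cont w k hq (-x)
      (neg_ne_zero.mpr hx0) (by rwa [neg_pow_two_mul])) continuous_neg.continuousAt
  have ht : Filter.Tendsto (fun y => gTwo w k y + gTwo w k (-y)) (nhdsWithin x {x}ᶜ)
      (nhds (gTwo w k x + gTwo w k (-x))) := hc.tendsto.mono_left nhdsWithin_le_nhds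
  refine tendsto_nhds_unique ht (tendsto_const_nhds.congr' ?_)
  filter_upwards [ev_pow_ne 1 one_pos 0 x, ev_pow_ne (2*k) (by omega) 1 x,
    ev_pow_ne (2*k) (by omega) (-1) x] with y h0 h1 h2
  exact (gTwo_odd' w k hk hq y (by simpa using h0) h1 h2).symm

lemma zetaRoot_pow (N M : ℕ) (hN : N ≠ 0) : zetaRoot (N * M) ^ N = zetaRoot M := by
  unfold zetaRoot
  rw [← Complex.exp_nat_mul]
  congr 1
  have : (N : ℂ) ≠ 0 := by exact_mod_cast hN
  push_cast
  by_cases hM : (M : ℂ) = 0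
  · simp [hM]
  · field_simp

lemma zetaRoot_prim (N : ℕ) (hN : N ≠ 0) : IsPrimitiveRoot (zetaRoot N) N :=
  Complex.isPrimitiveRoot_exp N hN

lemma zpow_comm' (a : ℂ) (h : ℤ) (n : ℕ) : (a^h)^n = (a^n)^h := by
  rw [← zpow_natCast, ← zpow_natCast, zpow_comm]

lemma zetaRoot_two : zetaRoot 2 = -1 := by
  unfold zetaRoot
  rw [show 2 * (Real.pi : ℂ) * I / ((2:ℕ):ℂ) = Real.pi * I by push_cast; ring]
  exact Complex.exp_pi_mul_I

lemma final_aux (h : ℤ) (k : ℕ) (hk : 1 ≤ k) (hodd : Odd h) (x y : ℂ)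
    (hxy : x * y = zetaRoot (2*k) ^ h) (hx1 : x^(2*k) ≠ 1) :
    (∀ n ∈ Finset.range k,
      qPoch (-x) (zetaRoot (2 * k) ^ h) (n + 1) ≠ 0 ∧
      qPoch (-y) (zetaRoot (2 * k) ^ h) (n + 1) ≠ 0 ∧
      qPoch x (zetaRoot (2 * k) ^ h) (n + 1) ≠ 0 ∧
      qPoch y (zetaRoot (2 * k) ^ h) (n + 1) ≠ 0) ∧
    Fhk h k (-x) (-y) + Fhk h k x y = 0 := by
  set w := zetaRoot (4*k) ^ h with hw
  have hwq : zetaRoot (2*k) ^ h = w^2 := by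
    rw [hw, zpow_comm', show 4*k = 2*(2*k) by ring, zetaRoot_pow 2 _ (by norm_num)]
  have hq : (w^2)^k = -1 := by
    rw [← hwq, zpow_comm', mul_comm 2 k, zetaRoot_pow k 2 (by omega), zetaRoot_two]
    exact hodd.neg_one_zpow
  have hq0 := q_ne _ k hk hq
  have hx0 : x ≠ 0 := by
    rintro rfl
    rw [zero_mul, hwq] at hxy
    exact hq0 hxy.symm
  have hy : y = w^2/x := by rw [← hwq, ← hxy]; field_simp
  have hF : ∀ a, Fhk h k a (w^2/a) = gTwo w k a := by
    intro a
    unfold Fhk gTwo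
    refine Finset.sum_congr rfl (fun n _ => ?_)
    rw [hwq]
    congr 2
    rw [hw, zpow_comm', ← zpow_natCast, ← zpow_mul]
    push_cast
    rfl
  have hy1 : y^(2*k) ≠ 1 := by rw [hy]; exact div_pow_ne _ _ k hq hx1
  constructor
  · intro n _
    rw [hwq]
    exact ⟨qPoch_ne _ _ k hq (by rwa [neg_pow_two_mul]) _,
      qPoch_ne _ _ k hq (by rwa [neg_pow_two_mul]) _, qPoch_ne _ _ k hq hx1 _,
      qPoch_ne _ _ k hq hy1 _⟩
  · have : -y = w^2/(-x) := by rw [hy, div_neg]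
    rw [this, hy, hF, hF, add_comm]
    exact gTwo_odd w k hk hq x hx0 hx1

/-- Identity (1.8) of Corollary 1.3 for `m ∈ {1,2,5}`, with constants
`(ℓ_m, a_m, c_m, d_m) = (2,8,8,3), (1,8,8,3), (2,12,12,5)` respectively, valid for
`h/k ∈ S_{m1} ∖ {−1/ℓ_m}`; in addition all q-Pochhammer denominators are nonzero. -/
theorem Fhk_vanishing_sum (lm am cm dm : ℕ)
    (hcase : (lm, am, cm, dm) = (2, 8, 8, 3) ∨ (lm, am, cm, dm) = (1, 8, 8, 3) ∨
      (lm, am, cm, dm) = (2, 12, 12, 5))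
    (h : ℤ) (k : ℕ) (hk : 1 ≤ k) (hodd : Odd h) (hcop : Int.gcd h (k : ℤ) = 1)
    (hne : (h : ℚ) / (k : ℚ) ≠ -1 / (lm : ℚ))
    (hS5 : (lm, am, cm, dm) = (2, 12, 12, 5) → (h % 6 = 1 ∨ h % 6 = 5 ∨ Even k)) :
    (∀ n ∈ Finset.range k,
      qPoch (-(I ^ ((lm : ℤ) - 3)) * zetaRoot (cm * k) ^ h)
          (zetaRoot (2 * k) ^ h) (n + 1) ≠ 0 ∧
      qPoch (-(I ^ (3 - (lm : ℤ))) * zetaRoot (am * k) ^ ((dm : ℤ) * h))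
          (zetaRoot (2 * k) ^ h) (n + 1) ≠ 0 ∧
      qPoch (I ^ ((lm : ℤ) - 3) * zetaRoot (cm * k) ^ h)
          (zetaRoot (2 * k) ^ h) (n + 1) ≠ 0 ∧
      qPoch (I ^ (3 - (lm : ℤ)) * zetaRoot (am * k) ^ ((dm : ℤ) * h))
          (zetaRoot (2 * k) ^ h) (n + 1) ≠ 0) ∧
    Fhk h k (-(I ^ ((lm : ℤ) - 3)) * zetaRoot (cm * k) ^ h)
        (-(I ^ (3 - (lm : ℤ))) * zetaRoot (am * k) ^ ((dm : ℤ) * h)) +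
      Fhk h k (I ^ ((lm : ℤ) - 3) * zetaRoot (cm * k) ^ h)
        (I ^ (3 - (lm : ℤ)) * zetaRoot (am * k) ^ ((dm : ℤ) * h)) = 0 := by
  have hI : I ≠ 0 := I_ne_zero
  have hII : I ^ ((lm:ℤ) - 3) * I ^ (3 - (lm:ℤ)) = 1 := by
    rw [← zpow_add₀ hI]; simp
  have prod : ∀ N d : ℕ, 0 < d → N = 2 * (d+1) → 
      (I ^ ((lm:ℤ) - 3) * zetaRoot (N*k)^h) * (I ^ (3 - (lm:ℤ)) * zetaRoot (N*k)^((d:ℤ)*h)) =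
      zetaRoot (2*k)^h := by
    intro N d hd hN
    have hz : zetaRoot (N*k) ≠ 0 := Complex.exp_ne_zero _
    have e : zetaRoot (N*k)^h * zetaRoot (N*k)^((d:ℤ)*h) = zetaRoot (2*k)^h := by
      rw [← zpow_add₀ hz, show h + (d:ℤ)*h = ((d+1:ℕ):ℤ) * h by push_cast; ring, zpow_mul,
        zpow_natCast, hN, show 2*(d+1)*k = (d+1)*(2*k) by ring, zetaRoot_pow _ _ (by omega)]
    calc _ = (I ^ ((lm:ℤ) - 3) * I ^ (3 - (lm:ℤ))) *
          (zetaRoot (N*k)^h * zetaRoot (N*k)^((d:ℤ)*h)) := by ring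
      _ = _ := by rw [hII, e, one_mul]
  have h8 : ∀ e : ℤ, (I ^ e * zetaRoot (8*k)^h)^(2*k) ≠ 1 := by
    intro e h1
    have h2 : (I ^ e * zetaRoot (8*k)^h)^(4*k) = 1 := by
      rw [show 4*k = 2*k*2 by ring, pow_mul, h1, one_pow]
    rw [mul_pow, zpow_comm', zpow_comm', show 8*k = 4*k*2 by ring, zetaRoot_pow _ _ (by omega),
      zetaRoot_two, hodd.neg_one_zpow, pow_mul, I_pow_four] at h2
    norm_num at h2
  have h12 : (h % 6 = 1 ∨ h % 6 = 5 ∨ Even k) →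
      (I ^ (((2:ℕ):ℤ)-3) * zetaRoot (12*k)^h)^(2*k) ≠ 1 := by
    intro hh h1
    rw [mul_pow, zpow_comm', zpow_comm', show 12*k = 2*k*6 by ring, zetaRoot_pow _ _ (by omega),
      pow_mul, I_sq] at h1
    have h6 : h % 2 = 1 := Int.odd_iff.mp hodd
    by_cases hke : Even k
    · rw [hke.neg_one_pow, one_zpow, one_mul,
        (zetaRoot_prim 6 (by norm_num)).zpow_eq_one_iff_dvd] at h1
      omega
    · have h2 : zetaRoot 6 ^ (h*2) = 1 := by
        rw [(Nat.not_even_iff_odd.mp hke).neg_one_pow] at h1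
        have : ((-1:ℂ)^(((2:ℕ):ℤ)-3)) = -1 := by norm_num
        rw [this] at h1
        rw [zpow_mul, show zetaRoot 6 ^ h = -1 by linear_combination -h1]
        norm_num
      rw [(zetaRoot_prim 6 (by norm_num)).zpow_eq_one_iff_dvd] at h2
      have : h % 6 = 1 ∨ h % 6 = 5 := by tauto
      omega
  simp only [neg_mul]
  rcases hcase with hc | hc | hc
  · obtain ⟨rfl, rfl, rfl, rfl⟩ : lm = 2 ∧ am = 8 ∧ cm = 8 ∧ dm = 3 := by simpa using hc
    exact final_aux h k hk hodd _ _ (prod 8 3 (by norm_num) (by norm_num)) (h8 _)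
  · obtain ⟨rfl, rfl, rfl, rfl⟩ : lm = 1 ∧ am = 8 ∧ cm = 8 ∧ dm = 3 := by simpa using hc
    exact final_aux h k hk hodd _ _ (prod 8 3 (by norm_num) (by norm_num)) (h8 _)
  · obtain ⟨rfl, rfl, rfl, rfl⟩ : lm = 2 ∧ am = 12 ∧ cm = 12 ∧ dm = 5 := by simpa using hc
    exact final_aux h k hk hodd _ _ (prod 12 5 (by norm_num) (by norm_num)) (h12 (hS5 rfl))
end

section
/- Let h ∈ ℤ be odd and k ∈ ℕ with k ≥ 1, gcd(h,k) = 1, and h/k ≠ −1. Then all q-Pochhammer denominators in the four finite sums below are nonzero, and F_{h,k}(ζ_{24k}^{h}, ζ_{24k}^{11h}) + F_{h,k}(ζ_{24k}^{5h}, ζ_{24k}^{7h}) + F_{h,k}(−ζ_{24k}^{h}, −ζ_{24k}^{11h}) + F_{h,k}(−ζ_{24k}^{5h}, −ζ_{24k}^{7h}) = 0. (This is identity (1.10) of Corollary 1.3 for m = 4, valid for h/k ∈ S₄₁∖{−1}.) -/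
open Complex

lemma aux_factor_ne (q w : ℂ) (k : ℕ) (hq : q ^ k = -1) (hw : w ^ (12 * k) = -1) (j : ℕ) :
    1 - w * q ^ j ≠ 0 := by
  intro h0
  have h1 : w * q ^ j = 1 := (sub_eq_zero.mp h0).symm
  have h2 : (w * q ^ j) ^ (12 * k) = 1 := by rw [h1, one_pow]
  have h3 : (q ^ j) ^ (12 * k) = 1 := by
    have : (q ^ j) ^ (12 * k) = ((q ^ k) ^ 2) ^ (6 * j) := by
      rw [← pow_mul, ← pow_mul, ← pow_mul]; congr 1; ring
    rw [this, hq]; norm_num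
  rw [mul_pow, hw, h3] at h2
  norm_num at h2

lemma aux_qPoch_ne (q w : ℂ) (k : ℕ) (hq : q ^ k = -1) (hw : w ^ (12 * k) = -1) (n : ℕ) :
    qPoch w q n ≠ 0 :=
  Finset.prod_ne_zero_iff.mpr fun j _ => aux_factor_ne q w k hq hw j

lemma aux_qPoch_succ (a q : ℂ) (n : ℕ) : qPoch a q (n + 1) = qPoch a q n * (1 - a * q ^ n) := by
  simp [qPoch, Finset.prod_range_succ]

lemma aux_qPoch_succ' (a q : ℂ) (n : ℕ) :
    qPoch a q (n + 1) = (1 - a) * qPoch (a * q) q n := by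
  simp only [qPoch, Finset.prod_range_succ']
  rw [mul_comm]
  congr 1
  · simp
  · exact Finset.prod_congr rfl fun j _ => by rw [pow_succ]; ring

noncomputable def auxT (p q z₁ z₂ : ℂ) (n : ℕ) : ℂ :=
  qPoch (-q) q n * p ^ (n * (n + 1)) / (qPoch z₁ q (n + 1) * qPoch z₂ q (n + 1))

lemma aux_tele (p q z : ℂ) (k : ℕ) (hp : p ^ 2 = q) (hq : q ^ k = -1)
    (hz : z ^ (12 * k) = -1) (hz0 : z ≠ 0) (hqz : (q / z) ^ (12 * k) = -1)
    (hz' : (1 / z) ^ (12 * k) = -1) (m : ℕ) :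
    ∑ n ∈ Finset.range m, (auxT p q (q * z) (1 / z) n + z ^ 2 * auxT p q z (q / z) n)
      = z * (qPoch (-q) q m * p ^ (m * (m + 1)) / (qPoch (q * z) q m * qPoch (q / z) q m)) - z := by
  have hqzm : (q * z) ^ (12 * k) = -1 := by
    have : q ^ (12 * k) = (q ^ k) ^ 12 := by rw [← pow_mul]; congr 1; ring
    rw [mul_pow, hz, this, hq]; norm_num
  induction m with
  | zero => simp [qPoch]
  | succ n ih =>
    rw [Finset.sum_range_succ, ih]
    unfold auxT
    have e1 : qPoch z q (n + 1) = (1 - z) * qPoch (q * z) q n := by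
      rw [aux_qPoch_succ', mul_comm z q]
    have e2 : qPoch (1 / z) q (n + 1) = (1 - 1 / z) * qPoch (q / z) q n := by
      rw [aux_qPoch_succ']; congr 2; ring
    have e3 : p ^ ((n + 1) * (n + 1 + 1)) = p ^ (n * (n + 1)) * (q * q ^ n) := by
      rw [← hp, ← pow_succ', ← pow_mul, ← pow_add]; congr 1; ring
    rw [e1, e2, e3, aux_qPoch_succ (q * z), aux_qPoch_succ (q / z), aux_qPoch_succ (-q)]
    have n1 : 1 - z ≠ 0 := by simpa using aux_factor_ne q z k hq hz 0
    have n2 : 1 - 1 / z ≠ 0 := by simpa using aux_factor_ne q (1 / z) k hq hz' 0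
    have n3 := aux_factor_ne q (q * z) k hq hqzm n
    have n4 := aux_factor_ne q (q / z) k hq hqz n
    have n5 := aux_qPoch_ne q (q * z) k hq hqzm n
    have n6 := aux_qPoch_ne q (q / z) k hq hqz n
    have n2' : 1 - 1 / z = - (1 - z) / z := by field_simp; ring
    have n4' : 1 - q / z * q ^ n = (z - q * q ^ n) / z := by field_simp
    have n7 : z - q * q ^ n ≠ 0 := by
      intro h; rw [n4', h] at n4; simp at n4
    rw [n2', n4']
    generalize qPoch (q * z) q n = A at *
    generalize qPoch (q / z) q n = B at *
    generalize qPoch (-q) q n = C at *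
    generalize p ^ (n * (n + 1)) = P at *
    have n8 : 1 - q * z * q ^ n = 1 - z * (q * q ^ n) := by ring
    rw [n8] at n3 ⊢
    have n9 : 1 - -q * q ^ n = 1 + q * q ^ n := by ring
    rw [n9]
    generalize q * q ^ n = y at *
    have n10 : 1 - y * z ≠ 0 := by rwa [mul_comm]
    clear ih e1 e2 e3 n2' n4' n2 n4 n8 n9
    field_simp
    ring

noncomputable def auxG (p q : ℂ) (k : ℕ) (z : ℂ) : ℂ :=
  ∑ n ∈ Finset.range k, auxT p q z (q / z) n

lemma aux_fe (p q z : ℂ) (k : ℕ) (hk : 1 ≤ k) (hp : p ^ 2 = q) (hq : q ^ k = -1)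
    (hz : z ^ (12 * k) = -1) : auxG p q k (q * z) + z ^ 2 * auxG p q k z = - z := by
  have hz0 : z ≠ 0 := by
    rintro rfl
    rw [zero_pow (by omega)] at hz; norm_num at hz
  have hq0 : q ≠ 0 := by
    rintro rfl
    rw [zero_pow (by omega)] at hq; norm_num at hq
  have hq12 : q ^ (12 * k) = 1 := by
    have : q ^ (12 * k) = (q ^ k) ^ 12 := by rw [← pow_mul]; congr 1; ring
    rw [this, hq]; norm_num
  have h := aux_tele p q z k hp hq hz hz0 (by rw [div_pow, hz, hq12]; norm_num)
    (by rw [div_pow, hz, one_pow]; norm_num) k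
  have h0 : qPoch (-q) q k = 0 := by
    obtain ⟨m, rfl⟩ : ∃ m, k = m + 1 := ⟨k - 1, by omega⟩
    rw [aux_qPoch_succ]
    have : 1 - -q * q ^ m = 1 + q ^ (m + 1) := by ring
    rw [this, hq]; simp
  rw [h0, Finset.sum_add_distrib, ← Finset.mul_sum] at h
  have e : q / (q * z) = 1 / z := by field_simp
  unfold auxG
  rw [e, h]; simp

lemma aux_odd (p q z : ℂ) (k : ℕ) (hk : 1 ≤ k) (hp : p ^ 2 = q) (hq : q ^ k = -1)
    (hz : z ^ (12 * k) = -1) : auxG p q k z + auxG p q k (-z) = 0 := by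
  have hq12 : ∀ m : ℕ, (q ^ m * z) ^ (12 * k) = -1 := by
    intro m
    have : (q ^ m) ^ (12 * k) = ((q ^ k) ^ 2) ^ (6 * m) := by
      rw [← pow_mul, ← pow_mul, ← pow_mul]; congr 1; ring
    rw [mul_pow, this, hq, hz]; norm_num
  have hev : ∀ w : ℂ, (-w) ^ (12 * k) = w ^ (12 * k) := fun w =>
    Even.neg_pow (by rw [mul_comm]; exact Even.mul_left (by decide) _) w
  have key : ∀ m : ℕ, auxG p q k (q ^ m * z) + auxG p q k (-(q ^ m * z)) =
      (-1) ^ m * z ^ (2 * m) * q ^ (m * (m - 1)) * (auxG p q k z + auxG p q k (-z)) := by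
    intro m
    induction m with
    | zero => simp
    | succ m ih =>
      have h1 := aux_fe p q (q ^ m * z) k hk hp hq (hq12 m)
      have h2 := aux_fe p q (-(q ^ m * z)) k hk hp hq (by rw [hev]; exact hq12 m)
      have e1 : q ^ (m + 1) * z = q * (q ^ m * z) := by ring
      have e2 : q * -(q ^ m * z) = -(q * (q ^ m * z)) := by ring
      rw [e2] at h2
      rw [e1]
      have e3 : q ^ ((m + 1) * (m + 1 - 1)) = q ^ (m * (m - 1)) * (q ^ m) ^ 2 := by
        rw [← pow_mul, ← pow_add]; congr 1
        cases m with
        | zero => simp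
        | succ j => simp; ring
      rw [e3]
      linear_combination h1 + h2 - (q ^ m * z) ^ 2 * ih
  have hK := key k
  have e4 : q ^ (k * (k - 1)) = (-1) ^ (k - 1) := by rw [pow_mul, hq]
  have e5 : (-1 : ℂ) ^ k = (-1) ^ (k - 1) * (-1) := by rw [← pow_succ]; congr 1; omega
  have e6 : (-1 : ℂ) ^ (k - 1) * (-1) ^ (k - 1) = 1 := by rw [← mul_pow]; norm_num
  rw [e4, hq, e5] at hK
  have e7 : -(-1 * z) = z := by ring
  have e8 : -1 * z = -z := by ring
  rw [e7, e8] at hK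
  have hne : 1 + z ^ (2 * k) ≠ 0 := by
    intro h
    have h' : z ^ (2 * k) = -1 := by linear_combination h
    have : z ^ (12 * k) = (z ^ (2 * k)) ^ 6 := by rw [← pow_mul]; congr 1; ring
    rw [this, h'] at hz; norm_num at hz
  have : (1 + z ^ (2 * k)) * (auxG p q k z + auxG p q k (-z)) = 0 := by
    linear_combination hK - z ^ (2 * k) * (auxG p q k z + auxG p q k (-z)) * e6
  exact (mul_eq_zero.mp this).resolve_left hne

lemma aux_zeta_pow (N a : ℕ) (ha : N = 2 * a) (hN : N ≠ 0) : zetaRoot N ^ a = -1 := by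
  unfold zetaRoot
  rw [← Complex.exp_nat_mul, ← Complex.exp_pi_mul_I]
  congr 1
  have : (a : ℂ) ≠ 0 := by
    intro h; rw [Nat.cast_eq_zero] at h; omega
  subst ha
  push_cast
  field_simp

lemma aux_zeta_mul (N a : ℕ) (ha : a ≠ 0) : zetaRoot (a * N) ^ a = zetaRoot N := by
  unfold zetaRoot
  rw [← Complex.exp_nat_mul]
  congr 1
  have : (a : ℂ) ≠ 0 := by exact_mod_cast ha
  push_cast
  by_cases hN : (N : ℂ) = 0
  · simp [hN]
  field_simp

lemma aux_F (h : ℤ) (k : ℕ) (z w : ℂ) (hz : z ≠ 0) (hzw : z * w = zetaRoot (2 * k) ^ h) :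
    Fhk h k z w = auxG (zetaRoot (4 * k) ^ h) (zetaRoot (2 * k) ^ h) k z := by
  have : zetaRoot (2 * k) ^ h / z = w := by rw [← hzw]; field_simp
  unfold Fhk auxG auxT
  rw [this]
  refine Finset.sum_congr rfl fun n _ => ?_
  congr 2
  rw [mul_comm _ h, zpow_mul, ← zpow_natCast]
  push_cast
  rfl

/-- Identity (1.10) of Corollary 1.3 (the `m = 4` case), valid for `h/k ∈ S₄₁ ∖ {−1}`;
in addition all q-Pochhammer denominators are nonzero. -/
theorem Fhk_vanishing_sum_m4 (h : ℤ) (k : ℕ) (hk : 1 ≤ k)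
    (hodd : Odd h) (hcop : Int.gcd h (k : ℤ) = 1) (hne : (h : ℚ) / (k : ℚ) ≠ -1) :
    (∀ n ∈ Finset.range k,
      qPoch (zetaRoot (24 * k) ^ h) (zetaRoot (2 * k) ^ h) (n + 1) ≠ 0 ∧
      qPoch (zetaRoot (24 * k) ^ (11 * h)) (zetaRoot (2 * k) ^ h) (n + 1) ≠ 0 ∧
      qPoch (zetaRoot (24 * k) ^ (5 * h)) (zetaRoot (2 * k) ^ h) (n + 1) ≠ 0 ∧
      qPoch (zetaRoot (24 * k) ^ (7 * h)) (zetaRoot (2 * k) ^ h) (n + 1) ≠ 0 ∧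
      qPoch (-(zetaRoot (24 * k) ^ h)) (zetaRoot (2 * k) ^ h) (n + 1) ≠ 0 ∧
      qPoch (-(zetaRoot (24 * k) ^ (11 * h))) (zetaRoot (2 * k) ^ h) (n + 1) ≠ 0 ∧
      qPoch (-(zetaRoot (24 * k) ^ (5 * h))) (zetaRoot (2 * k) ^ h) (n + 1) ≠ 0 ∧
      qPoch (-(zetaRoot (24 * k) ^ (7 * h))) (zetaRoot (2 * k) ^ h) (n + 1) ≠ 0) ∧
    Fhk h k (zetaRoot (24 * k) ^ h) (zetaRoot (24 * k) ^ (11 * h)) +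
      Fhk h k (zetaRoot (24 * k) ^ (5 * h)) (zetaRoot (24 * k) ^ (7 * h)) +
      Fhk h k (-(zetaRoot (24 * k) ^ h)) (-(zetaRoot (24 * k) ^ (11 * h))) +
      Fhk h k (-(zetaRoot (24 * k) ^ (5 * h))) (-(zetaRoot (24 * k) ^ (7 * h))) = 0 := by
  have hm1 : (-1 : ℂ) ^ h = -1 := hodd.neg_one_zpow
  have hz0 : ∀ N, zetaRoot N ≠ 0 := fun N => Complex.exp_ne_zero _
  have hq : (zetaRoot (2 * k) ^ h) ^ k = -1 := by
    rw [← zpow_natCast, zpow_comm, zpow_natCast, aux_zeta_pow (2 * k) k rfl (by omega), hm1]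
  have hp : (zetaRoot (4 * k) ^ h) ^ 2 = zetaRoot (2 * k) ^ h := by
    rw [← zpow_natCast, zpow_comm, zpow_natCast]
    have := aux_zeta_mul (2 * k) 2 (by norm_num)
    rw [← this]; congr 3; ring
  have hw : ∀ c : ℤ, Odd c → (zetaRoot (24 * k) ^ c) ^ (12 * k) = -1 := by
    intro c hc
    rw [← zpow_natCast, zpow_comm, zpow_natCast,
      aux_zeta_pow (24 * k) (12 * k) (by ring) (by omega), hc.neg_one_zpow]
  have hev : ∀ w : ℂ, (-w) ^ (12 * k) = w ^ (12 * k) := fun w =>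
    Even.neg_pow (by rw [mul_comm]; exact Even.mul_left (by decide) _) w
  have h24 : zetaRoot (24 * k) ^ (12 * h) = zetaRoot (2 * k) ^ h := by
    have := aux_zeta_mul (2 * k) 12 (by norm_num)
    rw [show 12 * (2 * k) = 24 * k by ring] at this
    have h12 : zetaRoot (24 * k) ^ (12 : ℤ) = zetaRoot (24 * k) ^ 12 :=
      zpow_natCast (zetaRoot (24 * k)) 12
    rw [← this, zpow_mul, h12]
  have o1 := hw h hodd
  have o11 := hw (11 * h) (Odd.mul (by decide) hodd)
  have o5 := hw (5 * h) (Odd.mul (by decide) hodd)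
  have o7 := hw (7 * h) (Odd.mul (by decide) hodd)
  have p1 : zetaRoot (24 * k) ^ h * zetaRoot (24 * k) ^ (11 * h) = zetaRoot (2 * k) ^ h := by
    rw [← zpow_add₀ (hz0 _), ← h24]; congr 1; ring
  have p5 : zetaRoot (24 * k) ^ (5 * h) * zetaRoot (24 * k) ^ (7 * h) = zetaRoot (2 * k) ^ h := by
    rw [← zpow_add₀ (hz0 _), ← h24]; congr 1; ring
  constructor
  · intro n _
    refine ⟨?_, ?_, ?_, ?_, ?_, ?_, ?_, ?_⟩ <;>
      refine aux_qPoch_ne _ _ k hq ?_ _ <;> (try rw [hev]) <;> assumption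
  · have n1 := zpow_ne_zero h (hz0 (24 * k))
    have n5 := zpow_ne_zero (5 * h) (hz0 (24 * k))
    rw [aux_F h k _ _ n1 p1, aux_F h k _ _ n5 p5,
      aux_F h k _ _ (neg_ne_zero.mpr n1) (by rw [neg_mul_neg]; exact p1),
      aux_F h k _ _ (neg_ne_zero.mpr n5) (by rw [neg_mul_neg]; exact p5)]
    linear_combination aux_odd _ _ _ k hk hp hq o1 + aux_odd _ _ _ k hk hp hq o5
end
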